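/- arXiv:2001.02945 — 3 statements merged into one kernel-verified Lean document; each statement's English description precedes it below -/
import Mathlib

section
/- For every positive integer m, let G_m be the presented group on generators ρ0, ρ1, ρ2 with relation set {ρ0^2, ρ1^2, ρ2^2, (ρ0ρ1)^6, (ρ1ρ2)^6, (ρ0ρ2)^2, (ρ2ρ1ρ0ρ1)^3, ρ1(ρ0ρ2ρ1)^{4m}ρ1, (ρ2ρ1ρ0)^{4m}, ρ1(ρ2ρ1ρ0)^{4m}ρ1}. Then G_m has order 192·m^3, G_m is solvable, in G_m the images of ρ0, ρ1, ρ2 and ρ0ρ2 have order exactly 2, the images of ρ0ρ1 and ρ1ρ2 have order exactly 6, and the triple of images of (ρ0, ρ1, ρ2) satisfies the intersection property in G_m. -/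
namespace Stmt12

def r0 : FreeGroup (Fin 3) := FreeGroup.of 0
def r1 : FreeGroup (Fin 3) := FreeGroup.of 1
def r2 : FreeGroup (Fin 3) := FreeGroup.of 2

/-- The relations of the presented group `G_m` of Theorem 5.1. -/
def rels (m : ℕ) : Set (FreeGroup (Fin 3)) :=
  {r0 ^ 2, r1 ^ 2, r2 ^ 2, (r0 * r1) ^ 6, (r1 * r2) ^ 6, (r0 * r2) ^ 2,
   (r2 * r1 * r0 * r1) ^ 3,
   r1 * (r0 * r2 * r1) ^ (4 * m) * r1,
   (r2 * r1 * r0) ^ (4 * m),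
   r1 * (r2 * r1 * r0) ^ (4 * m) * r1}

/-- The image of the `i`-th generator in `G_m`. -/
def g (m : ℕ) (i : Fin 3) : PresentedGroup (rels m) := PresentedGroup.of i

/-- The intersection property for a triple of elements. -/
def InterProp {G : Type*} [Group G] (ρ : Fin 3 → G) : Prop :=
  ∀ I J : Set (Fin 3),
    Subgroup.closure (ρ '' I) ⊓ Subgroup.closure (ρ '' J) =
      Subgroup.closure (ρ '' (I ∩ J))

section CyclicBraid

/-- The defining relations of the affine Coxeter group of type `A₃`, for the cyclic diagram
with edges `a c`, `c b`, `b d`, `d a`. -/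
structure CyclicBraid {G : Type*} [Group G] (a b c d : G) : Prop where
  a_sq : a * a = 1
  b_sq : b * b = 1
  c_sq : c * c = 1
  d_sq : d * d = 1
  ba : b * a = a * b
  dc : d * c = c * d
  cac : c * a * c = a * c * a
  cbc : c * b * c = b * c * b
  dad : d * a * d = a * d * a
  dbd : d * b * d = b * d * b

variable {G : Type*} [Group G] {a b c d : G}

/-- Rewriting rules for right-associated words in `a, b, c, d`, each with a free tail. -/
theorem CyclicBraid.rules (h : CyclicBraid a b c d) (t : G) :
    (a * (a * t) = t ∧ b * (b * t) = t ∧ c * (c * t) = t ∧ d * (d * t) = t) ∧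
    (b * (a * t) = a * (b * t) ∧ d * (c * t) = c * (d * t)) ∧
    (c * (a * (c * t)) = a * (c * (a * t)) ∧ c * (b * (c * t)) = b * (c * (b * t)) ∧
      d * (a * (d * t)) = a * (d * (a * t)) ∧ d * (b * (d * t)) = b * (d * (b * t))) ∧
    d * (a * (c * (a * t))) = c * (d * (a * (c * t))) ∧
    d * (b * (c * (d * t))) = b * (d * (b * (c * t))) ∧
    c * (a * (b * (c * (a * t)))) = b * (c * (a * (b * (c * t)))) ∧
    c * (a * (b * (c * (b * t)))) = a * (c * (a * (b * (c * t)))) ∧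
    d * (a * (b * (c * (a * (b * (c * t)))))) = c * (d * (a * (b * (c * (a * (b * t)))))) ∧
    d * (a * (c * (b * (d * (a * (b * t)))))) = a * (d * (a * (c * (b * (d * (a * t)))))) := by
  have comm {x y : G} (e : x * y = y * x) (t : G) : x * (y * t) = y * (x * t) := by
    rw [← mul_assoc, e, mul_assoc]
  have braid {x y : G} (e : x * y * x = y * x * y) (t : G) :
      x * (y * (x * t)) = y * (x * (y * t)) := by
    simp only [← mul_assoc, e]
  have cabca (t : G) : c * (a * (b * (c * (a * t)))) = b * (c * (a * (b * (c * t)))) := by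
    rw [← comm h.ba, ← braid h.cac, braid h.cbc, comm h.ba]
  have cabcb (t : G) : c * (a * (b * (c * (b * t)))) = a * (c * (a * (b * (c * t)))) := by
    rw [← braid h.cbc, braid h.cac]
  refine ⟨?_, ⟨comm h.ba t, comm h.dc t⟩,
    ⟨braid h.cac t, braid h.cbc t, braid h.dad t, braid h.dbd t⟩, ?_, ?_, cabca t, cabcb t, ?_, ?_⟩
  · simp only [← mul_assoc, h.a_sq, h.b_sq, h.c_sq, h.d_sq, one_mul, and_self]
  · rw [← braid h.cac, comm h.dc]
  · rw [← comm h.dc, braid h.dbd]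
  · rw [← comm h.dc, cabca, cabcb, comm h.ba]
  · rw [← comm h.ba, ← braid h.dbd, ← comm h.dc, braid h.dad]

theorem eq_of_forall_mul_tail {x y : G} (h : ∀ t, x * t = y * t) : x = y := by
  simpa using h 1

/-- The translation along the highest root. -/
def transU (a b c d : G) : G := d * a * c * b * c * a

/-- The conjugate of `transU` by `a`. -/
def transV (a b c d : G) : G := a * d * a * c * b * c

/-- The conjugate of `transV` by `c`. -/
def transW (a b c d : G) : G := c * a * d * a * c * b

theorem CyclicBraid.word_identities (h : CyclicBraid a b c d) :
    (a * transU a b c d * a = transV a b c d ∧ a * transV a b c d * a = transU a b c d ∧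
      a * transW a b c d * a = transW a b c d) ∧
    (c * transU a b c d * c = transU a b c d ∧ c * transV a b c d * c = transW a b c d ∧
      c * transW a b c d * c = transV a b c d) ∧
    b * transU a b c d * b * transW a b c d = transU a b c d ∧
    b * transW a b c d * b * transW a b c d = 1 ∧
    b * transV a b c d * b * transW a b c d = transV a b c d ∧
    transU a b c d * transW a b c d = transW a b c d * transU a b c d ∧
    transU a b c d * transW a b c d =
      (c * d * a * b) * (c * d * a * b) * transV a b c d := by
  have R := h.rules
  simp only [forall_and] at R
  obtain ⟨⟨a1, b1, c1, d1⟩, ⟨ba, dc⟩, ⟨cac, cbc, dad, dbd⟩, daca, dbcd, cabca, cabcb,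
    dabcabc, dacbdab⟩ := R
  refine ⟨⟨?_, ?_, ?_⟩, ⟨?_, ?_, ?_⟩, ?_, ?_, ?_, ?_, ?_⟩ <;>
    refine eq_of_forall_mul_tail fun t ↦ ?_ <;>
    simp only [transU, transV, transW, mul_assoc, one_mul, a1, b1, c1, d1, ba, cac, cbc,
      dbd, daca, dbcd, cabca, dabcabc, dacbdab]

theorem CyclicBraid.klein_identities (h : CyclicBraid a b c d) :
    a * (c * a * b * c) * a = a * b * (c * a * b * c) ∧
    (a * b) * (c * a * b * c) = (c * a * b * c) * (a * b) ∧
    d * (a * c * b * c * a) * (a * c * b * c * a) = d := by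
  have R := h.rules
  simp only [forall_and] at R
  obtain ⟨⟨a1, b1, c1, d1⟩, ⟨ba, dc⟩, ⟨cac, cbc, dad, dbd⟩, daca, dbcd, cabca, cabcb,
    dabcabc, dacbdab⟩ := R
  refine ⟨?_, ?_, ?_⟩ <;>
    refine eq_of_forall_mul_tail fun t ↦ ?_ <;>
    simp only [mul_assoc, a1, b1, c1, ba, cbc, cabca, cabcb]

/-- Conjugating by an element swapping `a ↔ c` and `b ↔ d`. -/
theorem CyclicBraid.swap_identities (h : CyclicBraid a b c d) :
    transU c d a b * transW a b c d = 1 ∧ transV c d a b * transV a b c d = 1 ∧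
      transW c d a b * transU a b c d = 1 := by
  have R := h.rules
  simp only [forall_and] at R
  obtain ⟨⟨a1, b1, c1, d1⟩, ⟨ba, dc⟩, ⟨cac, cbc, dad, dbd⟩, daca, dbcd, cabca, cabcb,
    dabcabc, dacbdab⟩ := R
  refine ⟨?_, ?_, ?_⟩ <;>
    refine eq_of_forall_mul_tail fun t ↦ ?_ <;>
    simp only [transU, transV, transW, mul_assoc, one_mul, a1, b1, c1, d1, ba, cbc]

end CyclicBraid

open scoped Pointwise

section Polycyclic

variable {G : Type*} [Group G]

/-- `g` conjugates `H` into itself. -/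
def ConjInto (g : G) (H : Subgroup G) : Prop := ∀ h ∈ H, g * h * g⁻¹ ∈ H

theorem ConjInto.mul {g k : G} {H : Subgroup G} (hg : ConjInto g H) (hk : ConjInto k H) :
    ConjInto (g * k) H := fun h hh ↦ by
  simpa [mul_assoc] using hg _ (hk h hh)

theorem ConjInto.sup_zpowers {g x : G} {H : Subgroup G} (hg : ConjInto g H)
    (hx : g * x * g⁻¹ ∈ H ⊔ Subgroup.zpowers x) : ConjInto g (H ⊔ Subgroup.zpowers x) := by
  have : H ⊔ Subgroup.zpowers x ≤ (H ⊔ Subgroup.zpowers x).comap (MulAut.conj g).toMonoidHom :=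
    sup_le (fun h hh ↦ Subgroup.mem_sup_left (hg h hh)) (by simpa using hx)
  exact fun h hh ↦ this hh

theorem mem_sup_zpowers (H : Subgroup G) (x : G) : x ∈ H ⊔ Subgroup.zpowers x :=
  Subgroup.mem_sup_right (Subgroup.mem_zpowers x)

/-- `H` is a finite solvable subgroup with at most `n` elements. -/
structure SolvableBound (H : Subgroup G) (n : ℕ) : Prop where
  finite : Finite H
  card_le : Nat.card H ≤ n
  solvable : Group.IsSolvable H

theorem SolvableBound.bot : SolvableBound (⊥ : Subgroup G) 1 :=
  ⟨inferInstance, by simp, inferInstance⟩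

/-- A cyclic extension of degree dividing `k` multiplies the bound by `k`. -/
theorem SolvableBound.sup_zpowers {H : Subgroup G} {n : ℕ} (hH : SolvableBound H n) {g : G}
    (hg : ConjInto g H) {k : ℕ} (hk : 0 < k) (hgk : g ^ k ∈ H) :
    SolvableBound (H ⊔ Subgroup.zpowers g) (k * n) := by
  have := hH.finite
  have := hH.solvable
  have hnorm : g ∈ Subgroup.normalizer (H : Set G) :=
    Subgroup.mem_normalizer_fintype (S := (H : Set G)) hg
  have hle : Subgroup.zpowers g ≤ Subgroup.normalizer (H : Set G) := by simpa using hnorm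
  set K := H ⊔ Subgroup.zpowers g
  have hdecomp : ∀ x : K, ∃ h : H, ∃ i : Fin k, (h : G) * g ^ (i : ℕ) = x := by
    rintro ⟨x, hx⟩
    have hx' : x ∈ (H : Set G) * (Subgroup.zpowers g : Set G) := by
      rw [← Subgroup.coe_mul_of_right_le_normalizer_left _ _ hle]; exact hx
    obtain ⟨h, hh, _, ⟨j, rfl⟩, rfl⟩ := hx'
    have hk' : (k : ℤ) ≠ 0 := by exact_mod_cast hk.ne'
    have hpos := Int.emod_nonneg j hk'
    have hlt := Int.emod_lt_of_pos j (by exact_mod_cast hk : (0 : ℤ) < k)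
    refine ⟨⟨h * (g ^ k) ^ (j / k), H.mul_mem hh (H.zpow_mem hgk _)⟩,
      ⟨(j % k).toNat, by omega⟩, ?_⟩
    have e : g ^ (j % k).toNat = g ^ (j % k) := by
      rw [← zpow_natCast, Int.toNat_of_nonneg hpos]
    simp only [e, mul_assoc]
    rw [← zpow_natCast, ← zpow_mul, ← zpow_add, Int.mul_ediv_add_emod]
  choose f i hfi using hdecomp
  have hinj : Function.Injective fun x : K ↦ (i x, f x) := fun x y hxy ↦ by
    simp only [Prod.mk.injEq] at hxy
    exact Subtype.ext (by rw [← hfi x, ← hfi y, hxy.1, hxy.2])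
  refine ⟨Finite.of_injective _ hinj, ?_, ?_⟩
  · refine (Nat.card_le_card_of_injective _ hinj).trans ?_
    rw [Nat.card_prod, Nat.card_eq_fintype_card, Fintype.card_fin]
    exact Nat.mul_le_mul_left _ hH.card_le
  · have hKn : K ≤ Subgroup.normalizer (H : Set G) := sup_le Subgroup.le_normalizer hle
    have : (H.subgroupOf K).Normal :=
      Subgroup.normal_subgroupOf_iff_le_normalizer le_sup_left |>.2 hKn
    have : Group.IsSolvable (H.subgroupOf K) :=
      Group.isSolvable_of_isSolvable_injective
        (f := (Subgroup.subgroupOfEquivOfLe (H := H) (K := K) le_sup_left).toMonoidHom)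
        (Subgroup.subgroupOfEquivOfLe (H := H) (K := K) le_sup_left).injective
    have hgK : g ∈ K := mem_sup_zpowers H g
    have hq : ∀ x : K ⧸ H.subgroupOf K, ∃ j : ℕ, x = (QuotientGroup.mk ⟨g, hgK⟩) ^ j := by
      intro x
      obtain ⟨x, rfl⟩ := QuotientGroup.mk_surjective x
      refine ⟨i x, ?_⟩
      have : x = ⟨f x, le_sup_left (a := H) (f x).2⟩ * ⟨g, hgK⟩ ^ (i x : ℕ) :=
        Subtype.ext (by simp [hfi])
      conv_lhs => rw [this]
      rw [QuotientGroup.mk_mul, QuotientGroup.mk_pow]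
      have h1 : ((⟨f x, le_sup_left (a := H) (f x).2⟩ : K) : K ⧸ H.subgroupOf K) = 1 :=
        (QuotientGroup.eq_one_iff _).2 (by simp [Subgroup.mem_subgroupOf])
      rw [h1, one_mul]
    have : Group.IsSolvable (K ⧸ H.subgroupOf K) := Group.isSolvable_of_comm fun x y ↦ by
      obtain ⟨j, rfl⟩ := hq x
      obtain ⟨l, rfl⟩ := hq y
      rw [← pow_add, ← pow_add, add_comm]
    refine Group.isSolvable_of_ker_le_range (H.subgroupOf K).subtype
      (QuotientGroup.mk' (H.subgroupOf K)) ?_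
    simp

end Polycyclic

section SkewRelations

variable {G : Type*} [Group G] {a r b c d : G} {m : ℕ}

/-- The relations of `G_m` for the triple `(a, r, b)`, with the three conjugate Petrie relations
merged into one. -/
structure SkewRel (m : ℕ) (a r b : G) : Prop where
  a_sq : a * a = 1
  r_sq : r * r = 1
  b_sq : b * b = 1
  ar : (a * r) ^ 6 = 1
  rb : (r * b) ^ 6 = 1
  ab : (a * b) ^ 2 = 1
  hole : (b * r * a * r) ^ 3 = 1
  petrie : r * (a * b * r) ^ (4 * m) * r = 1

theorem inv_eq_self_of_sq {x : G} (h : x * x = 1) : x⁻¹ = x := inv_eq_of_mul_eq_one_left h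

theorem braid_of_pow_three {x y : G} (hx : x * x = 1) (hy : y * y = 1) (h : (x * y) ^ 3 = 1) :
    x * y * x = y * x * y := by
  have e : (x * y * x) * (y * x * y) = 1 := by
    rw [← h]
    simp only [pow_succ, pow_zero, one_mul, mul_assoc]
  rw [eq_inv_of_mul_eq_one_left e]
  simp [mul_assoc, inv_eq_self_of_sq hx, inv_eq_self_of_sq hy]

theorem comm_of_sq {x y : G} (hx : x * x = 1) (hy : y * y = 1) (h : (x * y) ^ 2 = 1) :
    x * y = y * x := by
  rw [sq] at h
  rw [eq_inv_of_mul_eq_one_left h, mul_inv_rev, inv_eq_self_of_sq hx, inv_eq_self_of_sq hy]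

theorem conj_sq (hr : r * r = 1) {x : G} (hx : x * x = 1) : (r * x * r) * (r * x * r) = 1 := by
  rw [show (r * x * r) * (r * x * r) = r * (x * (r * r) * x) * r by group, hr, mul_one, hx,
    mul_one, hr]

theorem conj_pow_eq_one (hr : r * r = 1) {x : G} {n : ℕ} (hx : x ^ n = 1) :
    (r * x * r) ^ n = 1 := by
  have := conj_pow (i := n) (a := r) (b := x)
  rw [inv_eq_self_of_sq hr, hx, mul_one, hr] at this
  exact this

theorem SkewRel.cyclicBraid (h : SkewRel m a r b) :
    CyclicBraid a b (r * a * r) (r * b * r) := by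
  have hc := conj_sq h.r_sq h.a_sq
  have hd := conj_sq h.r_sq h.b_sq
  have ab := comm_of_sq h.a_sq h.b_sq h.ab
  refine ⟨h.a_sq, h.b_sq, hc, hd, ab.symm, ?_, (braid_of_pow_three h.a_sq hc ?_).symm,
    (braid_of_pow_three h.b_sq hc ?_).symm, braid_of_pow_three hd h.a_sq ?_,
    braid_of_pow_three hd h.b_sq ?_⟩
  · rw [show r * b * r * (r * a * r) = r * (b * (r * r) * a) * r by group,
      show r * a * r * (r * b * r) = r * (a * (r * r) * b) * r by group, h.r_sq, mul_one,
      mul_one, ab]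
  · rw [← h.ar, pow_mul (a * r) 2 3, sq]
    group
  · rw [← h.hole]; group
  · rw [← conj_pow_eq_one h.r_sq h.hole]; simp only [mul_assoc, h.r_sq, mul_one]
  · rw [← h.rb, pow_mul (r * b) 2 3, sq]
    group

/-- The translation subgroup. -/
def transSubgroup (a b c d : G) : Subgroup G :=
  ⊥ ⊔ Subgroup.zpowers (transU a b c d) ⊔ Subgroup.zpowers (transV a b c d) ⊔
    Subgroup.zpowers (transW a b c d)

theorem transU_mem : transU a b c d ∈ transSubgroup a b c d :=
  Subgroup.mem_sup_left (Subgroup.mem_sup_left (mem_sup_zpowers _ _))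

theorem transV_mem : transV a b c d ∈ transSubgroup a b c d :=
  Subgroup.mem_sup_left (mem_sup_zpowers _ _)

theorem transW_mem : transW a b c d ∈ transSubgroup a b c d := mem_sup_zpowers _ _

theorem ConjInto.of_transSubgroup {g : G}
    (hu : g * transU a b c d * g⁻¹ ∈ transSubgroup a b c d)
    (hv : g * transV a b c d * g⁻¹ ∈ transSubgroup a b c d)
    (hw : g * transW a b c d * g⁻¹ ∈ transSubgroup a b c d) :
    ConjInto g (transSubgroup a b c d) := by
  have : transSubgroup a b c d ≤
      (transSubgroup a b c d).comap (MulAut.conj g).toMonoidHom := by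
    conv_lhs => rw [transSubgroup]
    simpa using ⟨⟨hu, hv⟩, hw⟩
  exact fun h hh ↦ this hh

theorem CyclicBraid.trans_commute (h : CyclicBraid a b c d) :
    Commute (transU a b c d) (transV a b c d) ∧ Commute (transU a b c d) (transW a b c d) ∧
      Commute (transV a b c d) (transW a b c d) := by
  obtain ⟨⟨au, -, aw⟩, ⟨cu, -, cw⟩, -, -, -, uw, -⟩ := h.word_identities
  have conj {x y z : G} (hx : x * x = 1) (hyz : y * z = z * y) :
      Commute (x * y * x) (x * z * x) := by
    have := (Commute.conj_iff x).2 (show Commute y z from hyz)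
    rwa [inv_eq_self_of_sq hx] at this
  refine ⟨?_, uw, ?_⟩
  · have := conj h.c_sq uw
    rwa [cu, cw] at this
  · have := conj h.a_sq uw
    rwa [au, aw] at this

theorem CyclicBraid.conjInto_trans (h : CyclicBraid a b c d) :
    ConjInto a (transSubgroup a b c d) ∧ ConjInto b (transSubgroup a b c d) ∧
      ConjInto c (transSubgroup a b c d) := by
  obtain ⟨⟨au, av, aw⟩, ⟨cu, cv, cw⟩, bu, bw, bv, -⟩ := h.word_identities
  have U := transU_mem (a := a) (b := b) (c := c) (d := d)
  have V := transV_mem (a := a) (b := b) (c := c) (d := d)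
  have W := transW_mem (a := a) (b := b) (c := c) (d := d)
  refine ⟨.of_transSubgroup ?_ ?_ ?_, .of_transSubgroup ?_ ?_ ?_, .of_transSubgroup ?_ ?_ ?_⟩ <;>
    simp only [inv_eq_self_of_sq h.a_sq, inv_eq_self_of_sq h.b_sq, inv_eq_self_of_sq h.c_sq, au,
      av, aw, cu, cv, cw, U, V, W]
  · rw [eq_mul_inv_of_mul_eq bu]
    exact mul_mem U (inv_mem W)
  · rw [eq_mul_inv_of_mul_eq bv]
    exact mul_mem V (inv_mem W)
  · rw [eq_inv_of_mul_eq_one_left bw]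
    exact inv_mem W

theorem map_swap_trans (hr : r * r = 1) (hc : c = r * a * r) (hd : d = r * b * r) :
    r * transU a b c d * r = transU c d a b ∧ r * transV a b c d * r = transV c d a b ∧
      r * transW a b c d * r = transW c d a b := by
  have rr (t : G) : r * (r * t) = t := by rw [← mul_assoc, hr, one_mul]
  subst hc hd
  simp only [transU, transV, transW, mul_assoc, rr, hr, mul_one, and_self]

theorem SkewRel.conjInto_trans (h : SkewRel m a r b) :
    ConjInto r (transSubgroup a b (r * a * r) (r * b * r)) := by
  obtain ⟨hu, hv, hw⟩ := map_swap_trans h.r_sq (a := a) (b := b) rfl rfl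
  obtain ⟨su, sv, sw⟩ := h.cyclicBraid.swap_identities
  refine .of_transSubgroup ?_ ?_ ?_ <;> rw [inv_eq_self_of_sq h.r_sq]
  · rw [hu, eq_inv_of_mul_eq_one_left su]
    exact inv_mem transW_mem
  · rw [hv, eq_inv_of_mul_eq_one_left sv]
    exact inv_mem transV_mem
  · rw [hw, eq_inv_of_mul_eq_one_left sw]
    exact inv_mem transU_mem

/-- The Petrie relation, and its conjugates, in terms of the translations. -/
theorem SkewRel.trans_pow (h : SkewRel m a r b) {u v w : G}
    (hu : u = transU a b (r * a * r) (r * b * r)) (hv : v = transV a b (r * a * r) (r * b * r))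
    (hw : w = transW a b (r * a * r) (r * b * r)) :
    u ^ m * w ^ m = v ^ m ∧ u ^ m * v ^ m = w ^ m ∧ v ^ m * w ^ m = u ^ m := by
  have hB := h.cyclicBraid
  obtain ⟨uv, uw, vw⟩ := hB.trans_commute
  obtain ⟨⟨au, av, aw⟩, ⟨cu, cv, cw⟩, -, -, -, -, e⟩ := hB.word_identities
  rw [← hu, ← hv, ← hw] at *
  have hp : (r * a * r * (r * b * r) * a * b * (r * a * r * (r * b * r) * a * b)) ^ m = 1 := by
    have e1 := conj_pow (i := 4 * m) (a := r) (b := a * b * r)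
    rw [inv_eq_self_of_sq h.r_sq, h.petrie, pow_mul] at e1
    rw [← e1]
    congr 1
    have rr (t : G) : r * (r * t) = t := by rw [← mul_assoc, h.r_sq, one_mul]
    simp only [pow_succ, pow_zero, one_mul, mul_assoc, h.r_sq, mul_one, rr]
  have key : u ^ m * w ^ m = v ^ m := by
    rw [← uw.mul_pow, e, Commute.mul_pow, hp, one_mul]
    rw [← mul_inv_eq_iff_eq_mul.2 e]
    exact (uv.mul_left vw.symm).mul_left (Commute.refl v).inv_left
  have conj {x y : G} (n : ℕ) (hx : x * x = 1) : x * y ^ n * x = (x * y * x) ^ n := by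
    have := conj_pow (i := n) (a := x) (b := y)
    rw [inv_eq_self_of_sq hx] at this
    exact this.symm
  have conjm {x y z : G} (hx : x * x = 1) : x * (y * z) * x = (x * y * x) * (x * z * x) := by
    rw [show x * y * x * (x * z * x) = x * y * (x * x) * z * x by group, hx]; group
  refine ⟨key, ?_, ?_⟩
  · have := congrArg (fun t ↦ (r * a * r) * t * (r * a * r)) key
    simpa only [conjm hB.c_sq, conj _ hB.c_sq, cu, cv, cw] using this
  · have := congrArg (fun t ↦ a * t * a) key
    simpa only [conjm hB.a_sq, conj _ hB.a_sq, au, av, aw] using this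

end SkewRelations

section UpperBound

variable {G : Type*} [Group G] {a r b : G} {m : ℕ}

theorem SkewRel.transSubgroup_bound (h : SkewRel m a r b) (hm : 0 < m) :
    SolvableBound (transSubgroup a b (r * a * r) (r * b * r)) (m * (2 * m * (2 * m * 1))) := by
  obtain ⟨uv, uw, vw⟩ := h.cyclicBraid.trans_commute
  obtain ⟨e1, e2, e3⟩ := h.trans_pow rfl rfl rfl
  unfold transSubgroup
  set u := transU a b (r * a * r) (r * b * r)
  set v := transV a b (r * a * r) (r * b * r)
  set w := transW a b (r * a * r) (r * b * r)
  have central {x : G} : ConjInto x (⊥ : Subgroup G) := fun y hy ↦ by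
    rw [Subgroup.mem_bot] at hy ⊢; simp [hy]
  have step {x y : G} {H : Subgroup G} (hx : ConjInto x H) (hxy : Commute y x) :
      ConjInto x (H ⊔ Subgroup.zpowers y) := hx.sup_zpowers (by
    rw [← hxy.eq, mul_inv_cancel_right]
    exact mem_sup_zpowers H y)
  have sq_one {x y z : G} (h1 : x ^ m * z ^ m = y ^ m)
      (h2 : x ^ m * y ^ m = z ^ m) : x ^ (2 * m) = 1 := by
    have hc : x ^ m * (x ^ m * y ^ m) = 1 * y ^ m := by rw [h2, h1, one_mul]
    rw [← mul_assoc] at hc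
    rw [two_mul, pow_add]
    exact mul_right_cancel hc
  have hu : u ^ (2 * m) = 1 := sq_one e1 e2
  have hv : v ^ (2 * m) = 1 := by
    refine sq_one (z := w) e3 ?_
    rw [(uv.symm.pow_pow m m).eq, e2]
  refine ((SolvableBound.bot.sup_zpowers central (by omega) ?_).sup_zpowers (step central uv)
    (by omega) ?_).sup_zpowers (step (step central uw) vw) hm ?_
  · rw [hu]; exact one_mem _
  · rw [hv]; exact one_mem _
  · rw [← e2]
    exact mul_mem (Subgroup.mem_sup_left (pow_mem (mem_sup_zpowers _ _) _))
      (pow_mem (mem_sup_zpowers _ _) _)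

/-- The translations, extended successively by `a * b`, its conjugate by `c`, `a * c`, `a` and `r`,
form a subgroup with at most `192 * m ^ 3` elements. -/
theorem SkewRel.exists_bound (h : SkewRel m a r b) (hm : 0 < m) :
    ∃ H : Subgroup G, SolvableBound H (192 * m ^ 3) ∧ a ∈ H ∧ r ∈ H ∧ b ∈ H := by
  have hT := h.transSubgroup_bound hm
  have hB := h.cyclicBraid
  obtain ⟨aT, bT, cT⟩ := hB.conjInto_trans
  have rT := h.conjInto_trans
  have hU := transU_mem (a := a) (b := b) (c := r * a * r) (d := r * b * r)
  obtain ⟨k1, k2, k3⟩ := hB.klein_identities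
  have rar : r * (r * a * r) * r = a := by
    simp only [mul_assoc, h.r_sq, mul_one]; rw [← mul_assoc, h.r_sq, one_mul]
  have hc : r * a * r = r * a * r⁻¹ := by rw [inv_eq_self_of_sq h.r_sq]
  have hd : r * b * r = r * b * r⁻¹ := by rw [inv_eq_self_of_sq h.r_sq]
  have rcr : r * (r * a * r) * r⁻¹ = a := by rw [inv_eq_self_of_sq h.r_sq, rar]
  generalize r * a * r = c at *
  generalize r * b * r = d at *
  set T := transSubgroup a b c d
  have ainv := inv_eq_self_of_sq hB.a_sq
  have binv := inv_eq_self_of_sq hB.b_sq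
  have cinv := inv_eq_self_of_sq hB.c_sq
  have qT : ConjInto (c * a * b * c) T := ((cT.mul aT).mul bT).mul cT
  have p_sq : (a * b) ^ 2 = 1 := h.ab
  have q_sq : (c * a * b * c) ^ 2 = 1 := by
    rw [sq, show c * a * b * c * (c * a * b * c) = c * (a * b * (c * c) * (a * b)) * c by group,
      hB.c_sq, mul_one, ← sq, h.ab, mul_one, hB.c_sq]
  have ac_cube : (a * c) ^ 3 = 1 := by
    have : a * c * a * (c * a * c) = (a * c) ^ 3 := by
      simp only [pow_succ, pow_zero, one_mul, mul_assoc]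
    rw [← this, hB.cac, show a * c * a * (a * c * a) = a * (c * (a * a) * c) * a by group,
      hB.a_sq, mul_one, hB.c_sq, mul_one, hB.a_sq]
  have apa : a * (a * b) * a = a * b := by
    rw [← hB.ba, mul_assoc, mul_assoc b, hB.a_sq, mul_one, hB.ba]
  have H4 := hT.sup_zpowers (aT.mul bT) two_pos (p_sq ▸ one_mem _)
  have q4 : ConjInto (c * a * b * c) (T ⊔ Subgroup.zpowers (a * b)) := qT.sup_zpowers (by
    rw [← k2, mul_inv_cancel_right]
    exact mem_sup_zpowers _ _)
  have H5 := H4.sup_zpowers q4 two_pos (q_sq ▸ one_mem _)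
  set K5 := T ⊔ Subgroup.zpowers (a * b) ⊔ Subgroup.zpowers (c * a * b * c)
  have p5 : a * b ∈ K5 := Subgroup.mem_sup_left (mem_sup_zpowers _ _)
  have q5 : c * a * b * c ∈ K5 := mem_sup_zpowers _ _
  have T5 : T ≤ K5 := le_sup_left.trans le_sup_left
  have conj5 {x : G} (hx : ConjInto x T) (h1 : x * (a * b) * x⁻¹ ∈ K5)
      (h2 : x * (c * a * b * c) * x⁻¹ ∈ K5) : ConjInto x K5 := by
    have : K5 ≤ K5.comap (MulAut.conj x).toMonoidHom :=
      sup_le (sup_le (fun y hy ↦ T5 (hx y hy)) (by simpa using h1)) (by simpa using h2)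
    exact fun y hy ↦ this hy
  have a5 : ConjInto a K5 := conj5 aT (by rwa [ainv, apa])
    (by rw [ainv, k1]; exact mul_mem p5 q5)
  have c5 : ConjInto c K5 := conj5 cT (by rw [cinv, ← mul_assoc]; exact q5) (by
    rw [cinv, show c * (c * a * b * c) * c = (c * c) * (a * b) * (c * c) by group, hB.c_sq,
      one_mul, mul_one]
    exact p5)
  have H6 := H5.sup_zpowers (a5.mul c5) three_pos (ac_cube ▸ one_mem _)
  have a6 : ConjInto a (K5 ⊔ Subgroup.zpowers (a * c)) := a5.sup_zpowers (by
    rw [ainv, ← mul_assoc, hB.a_sq, one_mul, ← inv_inv (c * a), mul_inv_rev, ainv, cinv]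
    exact inv_mem (mem_sup_zpowers _ _))
  have H7 := H6.sup_zpowers a6 two_pos (by rw [sq, hB.a_sq]; exact one_mem _)
  set K7 := K5 ⊔ Subgroup.zpowers (a * c) ⊔ Subgroup.zpowers a
  have ma : a ∈ K7 := mem_sup_zpowers _ _
  have K57 : K5 ≤ K7 := le_sup_left.trans le_sup_left
  have mac : a * c ∈ K7 := Subgroup.mem_sup_left (mem_sup_zpowers _ _)
  have mc : c ∈ K7 := by simpa using mul_mem (inv_mem ma) mac
  have mb : b ∈ K7 := by simpa using mul_mem (inv_mem ma) (K57 p5)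
  have md : d ∈ K7 := by
    rw [← k3]
    refine mul_mem ?_ (mul_mem (mul_mem (mul_mem (mul_mem ma mc) mb) mc) ma)
    have := K57 (T5 hU)
    simpa only [transU, mul_assoc] using this
  have r7 : ConjInto r K7 := by
    have conj_mul (x y : G) : r * (x * y) * r⁻¹ = (r * x * r⁻¹) * (r * y * r⁻¹) := by group
    have : K7 ≤ K7.comap (MulAut.conj r).toMonoidHom := by
      refine sup_le (sup_le (sup_le (sup_le (fun y hy ↦ K57 (T5 (rT y hy))) ?_) ?_) ?_) ?_ <;>
        simp only [Subgroup.zpowers_le, Subgroup.mem_comap, MulEquiv.coe_toMonoidHom,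
          MulAut.conj_apply, conj_mul, ← hc, ← hd, rcr]
      · exact mul_mem mc md
      · exact mul_mem (mul_mem (mul_mem ma mc) md) ma
      · exact mul_mem mc ma
      · exact mc
    exact fun y hy ↦ this hy
  have H8 := H7.sup_zpowers r7 two_pos (by rw [sq, h.r_sq]; exact one_mem _)
  refine ⟨_, ?_, Subgroup.mem_sup_left ma, mem_sup_zpowers _ _, Subgroup.mem_sup_left mb⟩
  convert H8 using 1
  ring

end UpperBound

section Homs

variable {H : Type*} [Group H] {m : ℕ}

theorem SkewRel.lift_eq_one {f : Fin 3 → H} (h : SkewRel m (f 0) (f 1) (f 2)) :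
    ∀ x ∈ rels m, FreeGroup.lift f x = 1 := by
  have i1 := inv_eq_self_of_sq h.r_sq
  have i2 := inv_eq_self_of_sq h.b_sq
  have p1 : (f 1 * f 0 * f 2) ^ (4 * m) = 1 := by
    have := conj_pow (i := 4 * m) (a := f 1) (b := f 0 * f 2 * f 1)
    rw [i1, h.petrie] at this
    simpa only [mul_assoc, h.r_sq, mul_one] using this
  have p2 : (f 2 * f 1 * f 0) ^ (4 * m) = 1 := by
    have := conj_pow (i := 4 * m) (a := f 2) (b := f 1 * f 0 * f 2)
    rw [p1, mul_one, mul_inv_cancel, i2] at this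
    simpa only [mul_assoc, h.b_sq, mul_one] using this
  have h0 := h.a_sq
  have h1 := h.r_sq
  have h2 := h.b_sq
  rw [← sq] at h0 h1 h2
  intro x hx
  simp only [rels, Set.mem_insert_iff, Set.mem_singleton_iff] at hx
  rcases hx with rfl | rfl | rfl | rfl | rfl | rfl | rfl | rfl | rfl | rfl <;>
    simp only [r0, r1, r2, map_mul, map_pow, FreeGroup.lift_apply_of, h0, h1, h2, h.ar, h.rb, h.ab,
      h.hole, h.petrie, p2, mul_one, h.r_sq]

/-- The homomorphism from `G_m` determined by a triple satisfying the relations. -/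
def homOfSkewRel {f : Fin 3 → H} (h : SkewRel m (f 0) (f 1) (f 2)) :
    PresentedGroup (rels m) →* H := PresentedGroup.toGroup h.lift_eq_one

theorem homOfSkewRel_g {f : Fin 3 → H} (h : SkewRel m (f 0) (f 1) (f 2)) (i : Fin 3) :
    homOfSkewRel h (g m i) = f i := PresentedGroup.toGroup.of _

theorem skewRel_g (m : ℕ) : SkewRel m (g m 0) (g m 1) (g m 2) := by
  have rel {x : FreeGroup (Fin 3)} (hx : x ∈ rels m) : PresentedGroup.mk (rels m) x = 1 :=
    PresentedGroup.one_of_mem hx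
  constructor
  · exact (sq _).symm.trans (rel (x := r0 ^ 2) (by simp [rels]))
  · exact (sq _).symm.trans (rel (x := r1 ^ 2) (by simp [rels]))
  · exact (sq _).symm.trans (rel (x := r2 ^ 2) (by simp [rels]))
  · exact rel (x := (r0 * r1) ^ 6) (by simp [rels])
  · exact rel (x := (r1 * r2) ^ 6) (by simp [rels])
  · exact rel (x := (r0 * r2) ^ 2) (by simp [rels])
  · exact rel (x := (r2 * r1 * r0 * r1) ^ 3) (by simp [rels])
  · exact rel (x := r1 * (r0 * r2 * r1) ^ (4 * m) * r1) (by simp [rels])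

/-- The linear parts, as elements of `S₄ × {±1}`. -/
def linGen : Fin 3 → Equiv.Perm (Fin 4) × ℤˣ :=
  ![(Equiv.swap 0 1, 1), (Equiv.swap 0 2, -1), (Equiv.swap 2 3, 1)]

theorem skewRel_linGen (m : ℕ) : SkewRel m (linGen 0) (linGen 1) (linGen 2) := by
  refine ⟨by decide, by decide, by decide, by decide, by decide, by decide, by decide, ?_⟩
  rw [pow_mul, show (linGen 0 * linGen 2 * linGen 1) ^ 4 = 1 by decide, one_pow]
  decide

/-- The three affine involutions of `R³` generating the symmetry group of `{6,6|3}`. -/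
def affGen (R : Type*) [CommRing R] : Fin 3 → Equiv.Perm (R × R × R) :=
  ![Function.Involutive.toPerm (fun p ↦ (p.1, p.2.2, p.2.1)) fun _ ↦ rfl,
    Function.Involutive.toPerm (fun p ↦ (2 - p.2.2, 2 - p.2.1, 2 - p.1)) fun p ↦ by simp,
    Function.Involutive.toPerm (fun p ↦ (p.1, -p.2.2, -p.2.1)) fun p ↦ by simp]

theorem addRight_pow_apply {A : Type*} [AddGroup A] (t : A) (n : ℕ) (p : A) :
    (Equiv.addRight t ^ n) p = p + n • t := by
  induction n with
  | zero => simp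
  | succ n ih =>
    rw [pow_succ', Equiv.Perm.mul_apply, ih]
    show p + n • t + t = _
    rw [succ_nsmul, add_assoc]

section affGen

variable {R : Type*} [CommRing R] (p : R × R × R)

theorem affGen_zero_apply : affGen R 0 p = (p.1, p.2.2, p.2.1) := rfl

theorem affGen_one_apply : affGen R 1 p = (2 - p.2.2, 2 - p.2.1, 2 - p.1) := rfl

theorem affGen_two_apply : affGen R 2 p = (p.1, -p.2.2, -p.2.1) := rfl

theorem skewRel_affGen (h : (8 * m : R) = 0) :
    SkewRel m (affGen R 0) (affGen R 1) (affGen R 2) := by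
  have petrie : (affGen R 0 * affGen R 2 * affGen R 1) ^ 4 = Equiv.addRight (0, -8, 0) := by
    ext p <;> simp [pow_succ, affGen_zero_apply, affGen_one_apply, affGen_two_apply]
    ring
  have r_sq : affGen R 1 * affGen R 1 = 1 := by
    ext p <;> simp [affGen_one_apply]
  refine ⟨?_, r_sq, ?_, ?_, ?_, ?_, ?_, ?_⟩
  iterate 6
    ext p <;> simp [pow_succ, affGen_zero_apply, affGen_one_apply, affGen_two_apply]
  have : m • ((0, -8, 0) : R × R × R) = 0 := by
    simp only [Prod.smul_mk, nsmul_eq_mul, mul_zero, Prod.mk_eq_zero, true_and, and_true]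
    linear_combination -h
  have hpow : (Equiv.addRight ((0, -8, 0) : R × R × R)) ^ m = 1 :=
    Equiv.ext fun p ↦ by rw [addRight_pow_apply, this, add_zero, Equiv.Perm.one_apply]
  rw [pow_mul, petrie, hpow, mul_one]
  exact r_sq

theorem trans_affGen :
    transU (affGen R 0) (affGen R 2) (affGen R 1 * affGen R 0 * affGen R 1)
      (affGen R 1 * affGen R 2 * affGen R 1) = Equiv.addRight (4, 4, 0) ∧
    transV (affGen R 0) (affGen R 2) (affGen R 1 * affGen R 0 * affGen R 1)
      (affGen R 1 * affGen R 2 * affGen R 1) = Equiv.addRight (4, 0, 4) ∧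
    transW (affGen R 0) (affGen R 2) (affGen R 1 * affGen R 0 * affGen R 1)
      (affGen R 1 * affGen R 2 * affGen R 1) = Equiv.addRight (0, 4, 4) := by
  refine ⟨?_, ?_, ?_⟩ <;> ext p <;>
    simp [transU, transV, transW, affGen_zero_apply, affGen_one_apply, affGen_two_apply] <;> ring

end affGen

end Homs

section Main

variable {m : ℕ}

/-- The linear part of an element of `G_m`. -/
def linHom (m : ℕ) : PresentedGroup (rels m) →* Equiv.Perm (Fin 4) × ℤˣ :=
  homOfSkewRel (skewRel_linGen m)

theorem linHom_g (i : Fin 3) : linHom m (g m i) = linGen i := homOfSkewRel_g _ i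

/-- The affine action of `G_m` on `R³`, for `R` of characteristic dividing `8m`. -/
def affHom {R : Type*} [CommRing R] (h : (8 * m : R) = 0) :
    PresentedGroup (rels m) →* Equiv.Perm (R × R × R) :=
  homOfSkewRel (skewRel_affGen h)

theorem affHom_g {R : Type*} [CommRing R] (h : (8 * m : R) = 0) (i : Fin 3) :
    affHom h (g m i) = affGen R i := homOfSkewRel_g _ i

theorem map_trans {G H : Type*} [Group G] [Group H] (f : G →* H) (a b c d : G) :
    f (transU a b c d) = transU (f a) (f b) (f c) (f d) ∧
    f (transV a b c d) = transV (f a) (f b) (f c) (f d) ∧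
    f (transW a b c d) = transW (f a) (f b) (f c) (f d) := by
  simp [transU, transV, transW]

theorem solvableBound_top (hm : 0 < m) :
    SolvableBound (⊤ : Subgroup (PresentedGroup (rels m))) (192 * m ^ 3) := by
  obtain ⟨H, hH, h0, h1, h2⟩ := (skewRel_g m).exists_bound hm
  have : H = ⊤ := by
    rw [eq_top_iff, ← PresentedGroup.closure_range_of, Subgroup.closure_le]
    rintro _ ⟨i, rfl⟩
    fin_cases i
    exacts [h0, h1, h2]
  rwa [this] at hH

theorem linHom_surjective (m : ℕ) : Function.Surjective (linHom m) := by
  have mem (x : PresentedGroup (rels m)) : linHom m x ∈ (linHom m).range := ⟨x, rfl⟩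
  have m0 := mem (g m 0)
  have m1 := mem (g m 1)
  have m2 := mem (g m 2)
  have mc := mem (g m 1 * g m 0 * g m 1)
  simp only [map_mul, linHom_g] at m0 m1 m2 mc
  have hperm (σ : Equiv.Perm (Fin 4)) : (σ, 1) ∈ (linHom m).range := by
    have hle : Submonoid.closure (Set.range fun i : Fin 3 ↦ Equiv.swap i.castSucc i.succ) ≤
        ((linHom m).range.comap (MonoidHom.inl (Equiv.Perm (Fin 4)) ℤˣ)).toSubmonoid := by
      rw [Submonoid.closure_le]
      rintro _ ⟨i, rfl⟩
      fin_cases i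
      · exact m0
      · have e : ((Equiv.swap 1 2, 1) : Equiv.Perm (Fin 4) × ℤˣ) =
            linGen 1 * linGen 0 * linGen 1 := by decide
        rw [← e] at mc
        exact mc
      · exact m2
    rw [Equiv.Perm.mclosure_swap_castSucc_succ] at hle
    exact hle (Submonoid.mem_top σ)
  rintro ⟨σ, ε⟩
  rcases Int.units_eq_one_or ε with rfl | rfl
  · exact hperm σ
  · have := mul_mem (hperm (σ * Equiv.swap 0 2)) m1
    convert this using 1
    simp [linGen, MonoidHom.mem_range]

/-- The translation with coordinates `(i, j, k)` in the basis of root translations. -/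
def transWord (m i j k : ℕ) : PresentedGroup (rels m) :=
  transU (g m 0) (g m 2) (g m 1 * g m 0 * g m 1) (g m 1 * g m 2 * g m 1) ^ i *
  transV (g m 0) (g m 2) (g m 1 * g m 0 * g m 1) (g m 1 * g m 2 * g m 1) ^ j *
  transW (g m 0) (g m 2) (g m 1 * g m 0 * g m 1) (g m 1 * g m 2 * g m 1) ^ k

theorem linHom_transWord (i j k : ℕ) : linHom m (transWord m i j k) = 1 := by
  obtain ⟨hu, hv, hw⟩ := map_trans (linHom m) (g m 0) (g m 2) (g m 1 * g m 0 * g m 1)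
    (g m 1 * g m 2 * g m 1)
  simp only [transWord, map_mul, map_pow, hu, hv, hw, linHom_g]
  rw [show transU (linGen 0) (linGen 2) (linGen 1 * linGen 0 * linGen 1)
      (linGen 1 * linGen 2 * linGen 1) = 1 by decide,
    show transV (linGen 0) (linGen 2) (linGen 1 * linGen 0 * linGen 1)
      (linGen 1 * linGen 2 * linGen 1) = 1 by decide,
    show transW (linGen 0) (linGen 2) (linGen 1 * linGen 0 * linGen 1)
      (linGen 1 * linGen 2 * linGen 1) = 1 by decide]
  simp

theorem affHom_transWord {R : Type*} [CommRing R] (h : (8 * m : R) = 0) (i j k : ℕ) :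
    affHom h (transWord m i j k) 0 =
      ((4 * (i + j), 4 * (i + k), 4 * (j + k)) : R × R × R) := by
  obtain ⟨hu, hv, hw⟩ := map_trans (affHom h) (g m 0) (g m 2) (g m 1 * g m 0 * g m 1)
    (g m 1 * g m 2 * g m 1)
  obtain ⟨au, av, aw⟩ := trans_affGen (R := R)
  simp only [transWord, map_mul, map_pow, hu, hv, hw, affHom_g, au, av, aw, Equiv.Perm.mul_apply,
    addRight_pow_apply]
  ext <;> simp <;> ring

theorem transWord_injective (m : ℕ) : Function.Injective
    fun t : Fin (2 * m) × Fin (2 * m) × Fin m ↦ transWord m t.1 t.2.1 t.2.2 := by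
  rintro ⟨⟨i, hi⟩, ⟨j, hj⟩, ⟨k, hk⟩⟩ ⟨⟨i', hi'⟩, ⟨j', hj'⟩, ⟨k', hk'⟩⟩ heq
  have h8 : (8 * m : ZMod (8 * m)) = 0 := by exact_mod_cast ZMod.natCast_self (8 * m)
  have := congrArg (fun x ↦ affHom h8 x 0) heq
  simp only [affHom_transWord, Prod.mk.injEq] at this
  obtain ⟨e1, e2, e3⟩ := this
  have descend {x y : ℕ} (e : ((4 * x : ℕ) : ZMod (8 * m)) = ((4 * y : ℕ) : ZMod (8 * m))) :
      ∃ z : ℤ, (x : ℤ) - y = 2 * m * z := by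
    obtain ⟨z, hz⟩ := (ZMod.intCast_eq_intCast_iff_dvd_sub (4 * y) (4 * x) (8 * m)).1
      (by exact_mod_cast e.symm)
    exact ⟨z, by push_cast at hz; linarith⟩
  obtain ⟨z1, h1⟩ := descend (x := i + j) (y := i' + j') (by exact_mod_cast e1)
  obtain ⟨z2, h2⟩ := descend (x := i + k) (y := i' + k') (by exact_mod_cast e2)
  obtain ⟨z3, h3⟩ := descend (x := j + k) (y := j' + k') (by exact_mod_cast e3)
  push_cast at h1 h2 h3
  have zero_of_lt {n x z : ℤ} (hx : x = n * z) (h1 : x < n) (h2 : -n < x) : x = 0 :=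
    Int.eq_zero_of_abs_lt_dvd ⟨z, hx⟩ (abs_lt.2 ⟨h2, h1⟩)
  have ek : (k : ℤ) - k' = 0 :=
    zero_of_lt (n := m) (z := z2 + z3 - z1) (by linarith) (by omega) (by omega)
  have ei : (i : ℤ) - i' = 0 :=
    zero_of_lt (n := 2 * m) (z := z2) (by linarith) (by omega) (by omega)
  have ej : (j : ℤ) - j' = 0 :=
    zero_of_lt (n := 2 * m) (z := z3) (by linarith) (by omega) (by omega)
  simp only [Prod.mk.injEq, Fin.mk.injEq]
  omega

theorem finite_presentedGroup (hm : 0 < m) : Finite (PresentedGroup (rels m)) :=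
  have := (solvableBound_top hm).finite
  Finite.of_equiv _ Subgroup.topEquiv.toEquiv

theorem card_presentedGroup (hm : 0 < m) :
    Nat.card (PresentedGroup (rels m)) = 192 * m ^ 3 := by
  have := finite_presentedGroup hm
  apply le_antisymm
  · have := (solvableBound_top hm).card_le
    rwa [Subgroup.card_top] at this
  · have hker : 4 * m ^ 3 ≤ Nat.card (linHom m).ker := by
      have hinj := Nat.card_le_card_of_injective
        (fun t : Fin (2 * m) × Fin (2 * m) × Fin m ↦
          (⟨transWord m t.1 t.2.1 t.2.2, linHom_transWord _ _ _⟩ : (linHom m).ker))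
        (fun x y hxy ↦ transWord_injective m (Subtype.ext_iff.1 hxy))
      simp only [Nat.card_prod, Nat.card_fin] at hinj
      linarith [hinj, show 2 * m * (2 * m * m) = 4 * m ^ 3 by ring]
    have hrange : Nat.card (linHom m).range = 48 := by
      rw [MonoidHom.range_eq_top.2 (linHom_surjective m), Subgroup.card_top, Nat.card_prod,
        Nat.card_perm, Nat.card_eq_fintype_card, Nat.card_eq_fintype_card]
      rfl
    have := (linHom m).ker.card_mul_index
    rw [Subgroup.index_ker, hrange] at this
    linarith

theorem orderOf_eq_of_linHom {x : PresentedGroup (rels m)} {n : ℕ} (hx : x ^ n = 1)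
    (hn : orderOf (linHom m x) = n) : orderOf x = n :=
  Nat.dvd_antisymm (orderOf_dvd_of_pow_eq_one hx) (hn ▸ orderOf_map_dvd (linHom m) x)

theorem orderOf_eq_six {M : Type*} [Monoid M] {x : M} (h6 : x ^ 6 = 1) (h2 : x ^ 2 ≠ 1)
    (h3 : x ^ 3 ≠ 1) : orderOf x = 6 := by
  have hd := orderOf_dvd_of_pow_eq_one h6
  have hle := Nat.le_of_dvd (by norm_num) hd
  have n2 : ¬ orderOf x ∣ 2 := fun h ↦ h2 (orderOf_dvd_iff_pow_eq_one.1 h)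
  have n3 : ¬ orderOf x ∣ 3 := fun h ↦ h3 (orderOf_dvd_iff_pow_eq_one.1 h)
  interval_cases orderOf x <;> simp_all

/-- Elements of a dihedral group are alternating words. -/
theorem exists_pow_of_mem_closure_pair {G : Type*} [Group G] {x y z : G} {n : ℕ} (hn : 0 < n)
    (hx : x * x = 1) (hy : y * y = 1) (hxy : (x * y) ^ n = 1)
    (hz : z ∈ Subgroup.closure {x, y}) :
    ∃ k < n, z = (x * y) ^ k ∨ z = (x * y) ^ k * x := by
  have key : ∃ k : ℤ, z = (x * y) ^ k ∨ z = (x * y) ^ k * x := by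
    have step (t s : G) (hs : s ∈ ({x, y} : Set G))
        (ht : ∃ k : ℤ, t = (x * y) ^ k ∨ t = (x * y) ^ k * x) :
        ∃ k : ℤ, t * s = (x * y) ^ k ∨ t * s = (x * y) ^ k * x := by
      obtain ⟨k, rfl | rfl⟩ := ht <;> rcases hs with rfl | rfl
      · exact ⟨k, .inr rfl⟩
      · refine ⟨k - 1, .inr ?_⟩
        rw [zpow_sub_one, mul_inv_rev, inv_eq_self_of_sq hx, inv_eq_self_of_sq hy]
        simp [mul_assoc, hx]
      · exact ⟨k, .inl (by rw [mul_assoc, hx, mul_one])⟩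
      · exact ⟨k + 1, .inl (by rw [zpow_add_one, mul_assoc])⟩
    induction hz using Subgroup.closure_induction_right with
    | one => exact ⟨0, .inl (by simp)⟩
    | mul_right t _ s hs ih => exact step t s hs ih
    | mul_inv_cancel t _ s hs ih =>
      have : s⁻¹ = s := by
        rcases hs with rfl | rfl
        exacts [inv_eq_self_of_sq hx, inv_eq_self_of_sq hy]
      rw [this]
      exact step t s hs ih
  obtain ⟨k, hk⟩ := key
  have hn' : (0 : ℤ) < n := by exact_mod_cast hn
  have e : (x * y) ^ (k % n).toNat = (x * y) ^ k := by
    rw [← zpow_natCast, Int.toNat_of_nonneg (Int.emod_nonneg k hn'.ne')]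
    conv_rhs => rw [← Int.emod_add_mul_ediv k n, zpow_add, zpow_mul, zpow_natCast, hxy, one_zpow,
      mul_one]
  have := Int.emod_lt_of_pos k hn'
  have := Int.emod_nonneg k hn'.ne'
  exact ⟨(k % n).toNat, by omega, by rwa [e]⟩

theorem linHom_closure_pair_apply {i j : Fin 3} {q : Fin 4} (hi : (linGen i).1 q = q)
    (hj : (linGen j).1 q = q) {z : PresentedGroup (rels m)}
    (hz : z ∈ Subgroup.closure {g m i, g m j}) : (linHom m z).1 q = q := by
  have : Subgroup.closure {g m i, g m j} ≤ (MulAction.stabilizer (Equiv.Perm (Fin 4)) q).comap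
      ((MonoidHom.fst _ _).comp (linHom m)) := by
    rw [Subgroup.closure_le]
    rintro _ (rfl | rfl)
    · simpa [linHom_g] using hi
    · simpa [linHom_g] using hj
  exact this hz

theorem mem_closure_zero_two {z : PresentedGroup (rels m)}
    (hz : z ∈ Subgroup.closure {g m 0, g m 2}) :
    z = 1 ∨ z = g m 0 ∨ z = g m 2 ∨ z = g m 0 * g m 2 := by
  have h := skewRel_g m
  obtain ⟨k, hk, hz⟩ := exists_pow_of_mem_closure_pair two_pos h.a_sq h.b_sq h.ab hz
  have e : g m 0 * g m 2 * g m 0 = g m 2 := by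
    rw [mul_assoc, h.cyclicBraid.ba, ← mul_assoc, h.a_sq, one_mul]
  interval_cases k <;> simp only [pow_zero, pow_one, one_mul, e] at hz <;> tauto

theorem inter_zero_one_zero_two {z : PresentedGroup (rels m)}
    (h1 : z ∈ Subgroup.closure {g m 0, g m 1}) (h2 : z ∈ Subgroup.closure {g m 0, g m 2}) :
    z ∈ Subgroup.closure {g m 0} := by
  have h3 := linHom_closure_pair_apply (q := 3) (by decide) (by decide) h1
  rcases mem_closure_zero_two h2 with rfl | rfl | rfl | rfl
  · exact one_mem _
  · exact Subgroup.mem_closure_singleton_self _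
  · rw [linHom_g] at h3
    exact absurd h3 (by decide)
  · rw [map_mul, linHom_g, linHom_g] at h3
    exact absurd h3 (by decide)

theorem inter_one_two_zero_two {z : PresentedGroup (rels m)}
    (h1 : z ∈ Subgroup.closure {g m 1, g m 2}) (h2 : z ∈ Subgroup.closure {g m 0, g m 2}) :
    z ∈ Subgroup.closure {g m 2} := by
  have h3 := linHom_closure_pair_apply (q := 1) (by decide) (by decide) h1
  rcases mem_closure_zero_two h2 with rfl | rfl | rfl | rfl
  · exact one_mem _
  · rw [linHom_g] at h3
    exact absurd h3 (by decide)
  · exact Subgroup.mem_closure_singleton_self _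
  · rw [map_mul, linHom_g, linHom_g] at h3
    exact absurd h3 (by decide)

theorem inter_zero_one_one_two {z : PresentedGroup (rels m)}
    (h1 : z ∈ Subgroup.closure {g m 0, g m 1}) (h2 : z ∈ Subgroup.closure {g m 1, g m 2}) :
    z ∈ Subgroup.closure {g m 1} := by
  have h := skewRel_g m
  have h8 : (8 * m : ZMod 8) = 0 := by
    rw [show (8 : ZMod 8) = 0 from rfl, zero_mul]
  have hfix : affHom h8 z (3, 1, -1) = ((3, 1, -1) : ZMod 8 × ZMod 8 × ZMod 8) := by
    have : Subgroup.closure {g m 1, g m 2} ≤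
        (MulAction.stabilizer (Equiv.Perm (ZMod 8 × ZMod 8 × ZMod 8))
          ((3, 1, -1) : ZMod 8 × ZMod 8 × ZMod 8)).comap
          (affHom h8) := by
      rw [Subgroup.closure_le]
      rintro _ (rfl | rfl)
      · show affHom h8 (g m 1) (3, 1, -1) = (3, 1, -1)
        rw [affHom_g]
        decide
      · show affHom h8 (g m 2) (3, 1, -1) = (3, 1, -1)
        rw [affHom_g]
        decide
    exact this h2
  obtain ⟨k, hk, rfl | rfl⟩ := exists_pow_of_mem_closure_pair (by norm_num) h.a_sq h.r_sq h.ar h1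
  · have : k = 0 := by
      simp only [map_mul, map_pow, affHom_g] at hfix
      clear h1 h2
      revert k
      decide
    rw [this, pow_zero]
    exact one_mem _
  · have hk5 : k = 5 := by
      simp only [map_mul, map_pow, affHom_g] at hfix
      clear h1 h2
      revert k
      decide
    have e : (g m 0 * g m 1) ^ 5 * g m 0 = g m 1 := by
      rw [← mul_left_inj (g m 1), mul_assoc, ← pow_succ, h.ar, h.r_sq]
    rw [hk5, e]
    exact Subgroup.mem_closure_singleton_self _

theorem inter_pair {i j k : Fin 3} (hij : i ≠ j) (hik : i ≠ k) (hjk : j ≠ k)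
    {z : PresentedGroup (rels m)} (h1 : z ∈ Subgroup.closure {g m i, g m k})
    (h2 : z ∈ Subgroup.closure {g m j, g m k}) : z ∈ Subgroup.closure {g m k} := by
  obtain ⟨rfl, rfl, rfl⟩ | ⟨rfl, rfl, rfl⟩ | ⟨rfl, rfl, rfl⟩ | ⟨rfl, rfl, rfl⟩ |
      ⟨rfl, rfl, rfl⟩ | ⟨rfl, rfl, rfl⟩ : i = 0 ∧ j = 1 ∧ k = 2 ∨ i = 0 ∧ j = 2 ∧ k = 1 ∨
      i = 1 ∧ j = 0 ∧ k = 2 ∨ i = 1 ∧ j = 2 ∧ k = 0 ∨ i = 2 ∧ j = 0 ∧ k = 1 ∨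
      i = 2 ∧ j = 1 ∧ k = 0 := by
    clear h1 h2
    revert i j k
    decide
  · exact inter_one_two_zero_two h2 h1
  · exact inter_zero_one_one_two h1 (Set.pair_comm (g m 1) (g m 2) ▸ h2)
  · exact inter_one_two_zero_two h1 h2
  · exact inter_zero_one_zero_two (Set.pair_comm (g m 0) (g m 1) ▸ h1)
      (Set.pair_comm (g m 0) (g m 2) ▸ h2)
  · exact inter_zero_one_one_two h2 (Set.pair_comm (g m 1) (g m 2) ▸ h1)
  · exact inter_zero_one_zero_two (Set.pair_comm (g m 0) (g m 1) ▸ h2)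
      (Set.pair_comm (g m 0) (g m 2) ▸ h1)

theorem interProp_g (m : ℕ) : InterProp (g m) := by
  have h := skewRel_g m
  have mono {I J : Set (Fin 3)} (hIJ : I ⊆ J) :
      Subgroup.closure (g m '' I) ≤ Subgroup.closure (g m '' J) :=
    Subgroup.closure_mono (Set.image_mono hIJ)
  intro I J
  refine le_antisymm ?_ (le_inf (mono Set.inter_subset_left) (mono Set.inter_subset_right))
  by_cases hIJ : I ⊆ J
  · rw [Set.inter_eq_left.2 hIJ]
    exact inf_le_left
  by_cases hJI : J ⊆ I
  · rw [Set.inter_eq_right.2 hJI]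
    exact inf_le_right
  obtain ⟨i, hi, hi'⟩ := Set.not_subset.1 hIJ
  obtain ⟨j, hj, hj'⟩ := Set.not_subset.1 hJI
  have hij : i ≠ j := fun e ↦ hi' (e ▸ hj)
  obtain ⟨k, hik, hjk, hk⟩ : ∃ k, i ≠ k ∧ j ≠ k ∧ ∀ l, l = i ∨ l = j ∨ l = k := by
    clear hi hi' hj hj'
    revert i j
    decide
  rintro z ⟨hz1, hz2⟩
  have hI : I ⊆ {i, k} := fun l hl ↦ by
    rcases hk l with rfl | rfl | rfl
    exacts [.inl rfl, (hj' hl).elim, .inr rfl]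
  have hJ : J ⊆ {j, k} := fun l hl ↦ by
    rcases hk l with rfl | rfl | rfl
    exacts [(hi' hl).elim, .inl rfl, .inr rfl]
  have hzk : z ∈ Subgroup.closure {g m k} := by
    refine inter_pair hij hik hjk ?_ ?_
    · simpa [Set.image_pair] using mono hI hz1
    · simpa [Set.image_pair] using mono hJ hz2
  have lin_ne {p q : Fin 3} (hpq : p ≠ q) {z : PresentedGroup (rels m)}
      (hp : z ∈ Subgroup.closure {g m p}) (hq : z ∈ Subgroup.closure {g m q}) : z = 1 := by
    have sq_one (p : Fin 3) : g m p * g m p = 1 := by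
      fin_cases p
      exacts [h.a_sq, h.r_sq, h.b_sq]
    have cases (p : Fin 3) (hp : z ∈ Subgroup.closure {g m p}) : z = 1 ∨ z = g m p := by
      obtain ⟨n, hn, hz⟩ := exists_pow_of_mem_closure_pair (x := g m p) (y := g m p) one_pos
        (sq_one p) (sq_one p) (by rw [pow_one, sq_one]) (by simpa using hp)
      simpa [Nat.lt_one_iff.1 hn] using hz
    rcases cases p hp with h1 | h1
    · exact h1
    rcases cases q hq with h2 | h2
    · exact h2
    have := congrArg (linHom m) (h1.symm.trans h2)
    rw [linHom_g, linHom_g] at this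
    exfalso
    clear h1 h2 hp hq
    revert p q
    decide
  by_cases hkI : k ∈ I
  · by_cases hkJ : k ∈ J
    · refine Subgroup.closure_mono ?_ hzk
      rintro _ rfl
      exact ⟨k, ⟨hkI, hkJ⟩, rfl⟩
    · have hJ' : J ⊆ {j} := fun l hl ↦ (hJ hl).resolve_right fun e ↦ hkJ (e ▸ hl)
      rw [lin_ne hjk (by simpa using mono hJ' hz2) hzk]
      exact one_mem _
  · have hI' : I ⊆ {i} := fun l hl ↦ (hI hl).resolve_right fun e ↦ hkI (e ▸ hl)
    rw [lin_ne hik (by simpa using mono hI' hz1) hzk]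
    exact one_mem _

end Main

/-- Theorem 5.1, family `G_m`: a solvable string C-group of type `{6,6}`
of order `192 m^3`. -/
theorem stmt_12 (m : ℕ) (hm : 0 < m) :
    Nat.card (PresentedGroup (rels m)) = 192 * m ^ 3 ∧
    IsSolvable (PresentedGroup (rels m)) ∧
    orderOf (g m 0) = 2 ∧ orderOf (g m 1) = 2 ∧ orderOf (g m 2) = 2 ∧
    orderOf (g m 0 * g m 2) = 2 ∧
    orderOf (g m 0 * g m 1) = 6 ∧ orderOf (g m 1 * g m 2) = 6 ∧
    InterProp ![g m 0, g m 1, g m 2] := by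
  have h := skewRel_g m
  refine ⟨card_presentedGroup hm, ?_, ?_, ?_, ?_, ?_, ?_, ?_, ?_⟩
  · have := (solvableBound_top hm).solvable
    exact Group.isSolvable_of_surjective (f := (⊤ : Subgroup (PresentedGroup (rels m))).subtype)
      fun x ↦ ⟨⟨x, trivial⟩, rfl⟩
  · refine orderOf_eq_of_linHom ((sq _).trans h.a_sq) ?_
    rw [linHom_g]
    exact orderOf_eq_prime (by decide) (by decide)
  · refine orderOf_eq_of_linHom ((sq _).trans h.r_sq) ?_
    rw [linHom_g]
    exact orderOf_eq_prime (by decide) (by decide)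
  · refine orderOf_eq_of_linHom ((sq _).trans h.b_sq) ?_
    rw [linHom_g]
    exact orderOf_eq_prime (by decide) (by decide)
  · refine orderOf_eq_of_linHom h.ab ?_
    rw [map_mul, linHom_g, linHom_g]
    exact orderOf_eq_prime (by decide) (by decide)
  · refine orderOf_eq_of_linHom h.ar ?_
    rw [map_mul, linHom_g, linHom_g]
    exact orderOf_eq_six (by decide) (by decide) (by decide)
  · refine orderOf_eq_of_linHom h.rb ?_
    rw [map_mul, linHom_g, linHom_g]
    exact orderOf_eq_six (by decide) (by decide) (by decide)
  · convert interProp_g m using 1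
    ext i
    fin_cases i <;> rfl

end Stmt12
end

section
/- For every positive integer m, let H_m be the presented group on generators ρ0, ρ1, ρ2 with relation set {ρ0^2, ρ1^2, ρ2^2, (ρ0ρ1)^6, (ρ1ρ2)^6, (ρ0ρ2)^2, (ρ2ρ1ρ0ρ1)^3, (ρ1ρ0)((ρ1ρ2)^3(ρ0ρ1)^3)^{2m}(ρ0ρ1), ρ2((ρ1ρ2)^3(ρ0ρ1)^3)^{2m}ρ2, (ρ1ρ2)((ρ1ρ2)^3(ρ0ρ1)^3)^{2m}(ρ2ρ1)}. Then H_m has order 384·m^3, H_m is solvable, in H_m the images of ρ0, ρ1, ρ2 and ρ0ρ2 have order exactly 2, the images of ρ0ρ1 and ρ1ρ2 have order exactly 6, and the triple of images of (ρ0, ρ1, ρ2) satisfies the intersection property in H_m. -/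
namespace Stmt13

def r0 : FreeGroup (Fin 3) := FreeGroup.of 0
def r1 : FreeGroup (Fin 3) := FreeGroup.of 1
def r2 : FreeGroup (Fin 3) := FreeGroup.of 2

/-- The relations of the presented group `H_m` of Theorem 5.1. -/
def rels (m : ℕ) : Set (FreeGroup (Fin 3)) :=
  {r0 ^ 2, r1 ^ 2, r2 ^ 2, (r0 * r1) ^ 6, (r1 * r2) ^ 6, (r0 * r2) ^ 2,
   (r2 * r1 * r0 * r1) ^ 3,
   (r1 * r0) * ((r1 * r2) ^ 3 * (r0 * r1) ^ 3) ^ (2 * m) * (r0 * r1),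
   r2 * ((r1 * r2) ^ 3 * (r0 * r1) ^ 3) ^ (2 * m) * r2,
   (r1 * r2) * ((r1 * r2) ^ 3 * (r0 * r1) ^ 3) ^ (2 * m) * (r2 * r1)}

/-- The image of the `i`-th generator in `H_m`. -/
def g (m : ℕ) (i : Fin 3) : PresentedGroup (rels m) := PresentedGroup.of i

/-- The intersection property for a triple of elements. -/
def InterProp {G : Type*} [Group G] (ρ : Fin 3 → G) : Prop :=
  ∀ I J : Set (Fin 3),
    Subgroup.closure (ρ '' I) ⊓ Subgroup.closure (ρ '' J) =
      Subgroup.closure (ρ '' (I ∩ J))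

/-- Generators of the affine Coxeter group of type `A₃`, together with an involution `r` inducing
the reflection of its Dynkin diagram (a square) that exchanges `s1, s2` and `s0, s3`. -/
structure TwistedAffineA3 {G : Type*} [Group G] (s0 s1 s2 s3 r : G) : Prop where
  sq0 : s0 * s0 = 1
  sq1 : s1 * s1 = 1
  sq2 : s2 * s2 = 1
  sq3 : s3 * s3 = 1
  braid01 : s0 * s1 * s0 = s1 * s0 * s1
  braid12 : s1 * s2 * s1 = s2 * s1 * s2
  braid23 : s2 * s3 * s2 = s3 * s2 * s3
  braid30 : s3 * s0 * s3 = s0 * s3 * s0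
  comm02 : s0 * s2 = s2 * s0
  comm13 : s1 * s3 = s3 * s1
  sqr : r * r = 1
  twist0 : r * s0 = s3 * r
  twist1 : r * s1 = s2 * r
  twist2 : r * s2 = s1 * r
  twist3 : r * s3 = s0 * r

/-- Normal forms for the elements of the extension of `S₄ = ⟨s1, s2, s3⟩` by `r`. -/
def word {G : Type*} [Group G] (s1 s2 s3 r : G) (p : Fin 2 × Fin 3 × Fin 4 × Fin 2) : G :=
  ![1, s1] p.1 * (![1, s2, s2 * s1] p.2.1 *
    (![1, s3, s3 * s2, s3 * s2 * s1] p.2.2.1 * ![1, r] p.2.2.2))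

theorem map_word {G K : Type*} [Group G] [Group K] (f : G →* K) (s1 s2 s3 r : G)
    (p : Fin 2 × Fin 3 × Fin 4 × Fin 2) :
    f (word s1 s2 s3 r p) = word (f s1) (f s2) (f s3) (f r) p := by
  obtain ⟨a, b, c, e⟩ := p
  have ha : f (![1, s1] a) = ![1, f s1] a := by fin_cases a <;> simp
  have hb : f (![1, s2, s2 * s1] b) = ![1, f s2, f s2 * f s1] b := by fin_cases b <;> simp
  have hc : f (![1, s3, s3 * s2, s3 * s2 * s1] c) =
      ![1, f s3, f s3 * f s2, f s3 * f s2 * f s1] c := by fin_cases c <;> simp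
  have he : f (![1, r] e) = ![1, f r] e := by fin_cases e <;> simp
  simp only [word, map_mul, ha, hb, hc, he]

/-- The subgroup of translations of the affine Coxeter group of type `A₃`. -/
def translations {G : Type*} [Group G] (s0 s1 s2 s3 : G) : Subgroup G :=
  Subgroup.closure {s0 * s1 * s2 * s3 * s2 * s1, s1 * s0 * s1 * s2 * s3 * s2,
    s2 * s1 * s0 * s1 * s2 * s3}

/-- Conjugation relations that hold on generators of a subgroup hold on the subgroup. -/
theorem exists_mul_eq_mul_of_closure {G : Type*} [Group G] {S : Set G} {s : G}
    (h : ∀ x ∈ S, s * x * s⁻¹ ∈ Subgroup.closure S) {x : G} (hx : x ∈ Subgroup.closure S) :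
    ∃ y ∈ Subgroup.closure S, s * x = y * s := by
  refine ⟨s * x * s⁻¹, ?_, by group⟩
  induction hx using Subgroup.closure_induction with
  | mem x hx => exact h x hx
  | one => simp
  | mul x y _ _ hx hy => simpa [mul_assoc] using mul_mem hx hy
  | inv x _ hx => simpa [mul_assoc] using inv_mem hx

namespace TwistedAffineA3

variable {G : Type*} [Group G] {s0 s1 s2 s3 r : G}

theorem commute_translations (h : TwistedAffineA3 s0 s1 s2 s3 r) :
    Commute (s0 * s1 * s2 * s3 * s2 * s1) (s1 * s0 * s1 * s2 * s3 * s2) ∧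
    Commute (s0 * s1 * s2 * s3 * s2 * s1) (s2 * s1 * s0 * s1 * s2 * s3) ∧
    Commute (s1 * s0 * s1 * s2 * s3 * s2) (s2 * s1 * s0 * s1 * s2 * s3) := by
  obtain ⟨h0, h1, h2, h3, b01, b12, b23, b30, c02, c13, -, -, -, -, -⟩ := h
  refine ⟨?_, ?_, ?_⟩ <;> unfold Commute SemiconjBy <;> grind (acSteps := 100000)

theorem exists_eq_zpow (h : TwistedAffineA3 s0 s1 s2 s3 r) {x : G}
    (hx : x ∈ translations s0 s1 s2 s3) :
    ∃ i j k : ℤ, x = (s0 * s1 * s2 * s3 * s2 * s1) ^ i *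
      ((s1 * s0 * s1 * s2 * s3 * s2) ^ j * (s2 * s1 * s0 * s1 * s2 * s3) ^ k) := by
  obtain ⟨h12, h13, h23⟩ := h.commute_translations
  generalize ht1 : s0 * s1 * s2 * s3 * s2 * s1 = t1 at *
  generalize ht2 : s1 * s0 * s1 * s2 * s3 * s2 = t2 at *
  generalize ht3 : s2 * s1 * s0 * s1 * s2 * s3 = t3 at *
  rw [translations, ht1, ht2, ht3] at hx
  induction hx using Subgroup.closure_induction with
  | mem x hx =>
    obtain rfl | rfl | rfl := hx
    · exact ⟨1, 0, 0, by simp⟩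
    · exact ⟨0, 1, 0, by simp⟩
    · exact ⟨0, 0, 1, by simp⟩
  | one => exact ⟨0, 0, 0, by simp⟩
  | mul x y _ _ hx hy =>
    obtain ⟨i, j, k, rfl⟩ := hx
    obtain ⟨i', j', k', rfl⟩ := hy
    refine ⟨i + i', j + j', k + k', ?_⟩
    rw [zpow_add, zpow_add, zpow_add]
    have e1 := (h12.zpow_zpow i' j).eq
    have e2 := (h13.zpow_zpow i' k).eq
    have e3 := (h23.zpow_zpow j' k).eq
    grind
  | inv x _ hx =>
    obtain ⟨i, j, k, rfl⟩ := hx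
    refine ⟨-i, -j, -k, ?_⟩
    have e1 := (h12.zpow_zpow (-i) (-j)).eq
    have e2 := (h13.zpow_zpow (-i) (-k)).eq
    have e3 := (h23.zpow_zpow (-j) (-k)).eq
    rw [mul_inv_rev, mul_inv_rev, ← zpow_neg, ← zpow_neg, ← zpow_neg]
    grind

theorem commute_of_mem_translations (h : TwistedAffineA3 s0 s1 s2 s3 r) {x y : G}
    (hx : x ∈ translations s0 s1 s2 s3) (hy : y ∈ translations s0 s1 s2 s3) : x * y = y * x := by
  obtain ⟨h12, h13, h23⟩ := h.commute_translations
  obtain ⟨i, j, k, rfl⟩ := h.exists_eq_zpow hx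
  obtain ⟨i', j', k', rfl⟩ := h.exists_eq_zpow hy
  have aux : ∀ a, Commute a (s0 * s1 * s2 * s3 * s2 * s1) →
      Commute a (s1 * s0 * s1 * s2 * s3 * s2) → Commute a (s2 * s1 * s0 * s1 * s2 * s3) →
      Commute a ((s0 * s1 * s2 * s3 * s2 * s1) ^ i' *
        ((s1 * s0 * s1 * s2 * s3 * s2) ^ j' * (s2 * s1 * s0 * s1 * s2 * s3) ^ k')) :=
    fun a h1 h2 h3 => (h1.zpow_right _).mul_right ((h2.zpow_right _).mul_right (h3.zpow_right _))
  exact ((aux _ (Commute.refl _) h12 h13).zpow_left i).mul_left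
    (((aux _ h12.symm (Commute.refl _) h23).zpow_left j).mul_left
      ((aux _ h13.symm h23.symm (Commute.refl _)).zpow_left k))

/-- Every generator normalizes the subgroup of translations. -/
theorem exists_mul_eq_mul (h : TwistedAffineA3 s0 s1 s2 s3 r) {s x : G}
    (hs : s = s1 ∨ s = s2 ∨ s = s3 ∨ s = r) (hx : x ∈ translations s0 s1 s2 s3) :
    ∃ y ∈ translations s0 s1 s2 s3, s * x = y * s := by
  refine exists_mul_eq_mul_of_closure ?_ hx
  have m1 : s0 * s1 * s2 * s3 * s2 * s1 ∈ translations s0 s1 s2 s3 :=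
    Subgroup.subset_closure (by simp)
  have m2 : s1 * s0 * s1 * s2 * s3 * s2 ∈ translations s0 s1 s2 s3 :=
    Subgroup.subset_closure (by simp)
  have m3 : s2 * s1 * s0 * s1 * s2 * s3 ∈ translations s0 s1 s2 s3 :=
    Subgroup.subset_closure (by simp)
  change ∀ x ∈ _, _ ∈ translations s0 s1 s2 s3
  obtain ⟨h0, h1, h2, h3, b01, b12, b23, b30, c02, c13, hr, d0, d1, d2, d3⟩ := h
  have i0 := inv_eq_of_mul_eq_one_left h0
  have i1 := inv_eq_of_mul_eq_one_left h1
  have i2 := inv_eq_of_mul_eq_one_left h2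
  have i3 := inv_eq_of_mul_eq_one_left h3
  have ir := inv_eq_of_mul_eq_one_left hr
  have key : ∀ {a b : G}, b ∈ translations s0 s1 s2 s3 → a = b →
    a ∈ translations s0 s1 s2 s3 := fun hb e => e ▸ hb
  obtain rfl | rfl | rfl | rfl := hs <;> rintro x (rfl | rfl | rfl)
  · rw [i1]; refine key m2 ?_; clear d0 d1 d2 d3; grind (acSteps := 100000)
  · rw [i1]; refine key m1 ?_; clear d0 d1 d2 d3; grind (acSteps := 100000)
  · rw [i1]; refine key m3 ?_; clear d0 d1 d2 d3; grind (acSteps := 100000)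
  · rw [i2]; refine key m1 ?_; clear d0 d1 d2 d3; grind (acSteps := 100000)
  · rw [i2]; refine key m3 ?_; clear d0 d1 d2 d3; grind (acSteps := 100000)
  · rw [i2]; refine key m2 ?_; clear d0 d1 d2 d3; grind (acSteps := 100000)
  · refine key (mul_mem m1 (inv_mem m3)) ?_
    simp only [mul_inv_rev, i0, i1, i2, i3]
    clear d0 d1 d2 d3; grind (acSteps := 100000)
  · refine key (mul_mem m2 (inv_mem m3)) ?_
    simp only [mul_inv_rev, i0, i1, i2, i3]
    clear d0 d1 d2 d3; grind (acSteps := 100000)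
  · refine key (inv_mem m3) ?_
    simp only [mul_inv_rev, i0, i1, i2, i3]
    clear d0 d1 d2 d3; grind (acSteps := 100000)
  · refine key (inv_mem m3) ?_
    simp only [mul_inv_rev, i0, i1, i2, i3, ir]
    clear h0 h1 h2 h3 b01 b12 b23 b30 c02 c13; grind (acSteps := 100000)
  · refine key (inv_mem m2) ?_
    simp only [mul_inv_rev, i0, i1, i2, i3, ir]
    clear h0 h1 h2 h3 b01 b12 b23 b30 c02 c13; grind (acSteps := 100000)
  · refine key (inv_mem m1) ?_
    simp only [mul_inv_rev, i0, i1, i2, i3, ir]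
    clear h0 h1 h2 h3 b01 b12 b23 b30 c02 c13; grind (acSteps := 100000)

theorem exists_s1_mul_word (h : TwistedAffineA3 s0 s1 s2 s3 r)
    (p : Fin 2 × Fin 3 × Fin 4 × Fin 2) : ∃ q, s1 * word s1 s2 s3 r p = word s1 s2 s3 r q := by
  obtain ⟨a, b, c, e⟩ := p
  refine ⟨(1 - a, b, c, e), ?_⟩
  simp only [word, ← mul_assoc (s1)]
  congr 1
  fin_cases a <;> simp [h.sq1]

theorem exists_s2_mul_word (h : TwistedAffineA3 s0 s1 s2 s3 r)
    (p : Fin 2 × Fin 3 × Fin 4 × Fin 2) : ∃ q, s2 * word s1 s2 s3 r p = word s1 s2 s3 r q := by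
  obtain ⟨a, b, c, e⟩ := p
  have hab : ∃ a' b', s2 * (![1, s1] a * ![1, s2, s2 * s1] b) =
      ![1, s1] a' * ![1, s2, s2 * s1] b' := by
    have h1 := h.sq1
    have h2 := h.sq2
    have b12 := h.braid12
    fin_cases a <;> fin_cases b
    · exact ⟨0, 1, by simp⟩
    · exact ⟨0, 0, by simpa⟩
    · exact ⟨1, 0, by simp; grind⟩
    · exact ⟨0, 2, by simp⟩
    · exact ⟨1, 2, by simp; grind⟩
    · exact ⟨1, 1, by simp; grind⟩
  obtain ⟨a', b', hab⟩ := hab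
  refine ⟨(a', b', c, e), ?_⟩
  simp only [word]
  rw [← mul_assoc (![1, s1] a), ← mul_assoc s2, hab, mul_assoc]

theorem exists_s3_mul_word (h : TwistedAffineA3 s0 s1 s2 s3 r)
    (p : Fin 2 × Fin 3 × Fin 4 × Fin 2) : ∃ q, s3 * word s1 s2 s3 r p = word s1 s2 s3 r q := by
  obtain ⟨a, b, c, e⟩ := p
  have hbc : ∃ b' c', s3 * (![1, s2, s2 * s1] b * ![1, s3, s3 * s2, s3 * s2 * s1] c) =
      ![1, s2, s2 * s1] b' * ![1, s3, s3 * s2, s3 * s2 * s1] c' := by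
    obtain ⟨-, h1, h2, h3, -, b12, b23, -, -, c13, -, -, -, -, -⟩ := h
    fin_cases b <;> fin_cases c
    · exact ⟨0, 1, by simp⟩
    · exact ⟨0, 0, by simpa⟩
    · exact ⟨1, 0, by simp; grind⟩
    · exact ⟨2, 0, by simp; grind⟩
    · exact ⟨0, 2, by simp⟩
    · exact ⟨1, 2, by simp; grind⟩
    · exact ⟨1, 1, by simp; grind⟩
    · exact ⟨2, 1, by simp; grind⟩
    · exact ⟨0, 3, by simp; grind⟩
    · exact ⟨1, 3, by simp; grind⟩
    · exact ⟨2, 3, by simp; grind⟩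
    · exact ⟨2, 2, by simp; grind⟩
  have ha : s3 * ![1, s1] a = ![1, s1] a * s3 := by fin_cases a <;> simp [h.comm13]
  obtain ⟨b', c', hbc⟩ := hbc
  refine ⟨(a, b', c', e), ?_⟩
  simp only [word]
  rw [← mul_assoc (![1, s2, s2 * s1] b), ← mul_assoc s3, ha, mul_assoc, ← mul_assoc s3, hbc,
    mul_assoc]

theorem exists_eq_mul_word (h : TwistedAffineA3 s0 s1 s2 s3 r) {x : G}
    (hx : x ∈ Subgroup.closure {s0, r, s2}) :
    ∃ t ∈ translations s0 s1 s2 s3, ∃ p, x = t * word s1 s2 s3 r p := by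
  set N : G → Prop := fun x => ∃ t ∈ translations s0 s1 s2 s3, ∃ p, x = t * word s1 s2 s3 r p
    with hN
  have step : ∀ {s}, (s = s1 ∨ s = s2 ∨ s = s3 ∨ s = r) →
      (∀ p, ∃ q, s * word s1 s2 s3 r p = word s1 s2 s3 r q) → ∀ x, N x → N (s * x) := by
    rintro s hs hw _ ⟨t, ht, p, rfl⟩
    obtain ⟨t', ht', e⟩ := h.exists_mul_eq_mul hs ht
    obtain ⟨q, hq⟩ := hw p
    exact ⟨t', ht', q, by rw [← mul_assoc, e, mul_assoc, hq]⟩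
  have n1 := step (.inl rfl) h.exists_s1_mul_word
  have n2 := step (.inr (.inl rfl)) h.exists_s2_mul_word
  have n3 := step (.inr (.inr (.inl rfl))) h.exists_s3_mul_word
  have nt : ∀ t ∈ translations s0 s1 s2 s3, ∀ x, N x → N (t * x) := by
    rintro t ht _ ⟨t', ht', p, rfl⟩
    exact ⟨t * t', mul_mem ht ht', p, by rw [mul_assoc]⟩
  have n0 : ∀ x, N x → N (s0 * x) := by
    intro x hx
    have := nt (s0 * s1 * s2 * s3 * s2 * s1) (Subgroup.subset_closure (by simp)) _
      (n1 _ (n2 _ (n3 _ (n2 _ (n1 _ hx)))))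
    convert this using 1
    have h1 := h.sq1
    have h2 := h.sq2
    have h3 := h.sq3
    grind
  have base : ∀ e : Fin 2, N (![1, r] e) := fun e =>
    ⟨1, one_mem _, (0, 0, 0, e), by simp [word]⟩
  have nr : ∀ x, N x → N (r * x) := by
    rintro _ ⟨t, ht, ⟨a, b, c, e⟩, rfl⟩
    obtain ⟨t', ht', et⟩ := h.exists_mul_eq_mul (.inr (.inr (.inr rfl))) ht
    rw [← mul_assoc, et, mul_assoc]
    refine nt _ ht' _ ?_
    have d1 : ∀ x, r * (s1 * x) = s2 * (r * x) := fun x => by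
      rw [← mul_assoc, h.twist1, mul_assoc]
    have d2 : ∀ x, r * (s2 * x) = s1 * (r * x) := fun x => by
      rw [← mul_assoc, h.twist2, mul_assoc]
    have d3 : ∀ x, r * (s3 * x) = s0 * (r * x) := fun x => by
      rw [← mul_assoc, h.twist3, mul_assoc]
    have ea : ∀ x, N (r * x) → N (r * (![1, s1] a * x)) := by
      intro x hx
      fin_cases a
      · simpa using hx
      · simpa [d1] using n2 _ hx
    have eb : ∀ x, N (r * x) → N (r * (![1, s2, s2 * s1] b * x)) := by
      intro x hx
      fin_cases b
      · simpa using hx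
      · simpa [d2] using n1 _ hx
      · simpa [d1, d2, mul_assoc] using n1 _ (n2 _ hx)
    have ec : ∀ x, N (r * x) → N (r * (![1, s3, s3 * s2, s3 * s2 * s1] c * x)) := by
      intro x hx
      fin_cases c
      · simpa using hx
      · simpa [d3] using n0 _ hx
      · simpa [d2, d3, mul_assoc] using n0 _ (n1 _ hx)
      · simpa [d1, d2, d3, mul_assoc] using n0 _ (n1 _ (n2 _ hx))
    refine ea _ (eb _ (ec _ ?_))
    fin_cases e
    · simpa using base 1
    · simpa [h.sqr] using base 0
  change N x
  have hinv : ∀ s ∈ ({s0, r, s2} : Set G), s⁻¹ = s ∧ ∀ x, N x → N (s * x) := by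
    rintro s (rfl | rfl | rfl)
    · exact ⟨inv_eq_of_mul_eq_one_left h.sq0, n0⟩
    · exact ⟨inv_eq_of_mul_eq_one_left h.sqr, nr⟩
    · exact ⟨inv_eq_of_mul_eq_one_left h.sq2, n2⟩
  induction hx using Subgroup.closure_induction_left with
  | one => exact base 0
  | mul_left x hx y _ hy => exact (hinv x hx).2 y hy
  | inv_mul_cancel x hx y _ hy => exact (hinv x hx).1.symm ▸ (hinv x hx).2 y hy

end TwistedAffineA3

/-- The relations of `H_m`, for elements of an arbitrary group. -/
structure Relations {G : Type*} [Group G] (m : ℕ) (a r b : G) : Prop where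
  sqa : a ^ 2 = 1
  sqr : r ^ 2 = 1
  sqb : b ^ 2 = 1
  ar : (a * r) ^ 6 = 1
  rb : (r * b) ^ 6 = 1
  ab : (a * b) ^ 2 = 1
  hole : (b * r * a * r) ^ 3 = 1
  trans : ((r * b) ^ 3 * (a * r) ^ 3) ^ (2 * m) = 1

theorem relations_g (m : ℕ) : Relations m (g m 0) (g m 1) (g m 2) := by
  have key : ∀ x ∈ rels m, PresentedGroup.mk (rels m) x = 1 := fun x hx =>
    PresentedGroup.one_of_mem hx
  simp only [rels, Set.mem_insert_iff, Set.mem_singleton_iff, forall_eq_or_imp, forall_eq] at key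
  obtain ⟨h1, h2, h3, h4, h5, h6, h7, -, h9, -⟩ := key
  refine ⟨h1, h2, h3, h4, h5, h6, h7, ?_⟩
  replace h9 : g m 2 * ((g m 1 * g m 2) ^ 3 * (g m 0 * g m 1) ^ 3) ^ (2 * m) * g m 2 = 1 := h9
  replace h3 : g m 2 ^ 2 = 1 := h3
  generalize ((g m 1 * g m 2) ^ 3 * (g m 0 * g m 1) ^ 3) ^ (2 * m) = w at *
  rw [pow_two] at h3
  grind

theorem Relations.twistedAffineA3 {G : Type*} [Group G] {m : ℕ} {a r b : G}
    (h : Relations m a r b) : TwistedAffineA3 a (r * b * r) b (r * a * r) r := by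
  obtain ⟨ha, hr, hb, har, hrb, hab, hh, -⟩ := h
  simp only [pow_succ, pow_zero, one_mul] at ha hr hb har hrb hab hh
  constructor
  · exact ha
  · clear har hrb hab hh; grind
  · exact hb
  · clear har hrb hab hh; grind
  · clear har hrb hab; grind
  · clear har hab hh; grind
  · clear har hrb hab; grind
  · clear hrb hab hh; grind
  · clear har hrb hh; grind
  · clear har hrb hh; grind
  · exact hr
  all_goals clear har hrb hab hh; grind

theorem Relations.translation_pow {G : Type*} [Group G] {m : ℕ} {a r b : G}
    (h : Relations m a r b) :
    (a * (r * b * r) * b * (r * a * r) * b * (r * b * r)) ^ (2 * m) = 1 ∧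
    ((r * b * r) * a * (r * b * r) * b * (r * a * r) * b) ^ (2 * m) = 1 ∧
    (b * (r * b * r) * a * (r * b * r) * b * (r * a * r)) ^ (2 * m) = 1 := by
  obtain ⟨h0, h1, h2, h3, b01, b12, b23, b30, c02, c13, hr, d0, d1, d2, d3⟩ := h.twistedAffineA3
  have ht := h.trans
  have e : (r * b) ^ 3 * (a * r) ^ 3 =
      (r * b * r) * b * (r * b * r) * ((r * a * r) * a * (r * a * r)) := by
    clear h0 h1 h2 h3 b01 b12 b23 b30 c02 c13 d0 d1 d2 d3 ht
    simp only [pow_succ, pow_zero, one_mul]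
    grind
  rw [e] at ht
  clear e
  generalize r * b * r = s1 at *
  generalize r * a * r = s3 at *
  have i1 := inv_eq_of_mul_eq_one_left h1
  have i2 := inv_eq_of_mul_eq_one_left h2
  have i3 := inv_eq_of_mul_eq_one_left h3
  have p1 : (a * s1 * b * s3 * b * s1) ^ (2 * m) = 1 := by
    have e : (a * s1 * b * s3 * b * s1) = s3 * (s1 * b * s1 * (s3 * a * s3))⁻¹ * s3⁻¹ := by
      simp only [mul_inv_rev, i1, i2, i3, inv_eq_of_mul_eq_one_left h0]
      clear d0 d1 d2 d3 ht
      grind (acSteps := 100000)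
    rw [e, conj_pow, inv_pow, ht]
    simp
  have p2 : (s1 * a * s1 * b * s3 * b) ^ (2 * m) = 1 := by
    have e : s1 * a * s1 * b * s3 * b = s1 * (a * s1 * b * s3 * b * s1) * s1⁻¹ := by
      group
    rw [e, conj_pow, p1]
    simp
  have p3 : (b * s1 * a * s1 * b * s3) ^ (2 * m) = 1 := by
    have e : b * s1 * a * s1 * b * s3 = b * (s1 * a * s1 * b * s3 * b) * b⁻¹ := by
      group
    rw [e, conj_pow, p2]
    simp
  exact ⟨p1, p2, p3⟩

/-- The homomorphism from `H_m` given by a triple of elements satisfying the relations. -/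
def lift {G : Type*} [Group G] {m : ℕ} {a r b : G} (h : Relations m a r b) :
    PresentedGroup (rels m) →* G :=
  PresentedGroup.toGroup (f := ![a, r, b]) <| by
    have ha : a * a = 1 := pow_two a ▸ h.sqa
    have hr : r * r = 1 := pow_two r ▸ h.sqr
    have hb : b * b = 1 := pow_two b ▸ h.sqb
    simp [rels, r0, r1, r2, h.sqa, h.sqr, h.sqb, h.ar, h.rb, h.ab, h.hole, h.trans, hb]
    grind

@[simp]
theorem lift_g0 {G : Type*} [Group G] {m : ℕ} {a r b : G} (h : Relations m a r b) :
    lift h (g m 0) = a :=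
  PresentedGroup.toGroup.of _

@[simp]
theorem lift_g1 {G : Type*} [Group G] {m : ℕ} {a r b : G} (h : Relations m a r b) :
    lift h (g m 1) = r :=
  PresentedGroup.toGroup.of _

@[simp]
theorem lift_g2 {G : Type*} [Group G] {m : ℕ} {a r b : G} (h : Relations m a r b) :
    lift h (g m 2) = b :=
  PresentedGroup.toGroup.of _

open Equiv

/-- The images of the generators in the point group `S₄ × {±1}`. -/
theorem relations_linear (m : ℕ) : Relations (G := Perm (Fin 4) × ℤˣ) m
    (swap 0 3, 1) (swap 0 2, -1) (swap 1 2, 1) where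
  sqa := by decide
  sqr := by decide
  sqb := by decide
  ar := by decide +kernel
  rb := by decide +kernel
  ab := by decide
  hole := by decide +kernel
  trans := by
    rw [show ((((swap 0 2, -1) : Perm (Fin 4) × ℤˣ) * (swap 1 2, 1)) ^ 3 *
      ((swap 0 3, 1) * (swap 0 2, -1)) ^ 3) = 1 by decide +kernel, one_pow]

theorem word_linear_injective : Function.Injective
    (word ((swap 0 2, -1) * (swap 1 2, 1) * (swap 0 2, -1) : Perm (Fin 4) × ℤˣ) (swap 1 2, 1)
      ((swap 0 2, -1) * (swap 0 3, 1) * (swap 0 2, -1)) (swap 0 2, -1)) := by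
  unfold Function.Injective
  decide +kernel

/-- The images of the generators in a quotient of order `192` acting on eight points. -/
theorem relations_eight (m : ℕ) : Relations (G := Perm (Fin 8)) m
    (swap 0 6 * swap 2 4) (swap 0 1 * swap 2 6 * swap 3 7 * swap 4 5) (swap 2 4 * swap 3 5) where
  sqa := by decide
  sqr := by decide
  sqb := by decide
  ar := by decide +kernel
  rb := by decide +kernel
  ab := by decide
  hole := by decide +kernel
  trans := by
    rw [pow_mul, show (((swap 0 1 * swap 2 6 * swap 3 7 * swap 4 5) *
      (swap 2 4 * swap 3 5)) ^ 3 * ((swap 0 6 * swap 2 4 : Perm (Fin 8)) *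
      (swap 0 1 * swap 2 6 * swap 3 7 * swap 4 5)) ^ 3) ^ 2 = 1 by decide +kernel, one_pow]

theorem isSolvable_perm_fin_four : Group.IsSolvable (Perm (Fin 4)) := by
  let K : Subgroup (Perm (Fin 4)) :=
    { carrier := {x | x * x = 1 ∧ Perm.sign x = 1}
      one_mem' := by simp
      mul_mem' := by simp only [Set.mem_ofPred_eq]; decide +kernel
      inv_mem' := by simp only [Set.mem_ofPred_eq]; decide +kernel }
  have h1 : derivedSeries (Perm (Fin 4)) 1 ≤ Perm.sign.ker := by
    rw [derivedSeries_one]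
    exact Abelianization.commutator_subset_ker _
  have h2 : derivedSeries (Perm (Fin 4)) 2 ≤ K := by
    rw [derivedSeries_succ]
    refine (Subgroup.commutator_mono h1 h1).trans (Subgroup.commutator_le.2 ?_)
    change ∀ x, Perm.sign x = 1 → ∀ y, Perm.sign y = 1 →
      (x * y * x⁻¹ * y⁻¹) * (x * y * x⁻¹ * y⁻¹) = 1 ∧ Perm.sign (x * y * x⁻¹ * y⁻¹) = 1
    decide +kernel
  refine ⟨3, eq_bot_iff.2 ?_⟩
  rw [derivedSeries_succ]
  refine (Subgroup.commutator_mono h2 h2).trans (Subgroup.commutator_le.2 ?_)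
  change ∀ x, x * x = 1 ∧ Perm.sign x = 1 → ∀ y, y * y = 1 ∧ Perm.sign y = 1 →
    x * y * x⁻¹ * y⁻¹ = 1
  decide +kernel

/-- The affine reflection `x ↦ (x₃ + 1, x₁, x₂, x₀ - 1)`. -/
def affine0 (R : Type*) [CommRing R] : Perm (R × R × R × R) :=
  Function.Involutive.toPerm (fun x => (x.2.2.2 + 1, x.2.1, x.2.2.1, x.1 - 1))
    fun x => by simp

/-- The affine map `x ↦ (-x₂, -x₁, -x₀, -x₃ - 1)`. -/
def affine1 (R : Type*) [CommRing R] : Perm (R × R × R × R) :=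
  Function.Involutive.toPerm (fun x => (-x.2.2.1, -x.2.1, -x.1, -x.2.2.2 - 1))
    fun x => by simp

/-- The reflection `x ↦ (x₀, x₂, x₁, x₃)`. -/
def affine2 (R : Type*) : Perm (R × R × R × R) :=
  Function.Involutive.toPerm (fun x => (x.1, x.2.2.1, x.2.1, x.2.2.2)) fun x => by simp

@[simp]
theorem affine0_apply {R : Type*} [CommRing R] (x : R × R × R × R) :
    affine0 R x = (x.2.2.2 + 1, x.2.1, x.2.2.1, x.1 - 1) := rfl

@[simp]
theorem affine1_apply {R : Type*} [CommRing R] (x : R × R × R × R) :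
    affine1 R x = (-x.2.2.1, -x.2.1, -x.1, -x.2.2.2 - 1) := rfl

@[simp]
theorem affine2_apply {R : Type*} (x : R × R × R × R) :
    affine2 R x = (x.1, x.2.2.1, x.2.1, x.2.2.2) := rfl

theorem perm_pow_apply_eq_add {V : Type*} [AddCommGroup V] {f : Perm V} {v : V}
    (h : ∀ x, f x = x + v) (k : ℕ) (x : V) : (f ^ k) x = x + k • v := by
  induction k with
  | zero => simp
  | succ k ih => rw [pow_succ', Perm.mul_apply, ih, h, succ_nsmul, add_assoc]

theorem relations_affine (m : ℕ) : Relations m (affine0 (ZMod (2 * m))) (affine1 (ZMod (2 * m)))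
    (affine2 (ZMod (2 * m))) where
  sqa := by ext1 x; simp [pow_succ]
  sqr := by ext1 x; simp [pow_succ]
  sqb := by ext1 x; simp [pow_succ]
  ar := by ext1 x; simp [pow_succ]
  rb := by ext1 x; simp [pow_succ]
  ab := by ext1 x; simp [pow_succ]
  hole := by ext1 x; simp [pow_succ]
  trans := by
    ext1 x
    rw [perm_pow_apply_eq_add (v := (-1, 0, 1, 0))]
    · have h : ((2 * m : ℕ) : ZMod (2 * m)) = 0 := ZMod.natCast_self _
      simp only [Prod.smul_mk, nsmul_eq_mul, h]
      simp
    · intro x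
      simp [pow_succ, Prod.ext_iff]
      ring

theorem exists_fin_zpow_eq_pow {G : Type*} [Group G] {x : G} {n : ℕ} [NeZero n] (hx : x ^ n = 1)
    (i : ℤ) : ∃ j : Fin n, x ^ i = x ^ (j : ℕ) := by
  have hn : (0 : ℤ) < n := by exact_mod_cast Nat.pos_of_neZero n
  have h0 := Int.emod_nonneg i hn.ne'
  have h1 := Int.emod_lt_of_pos i hn
  refine ⟨⟨(i % n).toNat, by omega⟩, ?_⟩
  change x ^ i = x ^ (i % n).toNat
  rw [← zpow_natCast, Int.toNat_of_nonneg h0]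
  conv_lhs => rw [← Int.emod_add_mul_ediv i n, zpow_add, zpow_mul, zpow_natCast, hx, one_zpow,
    mul_one]

/-- Elements of a dihedral group in normal form. -/
theorem exists_eq_of_mem_closure_pair {G : Type*} [Group G] {a b : G} {n : ℕ} [NeZero n]
    (ha : a ^ 2 = 1) (hb : b ^ 2 = 1) (hab : (a * b) ^ n = 1) {x : G}
    (hx : x ∈ Subgroup.closure {a, b}) : ∃ i : Fin n, ∃ e : Fin 2,
      x = (a * b) ^ (i : ℕ) * a ^ (e : ℕ) := by
  have ha' : a⁻¹ = a := inv_eq_of_mul_eq_one_left (pow_two a ▸ ha)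
  have hb' : b⁻¹ = b := inv_eq_of_mul_eq_one_left (pow_two b ▸ hb)
  suffices H : ∃ i : ℤ, ∃ e : Fin 2, x = (a * b) ^ i * a ^ (e : ℕ) by
    obtain ⟨i, e, rfl⟩ := H
    obtain ⟨j, hj⟩ := exists_fin_zpow_eq_pow hab i
    exact ⟨j, e, by rw [hj]⟩
  have hla : ∀ y, (∃ i : ℤ, ∃ e : Fin 2, y = (a * b) ^ i * a ^ (e : ℕ)) →
      ∃ i : ℤ, ∃ e : Fin 2, a * y = (a * b) ^ i * a ^ (e : ℕ) := by
    rintro _ ⟨i, e, rfl⟩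
    have hs : SemiconjBy a (a * b) (a * b)⁻¹ := by
      rw [SemiconjBy, mul_inv_rev, ha', hb', ← mul_assoc, ← pow_two, ha, mul_assoc, ← pow_two, ha]
      simp
    refine ⟨-i, 1 - e, ?_⟩
    rw [← mul_assoc, (hs.zpow_right i).eq, inv_zpow', mul_assoc]
    fin_cases e
    · simp
    · simp [← pow_two, ha]
  have hlb : ∀ y, (∃ i : ℤ, ∃ e : Fin 2, y = (a * b) ^ i * a ^ (e : ℕ)) →
      ∃ i : ℤ, ∃ e : Fin 2, b * y = (a * b) ^ i * a ^ (e : ℕ) := by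
    rintro _ ⟨i, e, rfl⟩
    obtain ⟨j, e', h⟩ := hla ((a * b) ^ (1 + i) * a ^ (e : ℕ)) ⟨_, _, rfl⟩
    refine ⟨j, e', ?_⟩
    rw [← h, zpow_add, zpow_one]
    simp only [← mul_assoc]
    rw [← pow_two, ha, one_mul]
  induction hx using Subgroup.closure_induction_left with
  | one => exact ⟨0, 0, by simp⟩
  | mul_left x hx y _ hy =>
    obtain rfl | rfl := hx
    exacts [hla y hy, hlb y hy]
  | inv_mul_cancel x hx y _ hy =>
    obtain rfl | rfl := hx
    exacts [ha'.symm ▸ hla y hy, hb'.symm ▸ hlb y hy]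

/-- Two dihedral subgroups sharing a generator meet in the subgroup of that generator if this
holds in a quotient which does not collapse the first one. -/
theorem closure_pair_inf_closure_pair_le {G K : Type*} [Group G] [Group K] (f : G →* K)
    {a b c : G} {n k : ℕ} [NeZero n] [NeZero k] (ha : a ^ 2 = 1) (hb : b ^ 2 = 1) (hc : c ^ 2 = 1)
    (hab : (a * b) ^ n = 1) (hac : (a * c) ^ k = 1)
    (h : ∀ (i : Fin n) (e : Fin 2) (j : Fin k) (e' : Fin 2),
      (f a * f b) ^ (i : ℕ) * f a ^ (e : ℕ) = (f a * f c) ^ (j : ℕ) * f a ^ (e' : ℕ) → i = 0) :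
    Subgroup.closure {a, b} ⊓ Subgroup.closure {a, c} ≤ Subgroup.closure {a} := by
  rintro x ⟨hx, hx'⟩
  obtain ⟨i, e, rfl⟩ := exists_eq_of_mem_closure_pair ha hb hab hx
  obtain ⟨j, e', hj⟩ := exists_eq_of_mem_closure_pair ha hc hac hx'
  obtain rfl := h i e j e' (by simpa using congrArg f hj)
  simpa using pow_mem (Subgroup.mem_closure_singleton_self a) _

theorem interProp_of_maximal {G : Type*} [Group G] {a b c : G}
    (hgen : Subgroup.closure {a, b, c} = ⊤)
    (ha : Subgroup.closure {a, b} ⊓ Subgroup.closure {a, c} ≤ Subgroup.closure {a})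
    (hb : Subgroup.closure {b, a} ⊓ Subgroup.closure {b, c} ≤ Subgroup.closure {b})
    (hc : Subgroup.closure {c, a} ⊓ Subgroup.closure {c, b} ≤ Subgroup.closure {c})
    (hab : Subgroup.closure {a} ⊓ Subgroup.closure {b} ≤ ⊥) : InterProp ![a, b, c] := by
  set F : Fin 3 → Subgroup G := fun i => Subgroup.closure (![a, b, c] '' {i}ᶜ) with hF
  have key : ∀ I : Set (Fin 3), Subgroup.closure (![a, b, c] '' I) = ⨅ i ∈ Iᶜ, F i := by
    intro I
    refine le_antisymm (le_iInf₂ fun i hi => Subgroup.closure_mono (Set.image_mono ?_)) ?_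
    · simpa using hi
    have c0 : ({0}ᶜ : Set (Fin 3)) = {1, 2} := by ext i; fin_cases i <;> simp
    have c1 : ({1}ᶜ : Set (Fin 3)) = {0, 2} := by ext i; fin_cases i <;> simp
    have c2 : ({2}ᶜ : Set (Fin 3)) = {0, 1} := by ext i; fin_cases i <;> simp
    have f0 : F 0 = Subgroup.closure {b, c} := by simp [hF, c0, Set.image_pair]
    have f1 : F 1 = Subgroup.closure {a, c} := by simp [hF, c1, Set.image_pair]
    have f2 : F 2 = Subgroup.closure {a, b} := by simp [hF, c2, Set.image_pair]
    rw [Set.pair_comm b a] at hb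
    rw [Set.pair_comm c a, Set.pair_comm c b] at hc
    rw [← f1, ← f2] at ha
    rw [← f0, ← f2] at hb
    rw [← f0, ← f1] at hc
    intro x hx
    simp only [Subgroup.mem_iInf, Set.mem_compl_iff] at hx
    have sub : ∀ J ⊆ I, x ∈ Subgroup.closure (![a, b, c] '' J) →
      x ∈ Subgroup.closure (![a, b, c] '' I) :=
      fun J hJ h => Subgroup.closure_mono (Set.image_mono hJ) h
    have mcl : ∀ i, x ∈ F i → {i}ᶜ ⊆ I → x ∈ Subgroup.closure (![a, b, c] '' I) :=
      fun i hi hI => sub _ hI hi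
    by_cases i0 : 0 ∈ I <;> by_cases i1 : 1 ∈ I <;> by_cases i2 : 2 ∈ I
    · refine sub {0, 1, 2} (by simp [Set.insert_subset_iff, *]) ?_
      simp [Set.image_insert_eq, hgen]
    · exact mcl 2 (hx 2 i2) (by simp [Set.insert_subset_iff, *])
    · exact mcl 1 (hx 1 i1) (by simp [Set.insert_subset_iff, *])
    · exact sub {0} (by simpa) (by simpa using ha ⟨hx 2 i2, hx 1 i1⟩)
    · exact mcl 0 (hx 0 i0) (by simp [Set.insert_subset_iff, *])
    · exact sub {1} (by simpa) (by simpa using hb ⟨hx 2 i2, hx 0 i0⟩)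
    · exact sub {2} (by simpa) (by simpa using hc ⟨hx 1 i1, hx 0 i0⟩)
    · have := hab ⟨ha ⟨hx 2 i2, hx 1 i1⟩, hb ⟨hx 2 i2, hx 0 i0⟩⟩
      rw [Subgroup.mem_bot] at this
      exact this ▸ one_mem _
  intro I J
  rw [key, key, key, Set.compl_inter]
  ext x
  simp [Subgroup.mem_iInf, or_imp, forall_and]

theorem closure_singleton_inf_closure_singleton_le {G : Type*} [Group G] {a b : G}
    (ha : a ^ 2 = 1) (hb : b ^ 2 = 1) (hab : a ≠ b) :
    Subgroup.closure {a} ⊓ Subgroup.closure {b} ≤ ⊥ := by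
  rintro x ⟨hx, hx'⟩
  rw [Subgroup.mem_bot]
  have key : ∀ {y : G}, y ^ 2 = 1 → x ∈ Subgroup.closure {y} → x = 1 ∨ x = y := by
    intro y hy hx
    obtain ⟨k, rfl⟩ := Subgroup.mem_closure_singleton.1 hx
    have hy' : y ^ (2 : ℤ) = 1 := by exact_mod_cast hy
    obtain ⟨l, rfl | rfl⟩ := Int.even_or_odd' k
    · left; rw [zpow_mul, hy', one_zpow]
    · right; rw [zpow_add, zpow_mul, hy', one_zpow, one_mul, zpow_one]
  obtain h | h := key ha hx
  · exact h
  · obtain h' | h' := key hb hx'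
    · exact h'
    · exact absurd (h.symm.trans h') hab

theorem mul_pow_eq_one_comm {G : Type*} [Group G] {a b : G} {n : ℕ} (h : (a * b) ^ n = 1) :
    (b * a) ^ n = 1 := by
  rw [show b * a = b * (a * b) * b⁻¹ by group, conj_pow, h]
  simp

theorem closure_g (m : ℕ) : Subgroup.closure {g m 0, g m 1, g m 2} = ⊤ := by
  rw [← PresentedGroup.closure_range_of (rels m)]
  congr 1
  ext x
  simp [Fin.exists_fin_succ, g, eq_comm]

theorem interProp_g (m : ℕ) : InterProp ![g m 0, g m 1, g m 2] := by
  have h := relations_g m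
  refine interProp_of_maximal (closure_g m)
    (closure_pair_inf_closure_pair_le (n := 6) (k := 2) (lift (relations_eight m)) h.sqa h.sqr
      h.sqb h.ar h.ab ?_)
    (closure_pair_inf_closure_pair_le (n := 6) (k := 6) (lift (relations_eight m)) h.sqr h.sqa
      h.sqb (mul_pow_eq_one_comm h.ar) h.rb ?_)
    (closure_pair_inf_closure_pair_le (n := 2) (k := 6) (lift (relations_eight m)) h.sqb h.sqa
      h.sqr (mul_pow_eq_one_comm h.ab) (mul_pow_eq_one_comm h.rb) ?_)
    (closure_singleton_inf_closure_singleton_le h.sqa h.sqr ?_)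
  · simp only [lift_g0, lift_g1, lift_g2]
    decide +kernel
  · simp only [lift_g0, lift_g1, lift_g2]
    decide +kernel
  · simp only [lift_g0, lift_g1, lift_g2]
    decide +kernel
  · refine fun e => absurd (congrArg (lift (relations_eight m)) e) ?_
    simp only [lift_g0, lift_g1]
    decide

theorem translations_le_ker_linear (m : ℕ) :
    translations (g m 0) (g m 1 * g m 2 * g m 1) (g m 2) (g m 1 * g m 0 * g m 1) ≤
      (lift (relations_linear m)).ker := by
  rw [translations, Subgroup.closure_le]
  rintro x (rfl | rfl | rfl) <;>
  · simp only [SetLike.mem_coe, MonoidHom.mem_ker, map_mul, lift_g0, lift_g1, lift_g2]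
    decide +kernel

theorem exists_eq_translation_mul_word (m : ℕ) (x : PresentedGroup (rels m)) :
    ∃ t ∈ translations (g m 0) (g m 1 * g m 2 * g m 1) (g m 2) (g m 1 * g m 0 * g m 1),
      ∃ p, x = t * word (g m 1 * g m 2 * g m 1) (g m 2) (g m 1 * g m 0 * g m 1) (g m 1) p :=
  (relations_g m).twistedAffineA3.exists_eq_mul_word (closure_g m ▸ Subgroup.mem_top x)

theorem lift_linear_word_injective (m : ℕ) : Function.Injective fun p =>
    lift (relations_linear m)
      (word (g m 1 * g m 2 * g m 1) (g m 2) (g m 1 * g m 0 * g m 1) (g m 1) p) := by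
  simpa only [map_word, map_mul, lift_g0, lift_g1, lift_g2] using word_linear_injective

theorem ker_linear_le_translations (m : ℕ) : (lift (relations_linear m)).ker ≤
    translations (g m 0) (g m 1 * g m 2 * g m 1) (g m 2) (g m 1 * g m 0 * g m 1) := by
  intro x hx
  obtain ⟨t, ht, p, rfl⟩ := exists_eq_translation_mul_word m x
  rw [MonoidHom.mem_ker, map_mul, translations_le_ker_linear m ht, one_mul] at hx
  have hp : p = (0, 0, 0, 0) := lift_linear_word_injective m (by simpa [word] using hx)
  simpa [hp, word] using ht

theorem isSolvable_presentedGroup (m : ℕ) : Group.IsSolvable (PresentedGroup (rels m)) := by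
  have := isSolvable_perm_fin_four
  have : Group.IsSolvable
      (translations (g m 0) (g m 1 * g m 2 * g m 1) (g m 2) (g m 1 * g m 0 * g m 1)) :=
    Group.isSolvable_of_comm fun a b => Subtype.ext
      ((relations_g m).twistedAffineA3.commute_of_mem_translations a.2 b.2)
  exact Group.isSolvable_of_ker_le_range (Subgroup.subtype _) (lift (relations_linear m))
    (by simpa using ker_linear_le_translations m)

/-- The action of products of the basic translations on the origin. -/
theorem lift_affine_translation (m i j k : ℕ) : lift (relations_affine m)
    ((g m 0 * (g m 1 * g m 2 * g m 1) * g m 2 * (g m 1 * g m 0 * g m 1) * g m 2 *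
        (g m 1 * g m 2 * g m 1)) ^ i *
      (((g m 1 * g m 2 * g m 1) * g m 0 * (g m 1 * g m 2 * g m 1) * g m 2 *
        (g m 1 * g m 0 * g m 1) * g m 2) ^ j *
      (g m 2 * (g m 1 * g m 2 * g m 1) * g m 0 * (g m 1 * g m 2 * g m 1) * g m 2 *
        (g m 1 * g m 0 * g m 1)) ^ k)) 0 =
    ((i : ZMod (2 * m)), (j : ZMod (2 * m)), (k : ZMod (2 * m)), -(i + j + k : ZMod (2 * m))) := by
  simp only [map_mul, map_pow, lift_g0, lift_g1, lift_g2]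
  rw [Perm.mul_apply, Perm.mul_apply, perm_pow_apply_eq_add (v := (1, 0, 0, -1)),
    perm_pow_apply_eq_add (v := (0, 1, 0, -1)), perm_pow_apply_eq_add (v := (0, 0, 1, -1))]
  · simp
    ring
  all_goals
    intro x
    simp [Prod.ext_iff, sub_eq_add_neg]

theorem card_presentedGroup (m : ℕ) (hm : 0 < m) :
    Nat.card (PresentedGroup (rels m)) = 384 * m ^ 3 := by
  have : NeZero (2 * m) := ⟨by omega⟩
  have h := (relations_g m).twistedAffineA3
  obtain ⟨p1, p2, p3⟩ := (relations_g m).translation_pow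
  have hα := lift_affine_translation m
  have hmem : ∀ i j k : ℕ, _ ∈
      translations (g m 0) (g m 1 * g m 2 * g m 1) (g m 2) (g m 1 * g m 0 * g m 1) :=
    fun i j k => mul_mem (pow_mem (Subgroup.subset_closure (.inl rfl)) i)
      (mul_mem (pow_mem (Subgroup.subset_closure (.inr (.inl rfl))) j)
        (pow_mem (Subgroup.subset_closure (.inr (.inr rfl))) k))
  have hz := fun x => h.exists_eq_zpow (x := x)
  generalize g m 0 * (g m 1 * g m 2 * g m 1) * g m 2 * (g m 1 * g m 0 * g m 1) * g m 2 *
        (g m 1 * g m 2 * g m 1) = t1 at *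
  generalize (g m 1 * g m 2 * g m 1) * g m 0 * (g m 1 * g m 2 * g m 1) * g m 2 *
        (g m 1 * g m 0 * g m 1) * g m 2 = t2 at *
  generalize g m 2 * (g m 1 * g m 2 * g m 1) * g m 0 * (g m 1 * g m 2 * g m 1) * g m 2 *
        (g m 1 * g m 0 * g m 1) = t3 at *
  let F : (Fin (2 * m) × Fin (2 * m) × Fin (2 * m)) × (Fin 2 × Fin 3 × Fin 4 × Fin 2) →
      PresentedGroup (rels m) := fun q =>
    t1 ^ (q.1.1 : ℕ) * (t2 ^ (q.1.2.1 : ℕ) * t3 ^ (q.1.2.2 : ℕ)) *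
      word (g m 1 * g m 2 * g m 1) (g m 2) (g m 1 * g m 0 * g m 1) (g m 1) q.2
  have hF : Function.Bijective F := by
    constructor
    · rintro ⟨⟨i, j, k⟩, p⟩ ⟨⟨i', j', k'⟩, p'⟩ e
      have hp : p = p' := by
        refine lift_linear_word_injective m ?_
        have := congrArg (lift (relations_linear m)) e
        simpa only [F, map_mul _ (_ * _) (word _ _ _ _ _),
          MonoidHom.mem_ker.1 (translations_le_ker_linear m (hmem _ _ _)), one_mul] using this
      subst hp
      have e' := congrArg (fun y => lift (relations_affine m) y 0) (mul_right_cancel e)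
      have cast_inj : ∀ a b : Fin (2 * m), ((a : ℕ) : ZMod (2 * m)) = (b : ℕ) → a = b := by
        intro a b hab
        rw [ZMod.natCast_eq_natCast_iff', Nat.mod_eq_of_lt a.2, Nat.mod_eq_of_lt b.2] at hab
        exact Fin.ext hab
      simp only [hα, Prod.mk.injEq] at e'
      rw [cast_inj _ _ e'.1, cast_inj _ _ e'.2.1, cast_inj _ _ e'.2.2.1]
    · intro x
      obtain ⟨t, ht, p, rfl⟩ := exists_eq_translation_mul_word m x
      obtain ⟨i, j, k, rfl⟩ := hz t ht
      obtain ⟨i', hi⟩ := exists_fin_zpow_eq_pow p1 i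
      obtain ⟨j', hj⟩ := exists_fin_zpow_eq_pow p2 j
      obtain ⟨k', hk⟩ := exists_fin_zpow_eq_pow p3 k
      exact ⟨((i', j', k'), p), by rw [hi, hj, hk]⟩
  rw [← Nat.card_eq_of_bijective F hF]
  simp only [Nat.card_eq_fintype_card, Fintype.card_prod, Fintype.card_fin]
  ring

theorem orderOf_eq_two_of_map_ne_one {G K : Type*} [Group G] [Group K] (f : G →* K) {x : G}
    (h : x ^ 2 = 1) (hx : f x ≠ 1) : orderOf x = 2 :=
  orderOf_eq_prime h fun e => hx (by rw [e, map_one])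

theorem orderOf_eq_six_of_map_ne_one {G K : Type*} [Group G] [Group K] (f : G →* K) {x : G}
    (h : x ^ 6 = 1) (h2 : f x ^ 2 ≠ 1) (h3 : f x ^ 3 ≠ 1) : orderOf x = 6 := by
  have hd := orderOf_dvd_of_pow_eq_one h
  have n2 : ¬ orderOf x ∣ 2 := fun e =>
    h2 (by rw [← map_pow, orderOf_dvd_iff_pow_eq_one.1 e, map_one])
  have n3 : ¬ orderOf x ∣ 3 := fun e =>
    h3 (by rw [← map_pow, orderOf_dvd_iff_pow_eq_one.1 e, map_one])
  have hle := Nat.le_of_dvd (by norm_num) hd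
  generalize orderOf x = n at *
  interval_cases n <;> omega

/-- Theorem 5.1, family `H_m`: a solvable string C-group of type `{6,6}`
of order `384 m^3`. -/
theorem stmt_13 (m : ℕ) (hm : 0 < m) :
    Nat.card (PresentedGroup (rels m)) = 384 * m ^ 3 ∧
    IsSolvable (PresentedGroup (rels m)) ∧
    orderOf (g m 0) = 2 ∧ orderOf (g m 1) = 2 ∧ orderOf (g m 2) = 2 ∧
    orderOf (g m 0 * g m 2) = 2 ∧
    orderOf (g m 0 * g m 1) = 6 ∧ orderOf (g m 1 * g m 2) = 6 ∧
    InterProp ![g m 0, g m 1, g m 2] := by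
  have h := relations_g m
  let f := lift (relations_linear m)
  refine ⟨card_presentedGroup m hm, isSolvable_presentedGroup m,
    orderOf_eq_two_of_map_ne_one f h.sqa ?_, orderOf_eq_two_of_map_ne_one f h.sqr ?_,
    orderOf_eq_two_of_map_ne_one f h.sqb ?_, orderOf_eq_two_of_map_ne_one f h.ab ?_,
    orderOf_eq_six_of_map_ne_one f h.ar ?_ ?_, orderOf_eq_six_of_map_ne_one f h.rb ?_ ?_,
    interProp_g m⟩ <;>
  · simp only [f, map_mul, lift_g0, lift_g1, lift_g2]
    decide +kernel

end Stmt13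
end

section
/- For every positive integer m, let I_m be the presented group on generators ρ0, ρ1, ρ2 with relation set {ρ0^2, ρ1^2, ρ2^2, (ρ0ρ1)^6, (ρ1ρ2)^6, (ρ0ρ2)^2, (ρ2ρ1ρ0ρ1)^3, ρ0((ρ0ρ1)^2(ρ2ρ1)^2)^{3m}ρ0, ((ρ1ρ2)^2(ρ1ρ0)^2)^{3m}, ρ2((ρ1ρ0)^2(ρ1ρ2)^2)^{3m}ρ2}. Then I_m has order 768·m^3, I_m is solvable, in I_m the images of ρ0, ρ1, ρ2 and ρ0ρ2 have order exactly 2, the images of ρ0ρ1 and ρ1ρ2 have order exactly 6, and the triple of images of (ρ0, ρ1, ρ2) satisfies the intersection property in I_m. -/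
namespace Stmt14

def r0 : FreeGroup (Fin 3) := FreeGroup.of 0
def r1 : FreeGroup (Fin 3) := FreeGroup.of 1
def r2 : FreeGroup (Fin 3) := FreeGroup.of 2

/-- The relations of the presented group `I_m` of Theorem 5.1. -/
def rels (m : ℕ) : Set (FreeGroup (Fin 3)) :=
  {r0 ^ 2, r1 ^ 2, r2 ^ 2, (r0 * r1) ^ 6, (r1 * r2) ^ 6, (r0 * r2) ^ 2,
   (r2 * r1 * r0 * r1) ^ 3,
   r0 * ((r0 * r1) ^ 2 * (r2 * r1) ^ 2) ^ (3 * m) * r0,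
   ((r1 * r2) ^ 2 * (r1 * r0) ^ 2) ^ (3 * m),
   r2 * ((r1 * r0) ^ 2 * (r1 * r2) ^ 2) ^ (3 * m) * r2}

/-- The image of the `i`-th generator in `I_m`. -/
def g (m : ℕ) (i : Fin 3) : PresentedGroup (rels m) := PresentedGroup.of i

/-- The intersection property for a triple of elements. -/
def InterProp {G : Type*} [Group G] (ρ : Fin 3 → G) : Prop :=
  ∀ I J : Set (Fin 3),
    Subgroup.closure (ρ '' I) ⊓ Subgroup.closure (ρ '' J) =
      Subgroup.closure (ρ '' (I ∩ J))

/-- The triple `(a, b, c)` satisfies the defining relations of `I_m`. -/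
structure Relations {G : Type*} [Group G] (m : ℕ) (a b c : G) : Prop where
  aa : a ^ 2 = 1
  bb : b ^ 2 = 1
  cc : c ^ 2 = 1
  ab : (a * b) ^ 6 = 1
  bc : (b * c) ^ 6 = 1
  ac : (a * c) ^ 2 = 1
  cbab : (c * b * a * b) ^ 3 = 1
  abcb : ((a * b) ^ 2 * (c * b) ^ 2) ^ (3 * m) = 1
  bcba : ((b * c) ^ 2 * (b * a) ^ 2) ^ (3 * m) = 1
  babc : ((b * a) ^ 2 * (b * c) ^ 2) ^ (3 * m) = 1

theorem mul_mul_self_eq_one_iff {G : Type*} [Group G] {a x : G} (ha : a ^ 2 = 1) :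
    a * x * a = 1 ↔ x = 1 := by
  have ha' : a⁻¹ = a := inv_eq_of_mul_eq_one_left (by rw [← sq, ha])
  constructor
  · intro h
    have : x = a⁻¹ * (a * x * a) * a⁻¹ := by group
    rw [this, h, mul_one, ha', ← sq, ha]
  · rintro rfl
    rw [mul_one, ← sq, ha]

theorem relations_g (m : ℕ) : Relations m (g m 0) (g m 1) (g m 2) := by
  have key : ∀ r ∈ rels m, PresentedGroup.mk (rels m) r = 1 := fun r hr =>
    PresentedGroup.one_of_mem hr
  have h0 : (g m 0) ^ 2 = 1 := key (r0 ^ 2) (by simp [rels])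
  have h2 : (g m 2) ^ 2 = 1 := key (r2 ^ 2) (by simp [rels])
  exact
  { aa := h0
    bb := key (r1 ^ 2) (by simp [rels])
    cc := h2
    ab := key ((r0 * r1) ^ 6) (by simp [rels])
    bc := key ((r1 * r2) ^ 6) (by simp [rels])
    ac := key ((r0 * r2) ^ 2) (by simp [rels])
    cbab := key ((r2 * r1 * r0 * r1) ^ 3) (by simp [rels])
    abcb := (mul_mul_self_eq_one_iff h0).1
      (key (r0 * ((r0 * r1) ^ 2 * (r2 * r1) ^ 2) ^ (3 * m) * r0) (by simp [rels]))
    bcba := key (((r1 * r2) ^ 2 * (r1 * r0) ^ 2) ^ (3 * m)) (by simp [rels])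
    babc := (mul_mul_self_eq_one_iff h2).1
      (key (r2 * ((r1 * r0) ^ 2 * (r1 * r2) ^ 2) ^ (3 * m) * r2) (by simp [rels])) }

/-- The homomorphism out of `I_m` defined by a triple satisfying its relations. -/
def Relations.hom {G : Type*} [Group G] {m : ℕ} {a b c : G} (h : Relations m a b c) :
    PresentedGroup (rels m) →* G :=
  PresentedGroup.toGroup (f := ![a, b, c]) (by
    simp only [rels, Set.mem_insert_iff, Set.mem_singleton_iff]
    rintro r (rfl | rfl | rfl | rfl | rfl | rfl | rfl | rfl | rfl | rfl) <;>
      simp only [map_mul, map_pow, r0, r1, r2, FreeGroup.lift_apply_of, Matrix.cons_val]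
    exacts [h.aa, h.bb, h.cc, h.ab, h.bc, h.ac, h.cbab,
      (mul_mul_self_eq_one_iff h.aa).2 h.abcb, h.bcba, (mul_mul_self_eq_one_iff h.cc).2 h.babc])

@[simp] theorem Relations.hom_g0 {G : Type*} [Group G] {m : ℕ} {a b c : G}
    (h : Relations m a b c) : h.hom (g m 0) = a := PresentedGroup.toGroup.of _

@[simp] theorem Relations.hom_g1 {G : Type*} [Group G] {m : ℕ} {a b c : G}
    (h : Relations m a b c) : h.hom (g m 1) = b := PresentedGroup.toGroup.of _

@[simp] theorem Relations.hom_g2 {G : Type*} [Group G] {m : ℕ} {a b c : G}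
    (h : Relations m a b c) : h.hom (g m 2) = c := PresentedGroup.toGroup.of _

theorem closure_g (m : ℕ) : Subgroup.closure {g m 0, g m 1, g m 2} = ⊤ := by
  rw [← PresentedGroup.closure_range_of]
  congr 1
  ext x
  simp [Fin.exists_fin_succ, g, eq_comm]

theorem Relations.of_pow_three {G : Type*} [Group G] {a b c : G} (h : Relations 1 a b c)
    (m : ℕ) : Relations m a b c :=
  { h with
    abcb := by rw [pow_mul]; exact (congrArg (· ^ m) h.abcb).trans (one_pow m)
    bcba := by rw [pow_mul]; exact (congrArg (· ^ m) h.bcba).trans (one_pow m)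
    babc := by rw [pow_mul]; exact (congrArg (· ^ m) h.babc).trans (one_pow m) }

open Equiv in
set_option maxRecDepth 20000 in
/-- The linear parts of the generators, acting on the six signed coordinate axes. -/
theorem relations_axes (m : ℕ) : Relations (G := Perm (Fin 6)) m
    (swap 0 1 * swap 3 4) (swap 0 3 * swap 1 2 * swap 4 5) (swap 0 4 * swap 1 3) :=
  Relations.of_pow_three (by constructor <;> decide) m

open Equiv in
set_option maxRecDepth 20000 in
/-- A quotient of degree eight in which the intersection property is visible. -/
theorem relations_eight (m : ℕ) : Relations (G := Perm (Fin 8)) m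
    (swap 0 3 * swap 1 2 * swap 4 5 * swap 6 7) (swap 0 2 * swap 3 4)
    (swap 0 1 * swap 2 3 * swap 4 6 * swap 5 7) :=
  Relations.of_pow_three (by constructor <;> decide) m

section Affine

variable (R : Type*)

/-- The isometry `(x, y, z) ↦ (y, x, z)` in the coordinates `(x + y, y + z, z + x)`. -/
def affA : Equiv.Perm (R × R × R) where
  toFun v := (v.1, v.2.2, v.2.1)
  invFun v := (v.1, v.2.2, v.2.1)
  left_inv _ := rfl
  right_inv _ := rfl

@[simp] theorem affA_apply (v : R × R × R) : affA R v = (v.1, v.2.2, v.2.1) := rfl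

variable [CommRing R]

/-- The isometry `(x, y, z) ↦ (1 - x, z, y)` in the coordinates `(x + y, y + z, z + x)`. -/
def affB : Equiv.Perm (R × R × R) where
  toFun v := (1 + v.2.1 - v.1, v.2.1, 1 + v.2.1 - v.2.2)
  invFun v := (1 + v.2.1 - v.1, v.2.1, 1 + v.2.1 - v.2.2)
  left_inv v := by ext <;> simp
  right_inv v := by ext <;> simp

/-- The isometry `(x, y, z) ↦ (-y, -x, z)` in the coordinates `(x + y, y + z, z + x)`. -/
def affC : Equiv.Perm (R × R × R) where
  toFun v := (-v.1, v.2.1 - v.1, v.2.2 - v.1)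
  invFun v := (-v.1, v.2.1 - v.1, v.2.2 - v.1)
  left_inv v := by ext <;> simp
  right_inv v := by ext <;> simp

@[simp] theorem affB_apply (v : R × R × R) :
    affB R v = (1 + v.2.1 - v.1, v.2.1, 1 + v.2.1 - v.2.2) := rfl

@[simp] theorem affC_apply (v : R × R × R) :
    affC R v = (-v.1, v.2.1 - v.1, v.2.2 - v.1) := rfl

theorem affA_affB_sq (v : R × R × R) :
    ((affA R * affB R) ^ 2) v = (1 + v.1 - v.2.2, 2 - v.2.2, 1 + v.2.1 - v.2.2) := by
  ext <;> simp [sq] <;> ring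

theorem affB_affA_sq (v : R × R × R) :
    ((affB R * affA R) ^ 2) v = (1 + v.1 - v.2.1, 1 + v.2.2 - v.2.1, 2 - v.2.1) := by
  ext <;> simp [sq] <;> ring

theorem affC_affB_sq (v : R × R × R) :
    ((affC R * affB R) ^ 2) v = (-1 - v.2.1, v.1 - v.2.1 - 2, v.2.2 - v.2.1 - 1) := by
  ext <;> simp [sq] <;> ring

theorem affB_affC_sq (v : R × R × R) :
    ((affB R * affC R) ^ 2) v = (1 + v.2.1 - v.1, -v.1 - 1, v.2.2 - v.1) := by
  ext <;> simp [sq] <;> ring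

theorem perm_pow_three_apply {X : Type*} (f : Equiv.Perm X) (x : X) :
    (f ^ 3) x = f (f (f x)) := rfl

theorem aff_abcb : ((affA R * affB R) ^ 2 * (affC R * affB R) ^ 2) ^ 3 =
    Equiv.addRight (0, 8, 0) := by
  have h (v : R × R × R) : ((affA R * affB R) ^ 2 * (affC R * affB R) ^ 2) v =
      (1 - v.2.2, 3 - v.2.2 + v.2.1, v.1 - v.2.2) := by
    ext <;> simp [affA_affB_sq, affC_affB_sq] <;> ring
  ext v <;> simp only [perm_pow_three_apply, h, Equiv.coe_addRight, Prod.fst_add, Prod.snd_add] <;>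
    ring

theorem aff_bcba : ((affB R * affC R) ^ 2 * (affB R * affA R) ^ 2) ^ 3 =
    Equiv.addRight (0, -8, 0) := by
  have h (v : R × R × R) : ((affB R * affC R) ^ 2 * (affB R * affA R) ^ 2) v =
      (1 + v.2.2 - v.1, v.2.1 - v.1 - 2, 1 - v.1) := by
    ext <;> simp [affB_affA_sq, affB_affC_sq] <;> ring
  ext v <;> simp only [perm_pow_three_apply, h, Equiv.coe_addRight, Prod.fst_add, Prod.snd_add] <;>
    ring

theorem aff_babc : ((affB R * affA R) ^ 2 * (affB R * affC R) ^ 2) ^ 3 =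
    Equiv.addRight (8, 8, 8) := by
  have h (v : R × R × R) : ((affB R * affA R) ^ 2 * (affB R * affC R) ^ 2) v =
      (3 + v.2.1, 2 + v.2.2, 3 + v.1) := by
    ext <;> simp [affB_affA_sq, affB_affC_sq] <;> ring
  ext v <;> simp only [perm_pow_three_apply, h, Equiv.coe_addRight, Prod.fst_add, Prod.snd_add] <;>
    ring

variable {R} in
theorem relations_aff {m : ℕ} (hm : (m : R) * 8 = 0) :
    Relations m (affA R) (affB R) (affC R) where
  aa := by ext v <;> simp [sq]
  bb := by ext v <;> simp [sq]
  cc := by ext v <;> simp [sq]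
  ab := by
    rw [show 6 = 2 * 3 from rfl, pow_mul]
    ext v <;> simp only [perm_pow_three_apply, affA_affB_sq, Equiv.Perm.one_apply] <;> ring
  bc := by
    rw [show 6 = 2 * 3 from rfl, pow_mul]
    ext v <;> simp only [perm_pow_three_apply, affB_affC_sq, Equiv.Perm.one_apply] <;> ring
  ac := by ext v <;> simp [sq]
  cbab := by
    ext v <;> simp only [perm_pow_three_apply, Equiv.Perm.mul_apply, affA_apply, affB_apply,
      affC_apply, Equiv.Perm.one_apply] <;> ring
  abcb := by
    rw [pow_mul, aff_abcb, Equiv.nsmul_addRight, ← Equiv.addRight_zero]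
    congr 1
    simp [hm]
  bcba := by
    rw [pow_mul, aff_bcba, Equiv.nsmul_addRight, ← Equiv.addRight_zero]
    congr 1
    simp [hm]
  babc := by
    rw [pow_mul, aff_babc, Equiv.nsmul_addRight, ← Equiv.addRight_zero]
    congr 1
    simp [hm]

end Affine

section Structure

theorem eq_mul_of_sq_of_mul_mul {G : Type*} [Group G] {x y z : G} (hz : z * z = 1)
    (h : x * y * z = 1) : z = x * y :=
  (mul_right_cancel (h.trans hz.symm)).symm

variable {G : Type*} [Group G]

/-- A rotation of order three. -/
def rot (a b : G) : G := (a * b) ^ 2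

/-- Half-turns about three orthogonal axes through a point. -/
def turnZ (a c : G) : G := a * c
def turnY (a b c : G) : G := rot a b * turnZ a c * (rot a b)⁻¹
def turnX (a b c : G) : G := (rot a b)⁻¹ * turnZ a c * rot a b

/-- Products of parallel half-turns about two different points: translations. -/
def transZ (a b c : G) : G := turnZ a c * (b * turnY a b c * b)
def transY (a b c : G) : G := turnY a b c * (b * turnZ a c * b)
def transX (a b c : G) : G := turnX a b c * (b * turnX a b c * b)

theorem rot_conj_turnZ (a b c : G) : rot a b * turnZ a c * (rot a b)⁻¹ = turnY a b c := rfl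

theorem rot_conj_turnX (a b c : G) : rot a b * turnX a b c * (rot a b)⁻¹ = turnZ a c := by
  simp only [turnX]; group

namespace Relations

variable {m : ℕ} {a b c : G}

theorem a_mul_a (h : Relations m a b c) : a * a = 1 := by rw [← sq, h.aa]
theorem b_mul_b (h : Relations m a b c) : b * b = 1 := by rw [← sq, h.bb]
theorem c_mul_c (h : Relations m a b c) : c * c = 1 := by rw [← sq, h.cc]
theorem a_inv (h : Relations m a b c) : a⁻¹ = a := inv_eq_of_mul_eq_one_left h.a_mul_a
theorem b_inv (h : Relations m a b c) : b⁻¹ = b := inv_eq_of_mul_eq_one_left h.b_mul_b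
theorem c_inv (h : Relations m a b c) : c⁻¹ = c := inv_eq_of_mul_eq_one_left h.c_mul_c
theorem a_mul_c (h : Relations m a b c) : a * c = c * a := by
  have := inv_eq_of_mul_eq_one_left ((sq (a * c)).symm.trans h.ac)
  rw [← this, mul_inv_rev, h.a_inv, h.c_inv]

theorem a_mul_a_mul (h : Relations m a b c)
    (x : G) : a * (a * x) = x := by rw [← mul_assoc, h.a_mul_a, one_mul]
theorem b_mul_b_mul (h : Relations m a b c)
    (x : G) : b * (b * x) = x := by rw [← mul_assoc, h.b_mul_b, one_mul]
theorem c_mul_a_mul (h : Relations m a b c) (x : G) : c * (a * x) = a * (c * x) := by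
  rw [← mul_assoc, ← h.a_mul_c, mul_assoc]

theorem rot_inv (h : Relations m a b c) : (rot a b)⁻¹ = (b * a) ^ 2 := by
  rw [rot, ← inv_pow, mul_inv_rev, h.a_inv, h.b_inv]

theorem rot_pow_three (h : Relations m a b c) : rot a b ^ 3 = 1 := by rw [rot, ← pow_mul, h.ab]

theorem rot_mul_rot (h : Relations m a b c) : rot a b * rot a b = (rot a b)⁻¹ := by
  rw [eq_inv_iff_mul_eq_one, ← h.rot_pow_three, pow_three']

theorem a_mul_rot_mul_a (h : Relations m a b c) : a * rot a b * a = (rot a b)⁻¹ := by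
  simp only [h.rot_inv]
  simp only [rot, sq, mul_assoc, h.a_mul_a_mul]

theorem b_mul_rot_mul_b (h : Relations m a b c) : b * rot a b * b = (rot a b)⁻¹ := by
  simp only [h.rot_inv]
  simp only [rot, sq, mul_assoc, h.b_mul_b, mul_one]

theorem turnZ_mul_turnZ (h : Relations m a b c) :
    turnZ a c * turnZ a c = 1 := by rw [turnZ, ← sq, h.ac]

theorem turnY_mul_turnY (h : Relations m a b c) : turnY a b c * turnY a b c = 1 := by
  simp [turnY, mul_assoc, ← mul_assoc (turnZ a c), h.turnZ_mul_turnZ]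

theorem turnX_mul_turnX (h : Relations m a b c) : turnX a b c * turnX a b c = 1 := by
  simp [turnX, mul_assoc, ← mul_assoc (turnZ a c), h.turnZ_mul_turnZ]

theorem turnX_eq (h : Relations m a b c) : turnX a b c = turnZ a c * turnY a b c := by
  refine eq_mul_of_sq_of_mul_mul h.turnX_mul_turnX ?_
  have h3 : (turnZ a c * rot a b) ^ 3 = 1 := by
    rw [show turnZ a c * rot a b = c * b * a * b by
      simp only [turnZ, rot, sq, mul_assoc, h.c_mul_a_mul, h.a_mul_a_mul], h.cbab]
  rw [← h3, pow_three']
  simp only [turnY, turnX, mul_assoc]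
  rw [← mul_assoc (rot a b)⁻¹, ← mul_inv_rev, h.rot_mul_rot, inv_inv]

theorem turnX_eq' (h : Relations m a b c) : turnX a b c = turnY a b c * turnZ a c := by
  rw [← inv_eq_of_mul_eq_one_left h.turnX_mul_turnX, h.turnX_eq, mul_inv_rev,
    inv_eq_of_mul_eq_one_left h.turnZ_mul_turnZ, inv_eq_of_mul_eq_one_left h.turnY_mul_turnY]

theorem rot_conj_turnY (h : Relations m a b c) :
    rot a b * turnY a b c * (rot a b)⁻¹ = turnX a b c := by
  have : rot a b * turnY a b c * (rot a b)⁻¹ =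
      (rot a b * rot a b) * turnZ a c * (rot a b * rot a b)⁻¹ := by
    simp only [turnY]; group
  rw [this, h.rot_mul_rot, inv_inv, turnX]

theorem b_conj_mul (h : Relations m a b c)
    (x y : G) : b * (x * y) * b = (b * x * b) * (b * y * b) := by
  simp only [mul_assoc, h.b_mul_b_mul]

theorem rot_conj_b_conj (h : Relations m a b c)
    (x : G) : rot a b * (b * (rot a b * x * (rot a b)⁻¹) * b) * (rot a b)⁻¹ =
    b * x * b := by
  have h₁ : rot a b * b = b * (rot a b)⁻¹ := by
    rw [← h.b_mul_rot_mul_b, mul_assoc, h.b_mul_b_mul]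
  have h₂ : rot a b * b * rot a b = b := by rw [h₁]; group
  have h₃ : (rot a b)⁻¹ * (b * (rot a b)⁻¹) = b := by rw [← h₁]; group
  calc _ = (rot a b * b * rot a b) * x * ((rot a b)⁻¹ * (b * (rot a b)⁻¹)) := by group
    _ = _ := by rw [h₂, h₃]

theorem rot_conj_b_turnZ (h : Relations m a b c) :
    rot a b * (b * turnZ a c * b) * (rot a b)⁻¹ = b * turnX a b c * b := by
  rw [← h.rot_conj_b_conj (turnX a b c), rot_conj_turnX]

theorem rot_conj_b_turnY (h : Relations m a b c) :
    rot a b * (b * turnY a b c * b) * (rot a b)⁻¹ = b * turnZ a c * b := by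
  rw [← h.rot_conj_b_conj (turnZ a c), rot_conj_turnZ]

theorem rot_conj_b_turnX (h : Relations m a b c) :
    rot a b * (b * turnX a b c * b) * (rot a b)⁻¹ = b * turnY a b c * b := by
  rw [← h.rot_conj_b_conj (turnY a b c), h.rot_conj_turnY]

theorem rot_inv_mul_rot_inv (h : Relations m a b c) : (rot a b)⁻¹ * (rot a b)⁻¹ = rot a b := by
  rw [← mul_inv_rev, h.rot_mul_rot, inv_inv]

theorem rot_conj_transZ (h : Relations m a b c) :
    rot a b * transZ a b c * (rot a b)⁻¹ = transY a b c := by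
  rw [transZ, transY, ← conj_mul, h.rot_conj_b_turnY, rot_conj_turnZ]

theorem rot_conj_transY (h : Relations m a b c) :
    rot a b * transY a b c * (rot a b)⁻¹ = transX a b c := by
  rw [transY, transX, ← conj_mul, h.rot_conj_b_turnZ, h.rot_conj_turnY]

theorem rot_conj_transX (h : Relations m a b c) :
    rot a b * transX a b c * (rot a b)⁻¹ = transZ a b c := by
  rw [transX, transZ, ← conj_mul, h.rot_conj_b_turnX, rot_conj_turnX]

theorem b_conj_involution (h : Relations m a b c)
    {x : G} (hx : x * x = 1) : (b * x * b) * (b * x * b) = 1 := by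
  rw [← h.b_conj_mul, hx, mul_one, h.b_mul_b]

theorem transZ_inv (h : Relations m a b c) :
    (transZ a b c)⁻¹ = b * turnY a b c * b * turnZ a c := by
  rw [transZ, mul_inv_rev, inv_eq_of_mul_eq_one_left h.turnZ_mul_turnZ,
    inv_eq_of_mul_eq_one_left (h.b_conj_involution h.turnY_mul_turnY)]

theorem transY_inv (h : Relations m a b c) :
    (transY a b c)⁻¹ = b * turnZ a c * b * turnY a b c := by
  rw [transY, mul_inv_rev, inv_eq_of_mul_eq_one_left h.turnY_mul_turnY,
    inv_eq_of_mul_eq_one_left (h.b_conj_involution h.turnZ_mul_turnZ)]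

theorem transX_inv (h : Relations m a b c) :
    (transX a b c)⁻¹ = b * turnX a b c * b * turnX a b c := by
  rw [transX, mul_inv_rev, inv_eq_of_mul_eq_one_left h.turnX_mul_turnX,
    inv_eq_of_mul_eq_one_left (h.b_conj_involution h.turnX_mul_turnX)]

theorem cb_sq (h : Relations m a b c) :
    (c * b) ^ 2 = turnZ a c * rot a b * (b * turnZ a c * b) := by
  simp only [turnZ, rot, sq, mul_assoc, h.b_mul_b_mul, h.a_mul_a_mul, h.c_mul_a_mul]

theorem transZ_commute_transY (h : Relations m a b c) : Commute (transZ a b c) (transY a b c) := by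
  have h₃ : ((c * b) ^ 2) ^ 3 = 1 := by
    have : c * b = (b * c)⁻¹ := by rw [mul_inv_rev, h.b_inv, h.c_inv]
    rw [← pow_mul, this, inv_pow, h.bc, inv_one]
  have e : transZ a b c * (transY a b c)⁻¹ * (transZ a b c)⁻¹ * transY a b c = 1 := by
    calc _ = turnZ a c * (b * turnX a b c * b) * turnY a b c * (b * turnY a b c * b) *
          turnX a b c * (b * turnZ a c * b) := by
          rw [h.transY_inv, h.transZ_inv]
          nth_rw 1 [h.turnX_eq']
          rw [h.b_conj_mul, h.turnX_eq, transZ, transY]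
          simp only [mul_assoc]
      _ = turnZ a c * rot a b * (b * turnZ a c * b) * (turnZ a c * rot a b * (b * turnZ a c * b)) *
          (turnZ a c * ((rot a b)⁻¹ * (rot a b)⁻¹) * (b * turnZ a c * b)) := by
          rw [← h.rot_conj_b_turnX, ← h.rot_conj_b_turnZ, ← h.rot_conj_turnY, ← rot_conj_turnZ]
          generalize b * turnZ a c * b = w
          group
      _ = 1 := by rw [h.rot_inv_mul_rot_inv, ← h.cb_sq, ← pow_three', h₃]
  have e' := mul_eq_one_iff_eq_inv.1 (mul_assoc (transZ a b c * (transY a b c)⁻¹) _ _ ▸ e)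
  have : Commute (transZ a b c) (transY a b c)⁻¹ := by
    rw [Commute, SemiconjBy, e']
    group
  exact Commute.inv_right_iff.1 this

theorem transY_commute_transX (h : Relations m a b c) : Commute (transY a b c) (transX a b c) := by
  rw [← h.rot_conj_transZ, ← h.rot_conj_transY]
  simpa [MulAut.conj_apply, h.rot_conj_transZ] using
    h.transZ_commute_transY.map (MulAut.conj (rot a b)).toMonoidHom

theorem transX_commute_transZ (h : Relations m a b c) : Commute (transX a b c) (transZ a b c) := by
  have := h.transY_commute_transX.map (MulAut.conj (rot a b)).toMonoidHom
  simpa [MulAut.conj_apply, h.rot_conj_transY, h.rot_conj_transX] using this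

end Relations

/-- The translation with coordinates `(i, j, k)`. -/
def trans (a b c : G) (i j k : ℤ) : G := transZ a b c ^ i * transY a b c ^ j * transX a b c ^ k

namespace Relations

variable {m : ℕ} {a b c : G}

theorem trans_mul (h : Relations m a b c)
    (i j k i' j' k' : ℤ) : trans a b c i j k * trans a b c i' j' k' =
    trans a b c (i + i') (j + j') (k + k') := by
  have h₁ := (h.transZ_commute_transY.zpow_zpow i' j).eq
  have h₂ := (h.transX_commute_transZ.zpow_zpow k i').eq
  have h₃ := (h.transY_commute_transX.zpow_zpow j' k).eq
  simp only [trans, zpow_add]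
  calc _ = transZ a b c ^ i * transY a b c ^ j * (transX a b c ^ k * transZ a b c ^ i') *
        transY a b c ^ j' * transX a b c ^ k' := by group
    _ = transZ a b c ^ i * (transY a b c ^ j * transZ a b c ^ i') *
        (transX a b c ^ k * transY a b c ^ j') * transX a b c ^ k' := by rw [h₂]; group
    _ = _ := by rw [← h₁, ← h₃]; group

theorem trans_inv (h : Relations m a b c)
    (i j k : ℤ) : (trans a b c i j k)⁻¹ = trans a b c (-i) (-j) (-k) := by
  rw [inv_eq_iff_mul_eq_one, h.trans_mul]
  simp [trans]

theorem trans_pow (h : Relations m a b c) (i j k : ℤ) (n : ℕ) :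
    trans a b c i j k ^ n = trans a b c (n * i) (n * j) (n * k) := by
  induction n with
  | zero => simp [trans]
  | succ n ih =>
    rw [pow_succ, ih, h.trans_mul]
    congr 1 <;> push_cast <;> ring

theorem trans_zpow (h : Relations m a b c) (i j k n : ℤ) :
    trans a b c i j k ^ n = trans a b c (n * i) (n * j) (n * k) := by
  cases n with
  | ofNat n => simpa using h.trans_pow i j k n
  | negSucc n =>
    rw [zpow_negSucc, h.trans_pow, h.trans_inv, Int.negSucc_eq]
    congr 1 <;> push_cast <;> ring

theorem conj_trans (h : Relations m a b c) {x : G} {p q r : ℤ × ℤ × ℤ}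
    (hp : x * transZ a b c * x⁻¹ = trans a b c p.1 p.2.1 p.2.2)
    (hq : x * transY a b c * x⁻¹ = trans a b c q.1 q.2.1 q.2.2)
    (hr : x * transX a b c * x⁻¹ = trans a b c r.1 r.2.1 r.2.2) (i j k : ℤ) :
    x * trans a b c i j k * x⁻¹ = trans a b c (i * p.1 + j * q.1 + k * r.1)
      (i * p.2.1 + j * q.2.1 + k * r.2.1) (i * p.2.2 + j * q.2.2 + k * r.2.2) := by
  rw [← h.trans_mul, ← h.trans_mul, ← h.trans_zpow, ← h.trans_zpow, ← h.trans_zpow, ← hp, ← hq,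
    ← hr]
  simp only [conj_zpow, conj_mul, trans]

theorem rot_conj_trans (h : Relations m a b c) (i j k : ℤ) :
    rot a b * trans a b c i j k * (rot a b)⁻¹ = trans a b c k i j := by
  rw [h.conj_trans (p := (0, 1, 0)) (q := (0, 0, 1)) (r := (1, 0, 0))]
  · simp
  · simp [h.rot_conj_transZ, trans]
  · simp [h.rot_conj_transY, trans]
  · simp [h.rot_conj_transX, trans]

theorem turnZ_inv (h : Relations m a b c) :
    (turnZ a c)⁻¹ = turnZ a c := inv_eq_of_mul_eq_one_left h.turnZ_mul_turnZ

theorem transX_eq (h : Relations m a b c) :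
    transX a b c = turnZ a c * transY a b c * (turnZ a c)⁻¹ * transZ a b c := by
  rw [transX, h.turnX_eq, h.b_conj_mul, transY, transZ]
  group

theorem turnZ_conj_transZ (h : Relations m a b c) :
    turnZ a c * transZ a b c * (turnZ a c)⁻¹ = (transZ a b c)⁻¹ := by
  rw [h.transZ_inv, h.turnZ_inv, transZ, ← mul_assoc (turnZ a c), h.turnZ_mul_turnZ, one_mul]

theorem turnZ_conj_trans (h : Relations m a b c) (i j k : ℤ) :
    turnZ a c * trans a b c i j k * (turnZ a c)⁻¹ = trans a b c (-i - j - k) k j := by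
  rw [h.conj_trans (p := (-1, 0, 0)) (q := (-1, 0, 1)) (r := (-1, 1, 0))]
  · congr 1 <;> ring
  · simp [h.turnZ_conj_transZ, trans]
  · rw [eq_mul_inv_of_mul_eq h.transX_eq.symm, show transX a b c = trans a b c 0 0 1 by simp [trans],
      show (transZ a b c)⁻¹ = trans a b c (-1) 0 0 by simp [trans], h.trans_mul]
    simp
  · have : turnZ a c * transX a b c * (turnZ a c)⁻¹ = (turnZ a c * turnZ a c) * transY a b c *
        (turnZ a c * turnZ a c)⁻¹ * (turnZ a c * transZ a b c * (turnZ a c)⁻¹) := by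
      rw [h.transX_eq]
      group
    rw [this, h.turnZ_mul_turnZ, h.turnZ_conj_transZ,
      show (transZ a b c)⁻¹ = trans a b c (-1) 0 0 by simp [trans],
      show 1 * transY a b c * 1⁻¹ = trans a b c 0 1 0 by simp [trans], h.trans_mul]
    simp

theorem a_conj_turnZ (h : Relations m a b c) : a * turnZ a c * a⁻¹ = turnZ a c := by
  rw [turnZ, h.a_inv, mul_assoc, mul_assoc, ← h.a_mul_c, h.a_mul_a_mul, h.a_mul_c]

theorem a_conj_turnY (h : Relations m a b c) : a * turnY a b c * a⁻¹ = turnX a b c := by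
  rw [turnY, ← conj_mul, ← conj_mul, ← conj_inv, h.a_conj_turnZ, h.a_inv, h.a_mul_rot_mul_a,
    inv_inv, turnX]

theorem a_conj_turnX (h : Relations m a b c) : a * turnX a b c * a⁻¹ = turnY a b c := by
  rw [turnX, ← conj_mul, ← conj_mul, ← conj_inv, h.a_conj_turnZ, h.a_inv, h.a_mul_rot_mul_a,
    inv_inv, turnY]

theorem a_conj_b_turnZ (h : Relations m a b c) :
    a * (b * turnZ a c * b) * a⁻¹ = b * turnX a b c * b := by
  rw [h.a_inv, turnX, h.rot_inv]
  simp only [turnZ, rot, sq, mul_assoc, h.a_mul_a_mul, h.b_mul_b_mul, h.b_mul_b, mul_one,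
    h.c_mul_a_mul]

theorem a_conj_b_turnX (h : Relations m a b c) :
    a * (b * turnX a b c * b) * a⁻¹ = b * turnZ a c * b := by
  rw [← h.a_conj_b_turnZ, h.a_inv]
  simp only [mul_assoc, h.a_mul_a_mul, h.a_mul_a, mul_one]

theorem a_conj_b_turnY (h : Relations m a b c) :
    a * (b * turnY a b c * b) * a⁻¹ = b * turnY a b c * b := by
  rw [← h.rot_conj_b_turnX, ← conj_mul, ← conj_mul, ← conj_inv, h.a_conj_b_turnX, h.a_inv,
    h.a_mul_rot_mul_a, ← h.rot_conj_b_turnY, h.rot_conj_b_turnX]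
  group

theorem a_conj_trans (h : Relations m a b c)
    (i j k : ℤ) : a * trans a b c i j k * a⁻¹ = trans a b c i k j := by
  rw [h.conj_trans (p := (1, 0, 0)) (q := (0, 0, 1)) (r := (0, 1, 0))]
  · simp
  · rw [transZ, ← conj_mul, h.a_conj_turnZ, h.a_conj_b_turnY]
    simp [trans, transZ]
  · rw [transY, ← conj_mul, h.a_conj_turnY, h.a_conj_b_turnZ]
    simp [trans, transX]
  · rw [transX, ← conj_mul, h.a_conj_turnX, h.a_conj_b_turnX]
    simp [trans, transY]

theorem b_conj_trans (h : Relations m a b c) (i j k : ℤ) :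
    b * trans a b c i j k * b⁻¹ = trans a b c (-j) (-i) (-k) := by
  rw [h.conj_trans (p := (0, -1, 0)) (q := (-1, 0, 0)) (r := (0, 0, -1))]
  · simp
  · simp [trans, h.transY_inv, h.b_inv, transZ, mul_assoc, h.b_mul_b]
  · simp [trans, h.transZ_inv, h.b_inv, transY, mul_assoc, h.b_mul_b]
  · rw [show trans a b c 0 0 (-1) = (transX a b c)⁻¹ by simp [trans], h.transX_inv, transX,
      h.b_inv]
    simp only [mul_assoc, h.b_mul_b, mul_one]

theorem turnY_conj_trans (h : Relations m a b c) (i j k : ℤ) :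
    turnY a b c * trans a b c i j k * (turnY a b c)⁻¹ = trans a b c k (-i - j - k) i := by
  have e : (rot a b)⁻¹ * trans a b c i j k * rot a b = trans a b c j k i := by
    rw [← h.rot_conj_trans j k i]
    group
  calc _ = rot a b * (turnZ a c * ((rot a b)⁻¹ * trans a b c i j k * rot a b) * (turnZ a c)⁻¹) *
        (rot a b)⁻¹ := by rw [turnY]; group
    _ = _ := by
      rw [e, h.turnZ_conj_trans, h.rot_conj_trans]
      congr 1
      ring

theorem rot_mul_cb_sq_pow_three (h : Relations m a b c) :
    ((a * b) ^ 2 * (c * b) ^ 2) ^ 3 = trans a b c (-1) 3 (-1) := by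
  have e₁ : (b * turnY a b c * b) = (rot a b)⁻¹ * (b * turnZ a c * b) * rot a b := by
    rw [← h.rot_conj_b_turnY]
    group
  calc _ = turnY a b c * (b * turnY a b c * b * turnZ a c) *
        (b * turnX a b c * b * turnX a b c) * (b * turnZ a c * b) := by
        rw [h.cb_sq, ← rot, e₁, ← h.rot_conj_b_turnZ, turnX, turnY, pow_three']
        generalize b * turnZ a c * b = w
        have hu := h.rot_inv_mul_rot_inv
        calc _ = rot a b * turnZ a c * rot a b * w * rot a b * turnZ a c * rot a b * w *
              rot a b * turnZ a c * rot a b * w := by simp only [mul_assoc]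
          _ = rot a b * turnZ a c * ((rot a b)⁻¹ * (rot a b)⁻¹) * w * rot a b * turnZ a c *
              rot a b * w * ((rot a b)⁻¹ * (rot a b)⁻¹) * turnZ a c * rot a b * w := by rw [hu]
          _ = _ := by group
    _ = turnY a b c * ((transZ a b c)⁻¹ * (transX a b c)⁻¹) * (turnY a b c)⁻¹ *
        transY a b c := by
        rw [← h.transZ_inv, ← h.transX_inv, transY]
        group
    _ = _ := by
        rw [show (transZ a b c)⁻¹ * (transX a b c)⁻¹ = trans a b c (-1) 0 (-1) by simp [trans],
          show transY a b c = trans a b c 0 1 0 by simp [trans], h.turnY_conj_trans, h.trans_mul]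
        norm_num

theorem trans_relation (h : Relations m a b c) : trans a b c (-m) (3 * m) (-m) = 1 := by
  have := h.abcb
  rw [pow_mul, h.rot_mul_cb_sq_pow_three, h.trans_pow] at this
  rw [← this]
  congr 1 <;> ring

theorem trans_diagonal (h : Relations m a b c) : trans a b c m m m = 1 := by
  have h₁ := h.rot_conj_trans (-m) (3 * m) (-m)
  have h₂ := h.rot_conj_trans (-m) (-m) (3 * m)
  rw [h.trans_relation, mul_one, mul_inv_cancel] at h₁
  rw [← h₁, mul_one, mul_inv_cancel] at h₂
  have h₃ := h.trans_relation
  have e : trans a b c (-m) (-m) (3 * m) * trans a b c (3 * m) (-m) (-m) *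
      trans a b c (-m) (3 * m) (-m) = 1 := by rw [← h₁, ← h₂, h₃, one_mul, one_mul]
  rw [h.trans_mul, h.trans_mul] at e
  rw [← e]
  congr 1 <;> ring

theorem trans_four_mul_middle (h : Relations m a b c) : trans a b c 0 (4 * m) 0 = 1 := by
  have e : trans a b c (-m) (3 * m) (-m) * trans a b c m m m = 1 := by
    rw [h.trans_relation, h.trans_diagonal, one_mul]
  rw [h.trans_mul] at e
  rw [← e]
  congr 1 <;> ring

theorem trans_four_mul_left (h : Relations m a b c) : trans a b c (4 * m) 0 0 = 1 := by
  rw [← h.rot_conj_trans 0 0, ← h.rot_conj_trans 0 (4 * m), h.trans_four_mul_middle]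
  group

end Relations
end Structure

section Generation

variable {G : Type*} [Group G]

theorem exists_pow_of_mem_closure_singleton {x y : G} {N : ℕ} [NeZero N] (hy : y ^ N = 1)
    (hx : x ∈ Subgroup.closure {y}) : ∃ n : Fin N, x = y ^ n.val := by
  obtain ⟨k, rfl⟩ := Subgroup.mem_closure_singleton.1 hx
  have hN : (N : ℤ) ≠ 0 := by exact_mod_cast NeZero.ne N
  have hk : (k % N).toNat < N := by
    have := Int.emod_lt_of_pos k (show (0 : ℤ) < N by have := NeZero.pos N; omega)
    have := Int.emod_nonneg k hN
    omega
  refine ⟨⟨_, hk⟩, ?_⟩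
  rw [← zpow_natCast, Int.toNat_of_nonneg (Int.emod_nonneg k hN)]
  nth_rw 1 [← Int.emod_add_mul_ediv k N]
  rw [zpow_add, zpow_mul, zpow_natCast, hy, one_zpow, mul_one]

theorem exists_zpow_of_mem_closure_pair {x y z : G} (hx : x * x = 1) (hy : y * y = 1)
    (hz : z ∈ Subgroup.closure {x, y}) :
    ∃ n : ℤ, z = (x * y) ^ n ∨ z = (x * y) ^ n * x := by
  have hx' := inv_eq_of_mul_eq_one_left hx
  have hy' := inv_eq_of_mul_eq_one_left hy
  have conj (n : ℤ) : x * (x * y) ^ n = (x * y) ^ (-n) * x := by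
    rw [← mul_inv_eq_iff_eq_mul, ← conj_zpow, zpow_neg, ← inv_zpow, mul_inv_rev, hx', hy',
      ← mul_assoc, hx, one_mul]
  have hxm {z : G} (hz : ∃ n : ℤ, z = (x * y) ^ n ∨ z = (x * y) ^ n * x) :
      ∃ n : ℤ, x * z = (x * y) ^ n ∨ x * z = (x * y) ^ n * x := by
    obtain ⟨n, rfl | rfl⟩ := hz
    · exact ⟨-n, Or.inr (conj n)⟩
    · exact ⟨-n, Or.inl (by rw [← mul_assoc, conj, mul_assoc, hx, mul_one])⟩
  have hym {z : G} (hz : ∃ n : ℤ, z = (x * y) ^ n ∨ z = (x * y) ^ n * x) :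
      ∃ n : ℤ, y * z = (x * y) ^ n ∨ y * z = (x * y) ^ n * x := by
    have e (w : G) : y * w = (x * y) ^ (-1 : ℤ) * (x * w) := by
      rw [zpow_neg_one, mul_inv_rev, hx', hy', mul_assoc, ← mul_assoc x x, hx, one_mul]
    obtain ⟨n, hn | hn⟩ := hxm hz
    · exact ⟨-1 + n, Or.inl (by rw [e, hn, zpow_add])⟩
    · exact ⟨-1 + n, Or.inr (by rw [e, hn, zpow_add, mul_assoc])⟩
  induction hz using Subgroup.closure_induction_left with
  | one => exact ⟨0, by simp⟩
  | mul_left w hw z _ ih =>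
    obtain rfl | rfl := hw
    exacts [hxm ih, hym ih]
  | inv_mul_cancel w hw z _ ih =>
    obtain rfl | rfl := hw
    · rw [hx']; exact hxm ih
    · rw [hy']; exact hym ih

theorem exists_pow_of_mem_closure_pair {x y z : G} {N : ℕ} [NeZero N] (hx : x * x = 1)
    (hy : y * y = 1) (hN : (x * y) ^ N = 1) (hz : z ∈ Subgroup.closure {x, y}) :
    ∃ (n : Fin N) (e : Fin 2), z = (x * y) ^ n.val * x ^ e.val := by
  obtain ⟨k, hk⟩ := exists_zpow_of_mem_closure_pair hx hy hz
  obtain ⟨n, hn⟩ := exists_pow_of_mem_closure_singleton hN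
    (Subgroup.mem_closure_singleton.2 ⟨k, rfl⟩)
  obtain rfl | rfl := hk
  · exact ⟨n, 0, by simpa using hn⟩
  · exact ⟨n, 1, by simp [hn]⟩

theorem normal_sup_closure {K : Subgroup G} [K.Normal] {S T : Set G}
    (hS : Subgroup.closure S = ⊤) (hSinv : ∀ s ∈ S, s⁻¹ = s)
    (hT : ∀ s ∈ S, ∀ t ∈ T, s * t * s⁻¹ ∈ K ⊔ Subgroup.closure T) :
    (K ⊔ Subgroup.closure T).Normal := by
  rw [← Subgroup.normalizer_eq_top_iff, eq_top_iff, ← hS, Subgroup.closure_le]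
  intro s hs
  have key : K ⊔ Subgroup.closure T ≤
      (K ⊔ Subgroup.closure T).comap (MulAut.conj s).toMonoidHom := by
    refine sup_le (fun x hx => ?_) ((Subgroup.closure_le _).2 fun t ht => hT s hs t ht)
    exact Subgroup.mem_sup_left (Subgroup.Normal.conj_mem ‹_› x hx s)
  refine Subgroup.mem_normalizer_iff.2 fun x => ⟨fun hx => key hx, fun hx => ?_⟩
  have := key hx
  have e : s * (s * x * s⁻¹) * s⁻¹ = x := by
    nth_rw 1 [← hSinv s hs]
    nth_rw 3 [← hSinv s hs]
    group
  simpa [e] using this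

theorem commutator_sup_le {K H : Subgroup G} [K.Normal] (hH : ∀ x ∈ H, ∀ y ∈ H, Commute x y) :
    ⁅K ⊔ H, K ⊔ H⁆ ≤ K := by
  rw [← QuotientGroup.ker_mk' K, ← Subgroup.map_eq_bot_iff, Subgroup.map_commutator,
    Subgroup.map_sup, QuotientGroup.ker_mk', QuotientGroup.map_mk'_self, bot_sup_eq,
    ← Subgroup.map_commutator, Subgroup.commutator_eq_bot_iff_le_centralizer.2]
  · simp
  · exact fun x hx y hy => (hH y hy x hx)

theorem commute_of_mem_closure {T : Set G} (hT : ∀ x ∈ T, ∀ y ∈ T, Commute x y) {x y : G}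
    (hx : x ∈ Subgroup.closure T) (hy : y ∈ Subgroup.closure T) : Commute x y := by
  have : Subgroup.closure T ≤ Subgroup.centralizer (Subgroup.closure T) := by
    rw [Subgroup.centralizer_closure, Subgroup.closure_le]
    exact fun x hx => Subgroup.mem_centralizer_iff.2 fun y hy => hT y hy x hx
  exact (Subgroup.mem_centralizer_iff.1 (this hy)) x hx

end Generation

section NormalForm

variable {G : Type*} [Group G]

/-- The 48 coset representatives of the translations. -/
def form (a b c : G) (x : Fin 2 × Fin 2 × Fin 3 × Fin 2 × Fin 2) : G :=
  (turnZ a c * turnY a b c) ^ x.1.val * turnZ a c ^ x.2.1.val * rot a b ^ x.2.2.1.val *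
    a ^ x.2.2.2.1.val * b ^ x.2.2.2.2.val

theorem map_trans {H : Type*} [Group H] (f : G →* H) (a b c : G) (i j k : ℤ) :
    f (trans a b c i j k) = trans (f a) (f b) (f c) i j k := by
  simp [trans, transX, transY, transZ, turnX, turnY, turnZ, rot]

theorem map_form {H : Type*} [Group H] (f : G →* H) (a b c : G)
    (x : Fin 2 × Fin 2 × Fin 3 × Fin 2 × Fin 2) :
    f (form a b c x) = form (f a) (f b) (f c) x := by
  simp [form, turnY, turnZ, rot]

namespace Relations

variable {m : ℕ} {a b c : G}

/-- The subgroup of translations. -/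
def lattice (h : Relations m a b c) : Subgroup G where
  carrier := {x | ∃ i j k : ℤ, x = trans a b c i j k}
  one_mem' := ⟨0, 0, 0, by simp [trans]⟩
  mul_mem' := by
    rintro _ _ ⟨i, j, k, rfl⟩ ⟨i', j', k', rfl⟩
    exact ⟨_, _, _, h.trans_mul i j k i' j' k'⟩
  inv_mem' := by
    rintro _ ⟨i, j, k, rfl⟩
    exact ⟨_, _, _, h.trans_inv i j k⟩

theorem trans_mem_lattice (h : Relations m a b c) (i j k : ℤ) :
    trans a b c i j k ∈ h.lattice := ⟨i, j, k, rfl⟩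

theorem lattice_eq_sup (h : Relations m a b c) :
    h.lattice = ⊥ ⊔ Subgroup.closure {transZ a b c, transY a b c, transX a b c} := by
  rw [bot_sup_eq]
  refine le_antisymm ?_ ((Subgroup.closure_le _).2 ?_)
  · rintro _ ⟨i, j, k, rfl⟩
    refine mul_mem (mul_mem (zpow_mem ?_ i) (zpow_mem ?_ j)) (zpow_mem ?_ k) <;>
      exact Subgroup.subset_closure (by simp)
  · rintro x (rfl | rfl | rfl)
    · exact ⟨1, 0, 0, by simp [trans]⟩
    · exact ⟨0, 1, 0, by simp [trans]⟩
    · exact ⟨0, 0, 1, by simp [trans]⟩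

/-- The extension of the lattice by the half-turns. -/
def halfTurns (h : Relations m a b c) : Subgroup G :=
  h.lattice ⊔ Subgroup.closure {turnZ a c, turnY a b c}

/-- The extension of the lattice by the rotations of a tetrahedron. -/
def rotations (h : Relations m a b c) : Subgroup G :=
  h.halfTurns ⊔ Subgroup.closure {rot a b}

/-- The extension of the lattice by the symmetries of a tetrahedron. -/
def symmetries (h : Relations m a b c) : Subgroup G :=
  h.rotations ⊔ Subgroup.closure {a}

theorem closure_turnZ (hG : Subgroup.closure {a, b, c} = ⊤) :
    Subgroup.closure {a, b, turnZ a c} = ⊤ := by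
  rw [eq_top_iff, ← hG, Subgroup.closure_le]
  have ha : a ∈ Subgroup.closure {a, b, turnZ a c} := Subgroup.subset_closure (by simp)
  rintro x (rfl | rfl | rfl)
  · exact ha
  · exact Subgroup.subset_closure (by simp)
  · have := mul_mem (inv_mem ha) (Subgroup.subset_closure (k := {a, b, turnZ a x})
      (show turnZ a x ∈ _ by simp))
    rwa [turnZ, inv_mul_cancel_left] at this

theorem inv_eq_self (h : Relations m a b c) : ∀ s ∈ ({a, b, turnZ a c} : Set G), s⁻¹ = s := by
  rintro s (rfl | rfl | rfl)
  exacts [h.a_inv, h.b_inv, h.turnZ_inv]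

theorem lattice_normal (h : Relations m a b c) (hG : Subgroup.closure {a, b, c} = ⊤) :
    h.lattice.Normal := by
  rw [h.lattice_eq_sup]
  refine normal_sup_closure (closure_turnZ hG) h.inv_eq_self fun s hs t ht => ?_
  rw [← h.lattice_eq_sup]
  obtain ⟨i, j, k, rfl⟩ : t ∈ h.lattice := by
    rw [h.lattice_eq_sup, bot_sup_eq]
    exact Subgroup.subset_closure ht
  obtain rfl | rfl | rfl := hs
  · rw [h.a_conj_trans]; exact h.trans_mem_lattice _ _ _
  · rw [h.b_conj_trans]; exact h.trans_mem_lattice _ _ _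
  · rw [h.turnZ_conj_trans]; exact h.trans_mem_lattice _ _ _

theorem turnZ_mem_halfTurns (h : Relations m a b c) : turnZ a c ∈ h.halfTurns :=
  Subgroup.mem_sup_right (Subgroup.subset_closure (by simp))

theorem turnY_mem_halfTurns (h : Relations m a b c) : turnY a b c ∈ h.halfTurns :=
  Subgroup.mem_sup_right (Subgroup.subset_closure (by simp))

theorem turnZ_commute_turnY (h : Relations m a b c) : Commute (turnZ a c) (turnY a b c) :=
  h.turnX_eq.symm.trans h.turnX_eq'

theorem halfTurns_normal (h : Relations m a b c) (hG : Subgroup.closure {a, b, c} = ⊤) :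
    h.halfTurns.Normal := by
  have := h.lattice_normal hG
  have hZ := h.turnZ_mem_halfTurns
  have hY := h.turnY_mem_halfTurns
  refine normal_sup_closure (closure_turnZ hG) h.inv_eq_self fun s hs t ht => ?_
  change _ ∈ h.halfTurns
  obtain rfl | rfl | rfl := hs <;> obtain rfl | rfl := ht
  · rwa [h.a_conj_turnZ]
  · rw [h.a_conj_turnY, h.turnX_eq]; exact mul_mem hZ hY
  · rw [h.b_inv, show s * turnZ a c * s = (turnY a s c)⁻¹ * trans a s c 0 1 0 by
      simp [trans, transY]]
    exact mul_mem (inv_mem hY) (Subgroup.mem_sup_left (h.trans_mem_lattice _ _ _))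
  · rw [h.b_inv, show s * turnY a s c * s = (turnZ a c)⁻¹ * trans a s c 1 0 0 by
      simp [trans, transZ]]
    exact mul_mem (inv_mem hZ) (Subgroup.mem_sup_left (h.trans_mem_lattice _ _ _))
  · exact mul_mem (mul_mem hZ hZ) (inv_mem hZ)
  · exact mul_mem (mul_mem hZ hY) (inv_mem hZ)

theorem rotations_normal (h : Relations m a b c) (hG : Subgroup.closure {a, b, c} = ⊤) :
    h.rotations.Normal := by
  have := h.halfTurns_normal hG
  have hu : rot a b ∈ h.rotations := Subgroup.mem_sup_right (Subgroup.subset_closure (by simp))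
  have hZ : turnZ a c ∈ h.rotations := Subgroup.mem_sup_left h.turnZ_mem_halfTurns
  refine normal_sup_closure (closure_turnZ hG) h.inv_eq_self fun s hs t ht => ?_
  change _ ∈ h.rotations
  obtain rfl := ht
  obtain rfl | rfl | rfl := hs
  · rw [h.a_inv, h.a_mul_rot_mul_a]; exact inv_mem hu
  · rw [h.b_inv, h.b_mul_rot_mul_b]; exact inv_mem hu
  · exact mul_mem (mul_mem hZ hu) (inv_mem hZ)

theorem symmetries_normal (h : Relations m a b c) (hG : Subgroup.closure {a, b, c} = ⊤) :
    h.symmetries.Normal := by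
  have := h.rotations_normal hG
  have ha : a ∈ h.symmetries := Subgroup.mem_sup_right (Subgroup.subset_closure (by simp))
  have hu : rot a b ∈ h.symmetries := Subgroup.mem_sup_left
    (Subgroup.mem_sup_right (Subgroup.subset_closure (by simp)))
  have hZ : turnZ a c ∈ h.symmetries :=
    Subgroup.mem_sup_left (Subgroup.mem_sup_left h.turnZ_mem_halfTurns)
  refine normal_sup_closure (closure_turnZ hG) h.inv_eq_self fun s hs t ht => ?_
  change _ ∈ h.symmetries
  obtain rfl := ht
  obtain rfl | rfl | rfl := hs
  · simpa using ha
  · rw [h.b_inv, show s * t * s = t⁻¹ * rot t s by simp [rot, sq, mul_assoc]]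
    exact mul_mem (inv_mem ha) hu
  · exact mul_mem (mul_mem hZ ha) (inv_mem hZ)

theorem symmetries_sup (h : Relations m a b c) (hG : Subgroup.closure {a, b, c} = ⊤) :
    h.symmetries ⊔ Subgroup.closure {b} = ⊤ := by
  rw [eq_top_iff, ← closure_turnZ hG, Subgroup.closure_le]
  rintro x (rfl | rfl | rfl)
  · exact Subgroup.mem_sup_left (Subgroup.mem_sup_right (Subgroup.subset_closure (by simp)))
  · exact Subgroup.mem_sup_right (Subgroup.subset_closure (by simp))
  · exact Subgroup.mem_sup_left (Subgroup.mem_sup_left (Subgroup.mem_sup_left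
      h.turnZ_mem_halfTurns))

theorem isSolvable (h : Relations m a b c) (hG : Subgroup.closure {a, b, c} = ⊤) :
    Group.IsSolvable G := by
  have := h.lattice_normal hG
  have := h.halfTurns_normal hG
  have := h.rotations_normal hG
  have := h.symmetries_normal hG
  have single (x : G) : ∀ y ∈ Subgroup.closure {x}, ∀ z ∈ Subgroup.closure {x}, Commute y z :=
    fun y hy z hz => commute_of_mem_closure (by simp) hy hz
  refine ⟨5, ?_⟩
  have h₁ : derivedSeries G 1 ≤ h.symmetries := by
    rw [derivedSeries_one, commutator_def, ← h.symmetries_sup hG]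
    exact commutator_sup_le (single b)
  have h₂ : derivedSeries G 2 ≤ h.rotations :=
    (Subgroup.commutator_mono h₁ h₁).trans (commutator_sup_le (single a))
  have h₃ : derivedSeries G 3 ≤ h.halfTurns :=
    (Subgroup.commutator_mono h₂ h₂).trans (commutator_sup_le (single (rot a b)))
  have h₄ : derivedSeries G 4 ≤ h.lattice := by
    refine (Subgroup.commutator_mono h₃ h₃).trans (commutator_sup_le fun x hx y hy =>
      commute_of_mem_closure ?_ hx hy)
    rintro x (rfl | rfl) y (rfl | rfl)
    exacts [Commute.refl _, h.turnZ_commute_turnY, h.turnZ_commute_turnY.symm, Commute.refl _]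
  rw [eq_bot_iff]
  refine (Subgroup.commutator_mono h₄ h₄).trans ?_
  rw [Subgroup.commutator_le]
  rintro _ ⟨i, j, k, rfl⟩ _ ⟨i', j', k', rfl⟩
  rw [Subgroup.mem_bot, commutatorElement_eq_one_iff_mul_comm, h.trans_mul, h.trans_mul,
    add_comm i, add_comm j, add_comm k]

theorem trans_eq_trans (h : Relations m a b c) {i j k i' j' k' : ℤ} (p q r : ℤ)
    (hi : i = i' + m * p + 4 * m * q) (hj : j = j' + m * p + 4 * m * r) (hk : k = k' + m * p) :
    trans a b c i j k = trans a b c i' j' k' := by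
  have e : trans a b c i' j' k' * trans a b c m m m ^ p * trans a b c (4 * m) 0 0 ^ q *
      trans a b c 0 (4 * m) 0 ^ r = trans a b c i j k := by
    rw [h.trans_zpow, h.trans_zpow, h.trans_zpow, h.trans_mul, h.trans_mul, h.trans_mul,
      hi, hj, hk]
    congr 1 <;> ring
  rw [← e, h.trans_diagonal, h.trans_four_mul_left, h.trans_four_mul_middle]
  simp

theorem exists_trans_eq (h : Relations m a b c) (hm : 0 < m) {x : G} (hx : x ∈ h.lattice) :
    ∃ (i j : Fin (4 * m)) (k : Fin m), x = trans a b c i.val j.val k.val := by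
  obtain ⟨i, j, k, rfl⟩ := hx
  have lift (n : ℕ) (hn : 0 < n) (z : ℤ) : ∃ (t : Fin n) (p : ℤ), z = t.val + n * p := by
    have h₁ := Int.emod_nonneg z (show (n : ℤ) ≠ 0 by omega)
    have h₂ := Int.emod_lt_of_pos z (show (0 : ℤ) < n by omega)
    refine ⟨⟨(z % n).toNat, by omega⟩, z / n, ?_⟩
    rw [Int.toNat_of_nonneg h₁, Int.emod_add_mul_ediv]
  obtain ⟨k', p, hk⟩ := lift m hm k
  obtain ⟨i', q, hi⟩ := lift (4 * m) (by omega) (i - m * p)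
  obtain ⟨j', r, hj⟩ := lift (4 * m) (by omega) (j - m * p)
  refine ⟨i', j', k', h.trans_eq_trans p q r ?_ ?_ hk⟩ <;> push_cast at hi hj <;> linarith

theorem exists_eq_trans_mul_form (h : Relations m a b c) (hm : 0 < m)
    (hG : Subgroup.closure {a, b, c} = ⊤) (x : G) :
    ∃ (i j : Fin (4 * m)) (k : Fin m) (w : Fin 2 × Fin 2 × Fin 3 × Fin 2 × Fin 2),
      x = trans a b c i.val j.val k.val * form a b c w := by
  have := h.lattice_normal hG
  have := h.halfTurns_normal hG
  have := h.rotations_normal hG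
  have := h.symmetries_normal hG
  obtain ⟨x₁, hx₁, xb, hxb, rfl⟩ := Subgroup.mem_sup_of_normal_left.1
    (h.symmetries_sup hG ▸ Subgroup.mem_top x)
  obtain ⟨x₂, hx₂, xa, hxa, rfl⟩ := Subgroup.mem_sup_of_normal_left.1 hx₁
  obtain ⟨x₃, hx₃, xu, hxu, rfl⟩ := Subgroup.mem_sup_of_normal_left.1 hx₂
  obtain ⟨x₄, hx₄, xt, hxt, rfl⟩ := Subgroup.mem_sup_of_normal_left.1 hx₃
  obtain ⟨i, j, k, rfl⟩ := h.exists_trans_eq hm hx₄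
  obtain ⟨t, rfl⟩ := exists_pow_of_mem_closure_singleton h.bb hxb
  obtain ⟨s, rfl⟩ := exists_pow_of_mem_closure_singleton h.aa hxa
  obtain ⟨l, rfl⟩ := exists_pow_of_mem_closure_singleton h.rot_pow_three hxu
  obtain ⟨n, e, rfl⟩ := exists_pow_of_mem_closure_pair (N := 2) h.turnZ_mul_turnZ
    h.turnY_mul_turnY (by rw [← h.turnX_eq, sq, h.turnX_mul_turnX]) hxt
  exact ⟨i, j, k, (n, e, l, s, t), by simp only [form, mul_assoc]⟩

end Relations

end NormalForm

section Order

open Equiv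

set_option maxRecDepth 100000 in
theorem form_axes_injective : Function.Injective (form (G := Perm (Fin 6))
    (swap 0 1 * swap 3 4) (swap 0 3 * swap 1 2 * swap 4 5) (swap 0 4 * swap 1 3)) := by
  decide +kernel

set_option maxRecDepth 100000 in
theorem trans_axes (i j k : ℤ) : trans (G := Perm (Fin 6))
    (swap 0 1 * swap 3 4) (swap 0 3 * swap 1 2 * swap 4 5) (swap 0 4 * swap 1 3) i j k = 1 := by
  have hZ : transZ (G := Perm (Fin 6)) (swap 0 1 * swap 3 4) (swap 0 3 * swap 1 2 * swap 4 5)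
    (swap 0 4 * swap 1 3) = 1 := by decide +kernel
  have hY : transY (G := Perm (Fin 6)) (swap 0 1 * swap 3 4) (swap 0 3 * swap 1 2 * swap 4 5)
    (swap 0 4 * swap 1 3) = 1 := by decide +kernel
  have hX : transX (G := Perm (Fin 6)) (swap 0 1 * swap 3 4) (swap 0 3 * swap 1 2 * swap 4 5)
    (swap 0 4 * swap 1 3) = 1 := by decide +kernel
  simp only [trans, hZ, hY, hX, one_zpow, mul_one]

section

variable (R : Type*) [CommRing R]

theorem aff_transZ : transZ (affA R) (affB R) (affC R) = Equiv.addRight (-4, -2, -2) := by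
  rw [transZ, turnY, turnZ, (relations_aff (m := 0) (by simp)).rot_inv, rot]
  ext v <;> simp [affA_affB_sq, affB_affA_sq] <;> ring_nf

theorem aff_transY : transY (affA R) (affB R) (affC R) = Equiv.addRight (-2, 2, 0) := by
  rw [transY, turnY, turnZ, (relations_aff (m := 0) (by simp)).rot_inv, rot]
  ext v <;> simp [affA_affB_sq, affB_affA_sq] <;> ring_nf

theorem aff_transX : transX (affA R) (affB R) (affC R) = Equiv.addRight (-2, 0, 2) := by
  rw [transX, turnX, turnZ, (relations_aff (m := 0) (by simp)).rot_inv, rot]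
  ext v <;> simp [affA_affB_sq, affB_affA_sq] <;> ring_nf

theorem aff_trans_apply_zero (i j k : ℤ) :
    trans (affA R) (affB R) (affC R) i j k 0 =
      (((-(2 * (2 * i + j + k)) : ℤ) : R), ((2 * (j - i) : ℤ) : R), ((2 * (k - i) : ℤ) : R)) := by
  rw [trans, aff_transZ, aff_transY, aff_transX, Equiv.zsmul_addRight,
    Equiv.zsmul_addRight, Equiv.zsmul_addRight]
  ext <;> simp <;> ring

end

theorem trans_g_injective {m : ℕ} {i j i' j' : Fin (4 * m)} {k k' : Fin m}
    (e : trans (g m 0) (g m 1) (g m 2) i.val j.val k.val =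
      trans (g m 0) (g m 1) (g m 2) i'.val j'.val k'.val) : i = i' ∧ j = j' ∧ k = k' := by
  have hm : (m : ZMod (8 * m)) * 8 = 0 := by
    have := ZMod.natCast_self (8 * m)
    push_cast at this
    exact (mul_comm _ _).trans this
  have e' := congrArg (fun x => (relations_aff hm).hom x 0) e
  simp only [map_trans, Relations.hom_g0, Relations.hom_g1, Relations.hom_g2,
    aff_trans_apply_zero, Prod.mk.injEq, ZMod.intCast_eq_intCast_iff_dvd_sub] at e'
  obtain ⟨⟨p, hp⟩, ⟨q, hq⟩, ⟨r, hr⟩⟩ := e'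
  push_cast at hp hq hr
  have small {n : ℕ} {s t : Fin n} {z : ℤ} (hz : (s.val : ℤ) - t.val = n * z) : s = t := by
    have h₁ := s.isLt
    have h₂ := t.isLt
    have : z = 0 := by
      by_contra hz0
      obtain h | h := lt_or_gt_of_ne hz0 <;> nlinarith
    subst this
    omega
  have hi : (i'.val : ℤ) - i.val = -(m * (p + q + r)) := by linarith
  have hk : (k'.val : ℤ) - k.val = m * (3 * r - p - q) := by linarith
  have hkk := small hk
  rw [hkk, sub_self, zero_eq_mul] at hk
  have hm0 : (m : ℤ) ≠ 0 := by have := k.isLt; omega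
  have hr' : p + q = 3 * r := by have := hk.resolve_left hm0; linarith
  refine ⟨(small (z := -r) ?_).symm, (small (z := q - r) ?_).symm, hkk.symm⟩
  · rw [hi, hr']; push_cast; ring
  · have : p = 3 * r - q := by linarith
    subst this
    push_cast
    linarith

theorem bijective_trans_mul_form {m : ℕ} (hm : 0 < m) : Function.Bijective
    (fun x : (Fin (4 * m) × Fin (4 * m) × Fin m) × (Fin 2 × Fin 2 × Fin 3 × Fin 2 × Fin 2) =>
      trans (g m 0) (g m 1) (g m 2) x.1.1.val x.1.2.1.val x.1.2.2.val *
        form (g m 0) (g m 1) (g m 2) x.2) := by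
  constructor
  · rintro ⟨⟨i, j, k⟩, w⟩ ⟨⟨i', j', k'⟩, w'⟩ e
    dsimp only at e
    have e' := congrArg (relations_axes m).hom e
    simp only [map_mul, map_trans, map_form, Relations.hom_g0, Relations.hom_g1,
      Relations.hom_g2] at e'
    rw [trans_axes, trans_axes, one_mul, one_mul] at e'
    obtain rfl := form_axes_injective e'
    obtain ⟨rfl, rfl, rfl⟩ := trans_g_injective (mul_right_cancel e)
    rfl
  · intro x
    obtain ⟨i, j, k, w, rfl⟩ := (relations_g m).exists_eq_trans_mul_form hm (closure_g m) x
    exact ⟨⟨⟨i, j, k⟩, w⟩, rfl⟩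

theorem card_presentedGroup {m : ℕ} (hm : 0 < m) :
    Nat.card (PresentedGroup (rels m)) = 768 * m ^ 3 := by
  rw [← Nat.card_congr (Equiv.ofBijective _ (bijective_trans_mul_form hm))]
  simp only [Nat.card_eq_fintype_card, Fintype.card_prod, Fintype.card_fin]
  ring

end Order

section Intersection

open Equiv

theorem orderOf_eq_of_map {G H : Type*} [Group G] [Group H] (f : G →* H) {x : G} {n : ℕ}
    (hn : 0 < n) (hx : x ^ n = 1) (hf : ∀ k < n, 0 < k → f x ^ k ≠ 1) : orderOf x = n :=
  (orderOf_eq_iff hn).2 ⟨hx, fun k hk hk0 h => hf k hk hk0 (by rw [← map_pow, h, map_one])⟩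

theorem eq_one_or_eq_of_mem_closure_pair {G H : Type*} [Group G] [Group H] (f : G →* H)
    {x y z w : G} {N M : ℕ} [NeZero N] [NeZero M] (hx : x * x = 1) (hy : y * y = 1)
    (hz : z * z = 1) (hN : (x * y) ^ N = 1) (hM : (x * z) ^ M = 1)
    (hf : ∀ (i : Fin N) (j : Fin M) (s t : Fin 2),
      (f x * f y) ^ i.val * f x ^ s.val = (f x * f z) ^ j.val * f x ^ t.val → i = 0)
    (hwy : w ∈ Subgroup.closure {x, y}) (hwz : w ∈ Subgroup.closure {x, z}) :
    w = 1 ∨ w = x := by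
  obtain ⟨i, s, rfl⟩ := exists_pow_of_mem_closure_pair hx hy hN hwy
  obtain ⟨j, t, e⟩ := exists_pow_of_mem_closure_pair hx hz hM hwz
  obtain rfl := hf i j s t (by simpa only [map_mul, map_pow] using congrArg f e)
  fin_cases s <;> simp

theorem Relations.ba {G : Type*} [Group G] {m : ℕ} {a b c : G} (h : Relations m a b c) :
    (b * a) ^ 6 = 1 := by
  rw [← h.b_inv, ← h.a_inv, ← mul_inv_rev, inv_pow, h.ab, inv_one]

theorem Relations.cb {G : Type*} [Group G] {m : ℕ} {a b c : G} (h : Relations m a b c) :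
    (c * b) ^ 6 = 1 := by
  rw [← h.b_inv, ← h.c_inv, ← mul_inv_rev, inv_pow, h.bc, inv_one]

set_option maxRecDepth 100000 in
theorem g_inter_one {m : ℕ} {w : PresentedGroup (rels m)}
    (h₀ : w ∈ Subgroup.closure {g m 1, g m 0}) (h₂ : w ∈ Subgroup.closure {g m 1, g m 2}) :
    w = 1 ∨ w = g m 1 := by
  have h := relations_g m
  refine eq_one_or_eq_of_mem_closure_pair (N := 6) (M := 6) (relations_eight m).hom h.b_mul_b
    h.a_mul_a h.c_mul_c h.ba h.bc ?_ h₀ h₂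
  simp only [Relations.hom_g0, Relations.hom_g1, Relations.hom_g2]
  decide +kernel

set_option maxRecDepth 100000 in
theorem g_inter_zero {m : ℕ} {w : PresentedGroup (rels m)}
    (h₁ : w ∈ Subgroup.closure {g m 0, g m 1}) (h₂ : w ∈ Subgroup.closure {g m 0, g m 2}) :
    w = 1 ∨ w = g m 0 := by
  have h := relations_g m
  refine eq_one_or_eq_of_mem_closure_pair (N := 6) (M := 2) (relations_eight m).hom h.a_mul_a
    h.b_mul_b h.c_mul_c h.ab h.ac ?_ h₁ h₂
  simp only [Relations.hom_g0, Relations.hom_g1, Relations.hom_g2]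
  decide +kernel

set_option maxRecDepth 100000 in
theorem g_inter_two {m : ℕ} {w : PresentedGroup (rels m)}
    (h₁ : w ∈ Subgroup.closure {g m 2, g m 1}) (h₀ : w ∈ Subgroup.closure {g m 2, g m 0}) :
    w = 1 ∨ w = g m 2 := by
  have h := relations_g m
  refine eq_one_or_eq_of_mem_closure_pair (N := 6) (M := 2) (relations_eight m).hom h.c_mul_c
    h.b_mul_b h.a_mul_a h.cb (h.a_mul_c ▸ h.ac) ?_ h₁ h₀
  simp only [Relations.hom_g0, Relations.hom_g1, Relations.hom_g2]
  decide +kernel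

theorem g_zero_ne_g_one (m : ℕ) : g m 0 ≠ g m 1 := by
  intro e
  have := congrArg (relations_eight m).hom e
  rw [Relations.hom_g0, Relations.hom_g1] at this
  exact absurd this (by decide)

/-- Every parabolic subgroup is the intersection of the maximal ones that contain it. -/
theorem mem_closure_of_forall_notMem {m : ℕ} {I : Set (Fin 3)} {x : PresentedGroup (rels m)}
    (hx : ∀ i ∉ I, x ∈ Subgroup.closure (![g m 0, g m 1, g m 2] '' {i}ᶜ)) :
    x ∈ Subgroup.closure (![g m 0, g m 1, g m 2] '' I) := by
  set ρ := ![g m 0, g m 1, g m 2]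
  have mem (i : Fin 3) (hi : i ∈ I) : ρ i ∈ Subgroup.closure (ρ '' I) :=
    Subgroup.subset_closure ⟨i, hi, rfl⟩
  have pair (i j k : Fin 3) (hjk : ∀ l, l ≠ i → l = j ∨ l = k) (hi : i ∉ I) :
      x ∈ Subgroup.closure {ρ j, ρ k} := by
    refine Subgroup.closure_mono ?_ (hx i hi)
    rintro _ ⟨l, hl, rfl⟩
    obtain rfl | rfl := hjk l hl <;> simp
  have le (j k : Fin 3) (hj : j ∈ I) (hk : k ∈ I) :
      Subgroup.closure {ρ j, ρ k} ≤ Subgroup.closure (ρ '' I) := by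
    rw [Subgroup.closure_le]
    rintro _ (rfl | rfl)
    exacts [mem j hj, mem k hk]
  have of_or {y : PresentedGroup (rels m)} (hy : y ∈ Subgroup.closure (ρ '' I))
      (h : x = 1 ∨ x = y) : x ∈ Subgroup.closure (ρ '' I) := by
    obtain rfl | rfl := h
    exacts [one_mem _, hy]
  by_cases h0 : 0 ∈ I <;> by_cases h1 : 1 ∈ I <;> by_cases h2 : 2 ∈ I
  · have : Subgroup.closure {g m 0, g m 1, g m 2} ≤ Subgroup.closure (ρ '' I) := by
      rw [Subgroup.closure_le]
      rintro _ (rfl | rfl | rfl)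
      exacts [mem 0 h0, mem 1 h1, mem 2 h2]
    exact this (closure_g m ▸ Subgroup.mem_top x)
  · exact le 0 1 h0 h1 (pair 2 0 1 (by decide) h2)
  · exact le 0 2 h0 h2 (pair 1 0 2 (by decide) h1)
  · exact of_or (mem 0 h0) (g_inter_zero (pair 2 0 1 (by decide) h2) (pair 1 0 2 (by decide) h1))
  · exact le 1 2 h1 h2 (pair 0 1 2 (by decide) h0)
  · exact of_or (mem 1 h1) (g_inter_one (pair 2 1 0 (by decide) h2) (pair 0 1 2 (by decide) h0))
  · exact of_or (mem 2 h2) (g_inter_two (pair 0 2 1 (by decide) h0) (pair 1 2 0 (by decide) h1))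
  · obtain rfl | e₀ := g_inter_zero (pair 2 0 1 (by decide) h2) (pair 1 0 2 (by decide) h1)
    · exact one_mem _
    obtain rfl | e₁ := g_inter_one (pair 2 1 0 (by decide) h2) (pair 0 1 2 (by decide) h0)
    · exact one_mem _
    exact absurd (e₀.symm.trans e₁) (g_zero_ne_g_one m)

theorem interProp_g (m : ℕ) : InterProp ![g m 0, g m 1, g m 2] := by
  intro I J
  refine le_antisymm ?_ (le_inf ?_ ?_)
  · rintro x ⟨hI, hJ⟩
    refine mem_closure_of_forall_notMem fun i hi => ?_
    obtain hi | hi := not_and_or.1 hi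
    · exact Subgroup.closure_mono (Set.image_mono (Set.subset_compl_singleton_iff.2 hi)) hI
    · exact Subgroup.closure_mono (Set.image_mono (Set.subset_compl_singleton_iff.2 hi)) hJ
  · exact Subgroup.closure_mono (Set.image_mono Set.inter_subset_left)
  · exact Subgroup.closure_mono (Set.image_mono Set.inter_subset_right)

end Intersection

/-- Theorem 5.1, family `I_m`: a solvable string C-group of type `{6,6}`
of order `768 m^3`. -/
theorem stmt_14 (m : ℕ) (hm : 0 < m) :
    Nat.card (PresentedGroup (rels m)) = 768 * m ^ 3 ∧
    IsSolvable (PresentedGroup (rels m)) ∧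
    orderOf (g m 0) = 2 ∧ orderOf (g m 1) = 2 ∧ orderOf (g m 2) = 2 ∧
    orderOf (g m 0 * g m 2) = 2 ∧
    orderOf (g m 0 * g m 1) = 6 ∧ orderOf (g m 1 * g m 2) = 6 ∧
    InterProp ![g m 0, g m 1, g m 2] := by
  have h := relations_g m
  refine ⟨card_presentedGroup hm, h.isSolvable (closure_g m),
    orderOf_eq_of_map (relations_eight m).hom two_pos h.aa ?_,
    orderOf_eq_of_map (relations_eight m).hom two_pos h.bb ?_,
    orderOf_eq_of_map (relations_eight m).hom two_pos h.cc ?_,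
    orderOf_eq_of_map (relations_eight m).hom two_pos h.ac ?_,
    orderOf_eq_of_map (relations_eight m).hom (by norm_num) h.ab ?_,
    orderOf_eq_of_map (relations_eight m).hom (by norm_num) h.bc ?_, interProp_g m⟩
  all_goals
    simp only [map_mul, Relations.hom_g0, Relations.hom_g1, Relations.hom_g2]
    decide +kernel

end Stmt14
end
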